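/- arXiv:math/0502483 — 2 statements merged into one kernel-verified Lean document; each statement's English description precedes it below -/
import Mathlib

section
/- Let α ∈ (0, π/4) and set N_S(α) = 2⌊π/(8α)⌋ − ⌊2⌊π/(8α)⌋ − π/(4α)⌋. Then the maximum number of switchings over time optimal trajectories of (Σ)_S starting at the north pole and ending at a point of the closed upper hemisphere equals N_S(α): (a) every time optimal trajectory γ of (Σ)_S on [0,T] with γ(0) = (0,0,1) and γ(T)₃ ≥ 0 has at most N_S(α) switching times; (b) there exists such a time optimal trajectory whose control has exactly N_S(α) switching times. -/
open Real MeasureTheory intervalIntegral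

/-- The drift vector field on the sphere: `F_S(y) = cos α·(−y₂, y₁, 0)`. -/
noncomputable def FS (α : ℝ) (y : Fin 3 → ℝ) : Fin 3 → ℝ :=
  ![Real.cos α * (-(y 1)), Real.cos α * y 0, 0]

/-- The controlled vector field on the sphere: `G_S(y) = sin α·(0, −y₃, y₂)`. -/
noncomputable def GS (α : ℝ) (y : Fin 3 → ℝ) : Fin 3 → ℝ :=
  ![0, Real.sin α * (-(y 2)), Real.sin α * y 1]

/-- An admissible pair for `(Σ)_S` on `[a,b]`: a measurable control `u : [a,b] → [-1,1]`
together with an absolutely continuous curve `γ : [a,b] → S²` solving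
`γ' = F_S(γ) + u·G_S(γ)` a.e. (expressed in integral form, componentwise). -/
structure AdmissiblePairS (α a b : ℝ) (γ : ℝ → Fin 3 → ℝ) (u : ℝ → ℝ) : Prop where
  hab : a ≤ b
  humeas : Measurable u
  hubound : ∀ t ∈ Set.Icc a b, |u t| ≤ 1
  hsph : ∀ t ∈ Set.Icc a b, (γ t 0) ^ 2 + (γ t 1) ^ 2 + (γ t 2) ^ 2 = 1
  hcont : ContinuousOn γ (Set.Icc a b)
  hode : ∀ t ∈ Set.Icc a b, ∀ i,
    γ t i = γ a i + ∫ s in a..t, (FS α (γ s) i + u s * GS α (γ s) i)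

/-- Time optimality for `(Σ)_S`. -/
def TimeOptimalS (α a b : ℝ) (γ : ℝ → Fin 3 → ℝ) (u : ℝ → ℝ) : Prop :=
  AdmissiblePairS α a b γ u ∧
  ∀ a' b' γ' u', AdmissiblePairS α a' b' γ' u' →
    γ' a' = γ a → γ' b' = γ b → b - a ≤ b' - a'

/-- `t` is a switching time of the control `u : [a,b] → [-1,1]`. -/
def IsSwitching (a b : ℝ) (u : ℝ → ℝ) (t : ℝ) : Prop :=
  t ∈ Set.Icc a b ∧ ∀ ε > 0, ¬ ∃ c : ℝ, (c = 1 ∨ c = -1) ∧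
    ∀ᵐ s ∂(volume.restrict (Set.Ioo (t - ε) (t + ε) ∩ Set.Icc a b)), u s = c

/-- `N_S(α) = 2⌊π/(8α)⌋ − ⌊2⌊π/(8α)⌋ − π/(4α)⌋`. -/
noncomputable def NS (α : ℝ) : ℤ :=
  2 * ⌊π / (8 * α)⌋ - ⌊((2 * ⌊π / (8 * α)⌋ : ℤ) : ℝ) - π / (4 * α)⌋



/-! ### Absolutely continuous functions with prescribed a.e. derivative -/

/-- `f` is absolutely continuous on `[a,b]` with a.e. derivative `φ`. -/
def ADer (a b : ℝ) (f φ : ℝ → ℝ) : Prop :=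
  AbsolutelyContinuousOnInterval f a b ∧ ∀ᵐ t, t ∈ Set.Ioo a b → HasDerivAt f (φ t) t

theorem ac_congr {a b : ℝ} {f g : ℝ → ℝ} (hf : AbsolutelyContinuousOnInterval f a b)
    (h : ∀ t ∈ Set.uIcc a b, f t = g t) : AbsolutelyContinuousOnInterval g a b := by
  rw [absolutelyContinuousOnInterval_iff] at hf ⊢
  intro ε hε
  obtain ⟨δ, hδ, H⟩ := hf ε hε
  refine ⟨δ, hδ, fun E hE hl => ?_⟩
  have := H E hE hl
  refine lt_of_eq_of_lt (Finset.sum_congr rfl fun i hi => ?_) this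
  rw [h _ (hE.1 i hi).1, h _ (hE.1 i hi).2]

theorem ac_comp_lip {a b : ℝ} {f g : ℝ → ℝ} (hf : AbsolutelyContinuousOnInterval f a b)
    {K : NNReal} (hg : LipschitzWith K g) : AbsolutelyContinuousOnInterval (fun t => g (f t)) a b := by
  rw [absolutelyContinuousOnInterval_iff] at hf ⊢
  intro ε hε
  obtain ⟨δ, hδ, H⟩ := hf (ε / (K + 1)) (by positivity)
  refine ⟨δ, hδ, fun E hE hl => ?_⟩
  have h1 := H E hE hl
  have h2 : ∑ i ∈ Finset.range E.1, dist (g (f (E.2 i).1)) (g (f (E.2 i).2)) ≤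
      K * ∑ i ∈ Finset.range E.1, dist (f (E.2 i).1) (f (E.2 i).2) := by
    rw [Finset.mul_sum]
    exact Finset.sum_le_sum fun i _ => hg.dist_le_mul _ _
  rw [lt_div_iff₀ (by positivity)] at h1
  have h3 : 0 ≤ ∑ i ∈ Finset.range E.1, dist (f (E.2 i).1) (f (E.2 i).2) :=
    Finset.sum_nonneg fun i _ => dist_nonneg
  nlinarith

namespace ADer

variable {a b : ℝ} {f g φ ψ : ℝ → ℝ}

theorem cont (h : ADer a b f φ) (hab : a ≤ b) : ContinuousOn f (Set.Icc a b) := by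
  have := h.1.continuousOn
  rwa [Set.uIcc_of_le hab] at this

theorem add (hf : ADer a b f φ) (hg : ADer a b g ψ) :
    ADer a b (fun t => f t + g t) (fun t => φ t + ψ t) := by
  refine ⟨hf.1.add hg.1, ?_⟩
  filter_upwards [hf.2, hg.2] with t h1 h2 ht
  exact (h1 ht).add (h2 ht)

theorem sub (hf : ADer a b f φ) (hg : ADer a b g ψ) :
    ADer a b (fun t => f t - g t) (fun t => φ t - ψ t) := by
  refine ⟨hf.1.sub hg.1, ?_⟩
  filter_upwards [hf.2, hg.2] with t h1 h2 ht
  exact (h1 ht).sub (h2 ht)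

theorem neg (hf : ADer a b f φ) :
    ADer a b (fun t => - f t) (fun t => - φ t) := by
  refine ⟨hf.1.neg, ?_⟩
  filter_upwards [hf.2] with t h1 ht
  exact (h1 ht).neg

theorem const_mul (c : ℝ) (hf : ADer a b f φ) :
    ADer a b (fun t => c * f t) (fun t => c * φ t) := by
  refine ⟨hf.1.const_mul c, ?_⟩
  filter_upwards [hf.2] with t h1 ht
  exact (h1 ht).const_mul c

theorem mul (hf : ADer a b f φ) (hg : ADer a b g ψ) :
    ADer a b (fun t => f t * g t) (fun t => φ t * g t + f t * ψ t) := by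
  refine ⟨hf.1.mul hg.1, ?_⟩
  filter_upwards [hf.2, hg.2] with t h1 h2 ht
  exact (h1 ht).mul (h2 ht)

theorem comp {F F' : ℝ → ℝ} (hf : ADer a b f φ) {K : NNReal} (hF : LipschitzWith K F)
    (hF' : ∀ x, HasDerivAt F (F' x) x) :
    ADer a b (fun t => F (f t)) (fun t => F' (f t) * φ t) := by
  refine ⟨ac_comp_lip hf.1 hF, ?_⟩
  filter_upwards [hf.2] with t h1 ht
  exact (hF' (f t)).comp t (h1 ht)

theorem congr_der (hf : ADer a b f φ) (h : ∀ᵐ t, t ∈ Set.Ioo a b → φ t = ψ t) :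
    ADer a b f ψ := by
  refine ⟨hf.1, ?_⟩
  filter_upwards [hf.2, h] with t h1 h2 ht
  rw [← h2 ht]; exact h1 ht

theorem congr_der' (hf : ADer a b f φ) (h : ∀ t ∈ Set.Ioo a b, φ t = ψ t) :
    ADer a b f ψ := hf.congr_der (Filter.Eventually.of_forall h)

theorem congr_fun (hab : a ≤ b) (hf : ADer a b f φ) (h : ∀ t ∈ Set.Icc a b, f t = g t) :
    ADer a b g φ := by
  refine ⟨ac_congr hf.1 (by rwa [Set.uIcc_of_le hab]), ?_⟩
  filter_upwards [hf.2] with t h1 ht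
  refine (h1 ht).congr_of_eventuallyEq ?_
  filter_upwards [Ioo_mem_nhds ht.1 ht.2] with s hs
  exact (h s ⟨hs.1.le, hs.2.le⟩).symm

theorem mono {a' b' : ℝ} (hf : ADer a b f φ) (h1 : a ≤ a') (h2 : a' ≤ b') (h3 : b' ≤ b) :
    ADer a' b' f φ := by
  refine ⟨hf.1.mono ?_, ?_⟩
  · rw [Set.uIcc_of_le h2, Set.uIcc_of_le (h1.trans (h2.trans h3))]
    exact Set.Icc_subset_Icc h1 h3
  · filter_upwards [hf.2] with t h ht
    exact h ⟨h1.trans_lt ht.1, ht.2.trans_le h3⟩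

theorem Ioo_ae_iff {P : ℝ → Prop} : (∀ᵐ t, t ∈ Set.Ioo a b → P t) ↔
    (∀ᵐ t, t ∈ Set.Icc a b → P t) := by
  have e1 : ∀ᵐ t : ℝ, t ≠ a := by simp [ae_iff, measure_singleton]
  have e2 : ∀ᵐ t : ℝ, t ≠ b := by simp [ae_iff, measure_singleton]
  constructor
  · intro h
    filter_upwards [h, e1, e2] with t h h1 h2 ht
    exact h ⟨lt_of_le_of_ne ht.1 (Ne.symm h1), lt_of_le_of_ne ht.2 h2⟩
  · intro h
    filter_upwards [h] with t h ht
    exact h ⟨ht.1.le, ht.2.le⟩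

theorem eq_integral_sub (hab : a ≤ b) (hf : ADer a b f φ) : f b - f a = ∫ s in a..b, φ s := by
  rw [← hf.1.integral_deriv_eq_sub]
  apply intervalIntegral.integral_congr_ae
  have := Ioo_ae_iff.1 hf.2
  filter_upwards [this] with t ht h
  rw [Set.uIoc_of_le hab] at h
  exact (ht ⟨h.1.le, h.2⟩).deriv

theorem intervalIntegrable (hab : a ≤ b) (hf : ADer a b f φ) : IntervalIntegrable φ volume a b := by
  refine hf.1.intervalIntegrable_deriv.congr_ae ?_
  rw [Set.uIoc_of_le hab, Filter.EventuallyEq, ae_restrict_iff' measurableSet_Ioc]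
  have := Ioo_ae_iff.1 hf.2
  filter_upwards [this] with t ht h
  exact (ht ⟨h.1.le, h.2⟩).deriv

theorem to_integral (hf : ADer a b f φ) : ∀ t ∈ Set.Icc a b, f t = f a + ∫ s in a..t, φ s := by
  intro t ht
  have := eq_integral_sub ht.1 (hf.mono le_rfl ht.1 ht.2)
  linarith

theorem of_integral (hab : a ≤ b) (hi : IntervalIntegrable φ volume a b)
    (h : ∀ t ∈ Set.Icc a b, f t = f a + ∫ s in a..t, φ s) : ADer a b f φ := by
  have h1 : ADer a b (fun t => f a + ∫ s in a..t, φ s) φ := by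
    constructor
    · have e1 : AbsolutelyContinuousOnInterval (fun _ : ℝ => f a) a b :=
        ((LipschitzWith.const (f a)).lipschitzOnWith (s := Set.uIcc a b)).absolutelyContinuousOnInterval
      exact e1.add (hi.absolutelyContinuousOnInterval_intervalIntegral (by simp))
    · filter_upwards [hi.ae_hasDerivAt_integral] with t ht h2
      have := ht (by rw [Set.uIcc_of_le hab]; exact ⟨h2.1.le, h2.2.le⟩) a (by simp)
      exact this.const_add _
  exact h1.congr_fun hab fun t ht => (h t ht).symm

theorem eq_const (hf : ADer a b f φ) (h : ∀ᵐ t, t ∈ Set.Ioo a b → φ t = 0) :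
    ∀ t ∈ Set.Icc a b, f t = f a := by
  intro t ht
  have h1 := to_integral (hf.congr_der (ψ := fun _ => 0) h) t ht
  simpa using h1

theorem eq_const' (hf : ADer a b f φ) (h : ∀ t, φ t = 0) :
    ∀ t ∈ Set.Icc a b, f t = f a := hf.eq_const (Filter.Eventually.of_forall fun t _ => h t)

/-- everywhere derivative within when `φ` is continuous on `[a,b]` -/
theorem hasDerivWithinAt (hab : a ≤ b) (hf : ADer a b f φ) (hφ : ContinuousOn φ (Set.Icc a b)) :
    ∀ t ∈ Set.Icc a b, HasDerivWithinAt f (φ t) (Set.Icc a b) t := by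
  intro t ht
  have hi : IntervalIntegrable φ volume a b := by
    apply ContinuousOn.intervalIntegrable; rwa [Set.uIcc_of_le hab]
  have : Fact (t ∈ Set.Icc a b) := ⟨ht⟩
  have h1 : HasDerivWithinAt (fun t => ∫ s in a..t, φ s) (φ t) (Set.Icc a b) t :=
    integral_hasDerivWithinAt_right
      (hi.mono_set (by rw [Set.uIcc_of_le hab, Set.uIcc_of_le ht.1]; exact Set.Icc_subset_Icc le_rfl ht.2))
      (hφ.stronglyMeasurableAtFilter_nhdsWithin measurableSet_Icc t) (hφ t ht)
  exact (h1.const_add (f a)).congr (fun s hs => hf.to_integral s hs) (hf.to_integral t ht)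

theorem of_lip {K : NNReal} (hK : LipschitzWith K f) :
    ADer a b f (deriv f) := by
  refine ⟨(hK.lipschitzOnWith (s := Set.uIcc a b)).absolutelyContinuousOnInterval, ?_⟩
  filter_upwards [hK.ae_differentiableAt_real] with t ht _
  exact ht.hasDerivAt

theorem glue {c : ℝ} (h1 : a ≤ c) (h2 : c ≤ b) (hf : ADer a c f φ) (hg : ADer c b f φ) :
    ADer a b f φ := by
  have i1 := hf.intervalIntegrable h1
  have i2 := hg.intervalIntegrable h2
  refine of_integral (h1.trans h2) (i1.trans i2) fun t ht => ?_
  rcases le_total t c with htc | htc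
  · exact hf.to_integral t ⟨ht.1, htc⟩
  · rw [← integral_add_adjacent_intervals i1, ← add_assoc, ← hf.to_integral c ⟨h1, le_rfl⟩]
    · exact hg.to_integral t ⟨htc, ht.2⟩
    · apply i2.mono_set
      rw [Set.uIcc_of_le htc, Set.uIcc_of_le h2]
      exact Set.Icc_subset_Icc le_rfl ht.2

theorem congr_both (hab : a ≤ b) (hf : ADer a b f φ) (h : ∀ t ∈ Set.Icc a b, f t = g t)
    (h' : ∀ t ∈ Set.Ioo a b, φ t = ψ t) : ADer a b g ψ :=
  (hf.congr_fun hab h).congr_der' h'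

theorem comp_mul {T k : ℝ} (hk : 0 < k) (hT : 0 ≤ T) (hf : ADer 0 T f φ) :
    ADer 0 (T / k) (fun t => f (k * t)) (fun t => k * φ (k * t)) := by
  have hi := hf.intervalIntegrable hT
  have hT' : 0 ≤ T / k := by positivity
  refine of_integral hT' ?_ fun t ht => ?_
  · have := (hi.comp_mul_left (c := k)).const_mul k
    simpa using this
  · have h1 := hf.to_integral (k * t) ⟨mul_nonneg hk.le ht.1, by
      have := ht.2; rw [le_div_iff₀ hk] at this; linarith⟩
    rw [intervalIntegral.integral_const_mul, intervalIntegral.mul_integral_comp_mul_left]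
    simpa using h1

end ADer


/-- `v` solves the (linear) equation `v' = F v + u G v` on `[a,b]`. -/
structure Rot (α a b : ℝ) (u : ℝ → ℝ) (v : ℝ → Fin 3 → ℝ) : Prop where
  h0 : ADer a b (fun t => v t 0) (fun t => -(cos α * v t 1))
  h1 : ADer a b (fun t => v t 1) (fun t => cos α * v t 0 - u t * sin α * v t 2)
  h2 : ADer a b (fun t => v t 2) (fun t => u t * sin α * v t 1)

/-- dot product -/
def dt (v w : Fin 3 → ℝ) : ℝ := v 0 * w 0 + v 1 * w 1 + v 2 * w 2

/-- cross product -/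
def cr (v w : Fin 3 → ℝ) : Fin 3 → ℝ :=
  ![v 1 * w 2 - v 2 * w 1, v 2 * w 0 - v 0 * w 2, v 0 * w 1 - v 1 * w 0]

theorem dt_comm (v w : Fin 3 → ℝ) : dt v w = dt w v := by unfold dt; ring

theorem dt_cr_self (v w : Fin 3 → ℝ) : dt (cr v w) v = 0 := by
  simp [dt, cr]; ring

theorem dt_cr_cr (v w : Fin 3 → ℝ) :
    dt (cr v w) (cr v w) = dt v v * dt w w - dt v w ^ 2 := by
  simp [dt, cr]; ring

namespace Rot

variable {α a b : ℝ} {u : ℝ → ℝ} {v w : ℝ → Fin 3 → ℝ}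

theorem mono {a' b' : ℝ} (h : Rot α a b u v) (h1 : a ≤ a') (h2 : a' ≤ b') (h3 : b' ≤ b) :
    Rot α a' b' u v :=
  ⟨h.h0.mono h1 h2 h3, h.h1.mono h1 h2 h3, h.h2.mono h1 h2 h3⟩

theorem congr_u {u' : ℝ → ℝ} (h : Rot α a b u v) (h' : ∀ᵐ t, t ∈ Set.Ioo a b → u t = u' t) :
    Rot α a b u' v := by
  refine ⟨h.h0, h.h1.congr_der ?_, h.h2.congr_der ?_⟩ <;>
  · filter_upwards [h'] with t ht hh
    rw [ht hh]

theorem cont (h : Rot α a b u v) (hab : a ≤ b) (i : Fin 3) :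
    ContinuousOn (fun t => v t i) (Set.Icc a b) := by
  fin_cases i
  · exact h.h0.cont hab
  · exact h.h1.cont hab
  · exact h.h2.cont hab

theorem add (h : Rot α a b u v) (h' : Rot α a b u w) (hab : a ≤ b) :
    Rot α a b u (fun t => v t + w t) := by
  refine ⟨(h.h0.add h'.h0).congr_both hab ?_ ?_, (h.h1.add h'.h1).congr_both hab ?_ ?_,
    (h.h2.add h'.h2).congr_both hab ?_ ?_⟩ <;> intro t _ <;> simp <;> ring

theorem smul (c : ℝ) (h : Rot α a b u v) (hab : a ≤ b) :
    Rot α a b u (fun t => c • v t) := by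
  refine ⟨(h.h0.const_mul c).congr_both hab ?_ ?_, (h.h1.const_mul c).congr_both hab ?_ ?_,
    (h.h2.const_mul c).congr_both hab ?_ ?_⟩ <;> intro t _ <;> simp <;> ring

theorem dt_ader (h : Rot α a b u v) (h' : Rot α a b u w) (hab : a ≤ b) :
    ADer a b (fun t => dt (v t) (w t)) (fun _ => 0) := by
  refine (((h.h0.mul h'.h0).add (h.h1.mul h'.h1)).add (h.h2.mul h'.h2)).congr_both hab ?_ ?_
  · intro t _; rfl
  · intro t _; ring

theorem dt_const (h : Rot α a b u v) (h' : Rot α a b u w) :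
    ∀ t ∈ Set.Icc a b, dt (v t) (w t) = dt (v a) (w a) := by
  intro t ht
  exact (h.dt_ader h' (ht.1.trans ht.2)).eq_const' (fun _ => rfl) t ht

theorem cross (h : Rot α a b u v) (h' : Rot α a b u w) (hab : a ≤ b) :
    Rot α a b u (fun t => cr (v t) (w t)) := by
  refine ⟨((h.h1.mul h'.h2).sub (h.h2.mul h'.h1)).congr_both hab ?_ ?_,
    ((h.h2.mul h'.h0).sub (h.h0.mul h'.h2)).congr_both hab ?_ ?_,
    ((h.h0.mul h'.h1).sub (h.h1.mul h'.h0)).congr_both hab ?_ ?_⟩ <;> intro t _ <;>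
    simp [cr] <;> ring

/-- Constant control: the component along the rotation axis is constant. -/
theorem axis {e : ℝ} (h : Rot α a b u v) (he : ∀ᵐ t, t ∈ Set.Ioo a b → u t = e) :
    ∀ t ∈ Set.Icc a b, e * sin α * v t 0 + cos α * v t 2 = e * sin α * v a 0 + cos α * v a 2 := by
  intro t ht
  refine ADer.eq_const ((h.h0.const_mul (e * sin α)).add (h.h2.const_mul (cos α))) ?_ t ht
  filter_upwards [he] with s hs h1
  rw [hs h1]; ring

end Rot

namespace AdmissiblePairS

variable {α a b : ℝ} {γ : ℝ → Fin 3 → ℝ} {u : ℝ → ℝ}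

theorem rot (h : AdmissiblePairS α a b γ u) : Rot α a b u γ := by
  have hu : AEStronglyMeasurable u (volume.restrict (Set.uIoc a b)) :=
    h.humeas.aestronglyMeasurable
  have hc : ∀ i, ContinuousOn (fun t => γ t i) (Set.uIcc a b) := by
    intro i
    rw [Set.uIcc_of_le h.hab]
    exact (continuous_apply i).comp_continuousOn h.hcont
  have hi : ∀ i, IntervalIntegrable (fun t => γ t i) volume a b := fun i => (hc i).intervalIntegrable
  have hui : ∀ i, IntervalIntegrable (fun t => u t * γ t i) volume a b := by
    intro i
    rw [intervalIntegrable_iff]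
    refine Integrable.mono (intervalIntegrable_iff.1 (hi i)) (hu.mul (intervalIntegrable_iff.1 (hi i)).1) ?_
    rw [ae_restrict_iff' measurableSet_uIoc]
    refine Filter.Eventually.of_forall fun t ht => ?_
    rw [Set.uIoc_of_le h.hab] at ht
    have := h.hubound t ⟨ht.1.le, ht.2⟩
    rw [norm_mul, Real.norm_eq_abs, Real.norm_eq_abs]
    nlinarith [abs_nonneg (γ t i)]
  refine ⟨ADer.of_integral h.hab ?_ ?_, ADer.of_integral h.hab ?_ ?_, ADer.of_integral h.hab ?_ ?_⟩
  · exact ((hi 1).const_mul (cos α)).neg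
  · intro t ht; rw [h.hode t ht 0]; congr 1; apply intervalIntegral.integral_congr; intro s _
    simp [FS, GS]
  · convert ((hi 0).const_mul (cos α)).sub ((hui 2).const_mul (sin α)) using 2
    ring
  · intro t ht; rw [h.hode t ht 1]; congr 1; apply intervalIntegral.integral_congr; intro s _
    simp [FS, GS]; ring
  · convert ((hui 1).const_mul (sin α)) using 2
    ring
  · intro t ht; rw [h.hode t ht 2]; congr 1; apply intervalIntegral.integral_congr; intro s _
    simp [FS, GS]; ring

theorem dt_one (h : AdmissiblePairS α a b γ u) : ∀ t ∈ Set.Icc a b, dt (γ t) (γ t) = 1 := by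
  intro t ht
  have := h.hsph t ht
  unfold dt; linarith

theorem of_rot (hab : a ≤ b) (hu : Measurable u) (hb : ∀ t ∈ Set.Icc a b, |u t| ≤ 1)
    (h : Rot α a b u γ) (h1 : dt (γ a) (γ a) = 1) : AdmissiblePairS α a b γ u := by
  refine ⟨hab, hu, hb, ?_, ?_, ?_⟩
  · intro t ht
    have := h.dt_const h t ht
    rw [h1] at this
    rw [← this]; unfold dt; ring
  · exact continuousOn_pi.2 fun i => h.cont hab i
  · intro t ht i
    fin_cases i
    · have := h.h0.to_integral t ht
      simp only [Fin.zero_eta]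
      rw [this]; congr 1; apply intervalIntegral.integral_congr; intro s _
      simp [FS, GS]
    · have := h.h1.to_integral t ht
      simp only [Fin.mk_one]
      rw [this]; congr 1; apply intervalIntegral.integral_congr; intro s _
      simp [FS, GS]; ring
    · have := h.h2.to_integral t ht
      simp only [Fin.reduceFinMk]
      rw [this]; congr 1; apply intervalIntegral.integral_congr; intro s _
      simp [FS, GS]; ring

end AdmissiblePairS


/-! ### Volterra operators -/

abbrev V3 := Fin 3 → ℝ

abbrev CC (T : ℝ) := C(Set.Icc (0:ℝ) T, V3)

/-- `F_S` as a continuous linear map -/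
noncomputable def FL3 (α : ℝ) : V3 →L[ℝ] V3 :=
  LinearMap.toContinuousLinearMap
    { toFun := FS α
      map_add' := by intro x y; ext i; fin_cases i <;> simp [FS] <;> ring
      map_smul' := by intro c x; ext i; fin_cases i <;> simp [FS] <;> ring }

/-- `G_S` as a continuous linear map -/
noncomputable def GL3 (α : ℝ) : V3 →L[ℝ] V3 :=
  LinearMap.toContinuousLinearMap
    { toFun := GS α
      map_add' := by intro x y; ext i; fin_cases i <;> simp [GS] <;> ring
      map_smul' := by intro c x; ext i; fin_cases i <;> simp [GS] <;> ring }

@[simp] theorem FL3_apply (α : ℝ) (v : V3) : FL3 α v = FS α v := rfl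
@[simp] theorem GL3_apply (α : ℝ) (v : V3) : GL3 α v = GS α v := rfl

theorem vop_intble {T : ℝ} (hT : 0 ≤ T) (L : V3 →L[ℝ] V3) {w : ℝ → ℝ} (hw : Measurable w)
    {B : ℝ} (hB : ∀ t, |w t| ≤ B) (y : CC T) (a b : ℝ) :
    IntervalIntegrable (fun s => w s • L (Set.IccExtend hT y s)) volume a b := by
  have hc : Continuous (fun s => L (Set.IccExtend hT y s)) := by fun_prop
  have h1 : IntervalIntegrable (fun s => B • L (Set.IccExtend hT y s)) volume a b :=
    (hc.const_smul B).intervalIntegrable _ _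
  rw [intervalIntegrable_iff] at h1 ⊢
  refine Integrable.mono h1 (hw.aestronglyMeasurable.smul hc.aestronglyMeasurable) ?_
  refine Filter.Eventually.of_forall fun t => ?_
  rw [norm_smul, norm_smul, Real.norm_eq_abs, Real.norm_eq_abs]
  have := hB t
  exact mul_le_mul_of_nonneg_right (this.trans (le_abs_self _)) (norm_nonneg _)

theorem vop_bound {T : ℝ} (hT : 0 ≤ T) (L : V3 →L[ℝ] V3) {w : ℝ → ℝ}
    {B : ℝ} (hB : ∀ t, |w t| ≤ B) (y : CC T) (s : ℝ) {M : ℝ} (hM : ‖Set.IccExtend hT y s‖ ≤ M) :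
    ‖w s • L (Set.IccExtend hT y s)‖ ≤ B * ‖L‖ * M := by
  have hB0 : 0 ≤ B := (abs_nonneg _).trans (hB 0)
  rw [norm_smul, Real.norm_eq_abs, mul_assoc]
  gcongr
  · exact hB s
  · exact (L.le_opNorm _).trans (by gcongr)

/-- `y ↦ (t ↦ ∫₀ᵗ w(s) L (y s) ds)` -/
noncomputable def vop {T : ℝ} (hT : 0 ≤ T) (L : V3 →L[ℝ] V3) (w : ℝ → ℝ) (hw : Measurable w)
    (B : ℝ) (hB : ∀ t, |w t| ≤ B) : CC T →L[ℝ] CC T :=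
  LinearMap.mkContinuous
    { toFun := fun y => ⟨fun t => ∫ s in (0:ℝ)..t, w s • L (Set.IccExtend hT y s),
        (intervalIntegral.continuous_primitive (vop_intble hT L hw hB y) 0).comp
          continuous_subtype_val⟩
      map_add' := by
        intro x y
        ext1 t
        simp only [ContinuousMap.coe_mk, ContinuousMap.add_apply]
        rw [← intervalIntegral.integral_add (vop_intble hT L hw hB x _ _) (vop_intble hT L hw hB y _ _)]
        apply intervalIntegral.integral_congr
        intro s _
        simp [Set.IccExtend_apply]
      map_smul' := by
        intro c x
        ext1 t
        simp only [ContinuousMap.coe_mk, ContinuousMap.smul_apply, RingHom.id_apply]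
        rw [← intervalIntegral.integral_smul]
        apply intervalIntegral.integral_congr
        intro s _
        simp [Set.IccExtend_apply, smul_comm c] }
    (B * ‖L‖ * T) (by
      intro y
      have hB0 : 0 ≤ B := (abs_nonneg _).trans (hB 0)
      rw [ContinuousMap.norm_le _ (by positivity)]
      intro t
      have := intervalIntegral.norm_integral_le_of_norm_le_const (a := 0) (b := (t:ℝ))
        (f := fun s => w s • L (Set.IccExtend hT y s)) (C := B * ‖L‖ * ‖y‖)
        (fun s _ => vop_bound hT L hB y s (y.norm_coe_le_norm _))
      refine this.trans ?_
      rw [sub_zero, abs_of_nonneg t.2.1]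
      have := t.2.2
      calc B * ‖L‖ * ‖y‖ * t ≤ B * ‖L‖ * ‖y‖ * T := by gcongr
        _ = _ := by ring)

theorem vop_apply {T : ℝ} (hT : 0 ≤ T) (L : V3 →L[ℝ] V3) (w : ℝ → ℝ) (hw : Measurable w)
    (B : ℝ) (hB : ∀ t, |w t| ≤ B) (y : CC T) (t : Set.Icc (0:ℝ) T) :
    vop hT L w hw B hB y t = ∫ s in (0:ℝ)..t, w s • L (Set.IccExtend hT y s) := rfl

theorem vop_pow_step {T : ℝ} (hT : 0 ≤ T) (L : V3 →L[ℝ] V3) (w : ℝ → ℝ) (hw : Measurable w)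
    (B : ℝ) (hB : ∀ t, |w t| ≤ B) (y : CC T) (n : ℕ) (M : ℝ)
    (h : ∀ s : Set.Icc (0:ℝ) T, ‖y s‖ ≤ M * (s:ℝ) ^ n) (t : Set.Icc (0:ℝ) T) :
    ‖vop hT L w hw B hB y t‖ ≤ B * ‖L‖ * M * ((t:ℝ) ^ (n+1) / (n+1)) := by
  rw [vop_apply]
  have e : B * ‖L‖ * M * ((t:ℝ) ^ (n+1) / (n+1)) = ∫ s in (0:ℝ)..t, B * ‖L‖ * (M * s ^ n) := by
    rw [intervalIntegral.integral_const_mul, intervalIntegral.integral_const_mul, integral_pow]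
    simp; ring
  rw [e]
  apply intervalIntegral.norm_integral_le_of_norm_le t.2.1
  · refine Filter.Eventually.of_forall fun s hs => vop_bound hT L hB y s ?_
    have hs' : s ∈ Set.Icc (0:ℝ) T := ⟨hs.1.le, hs.2.trans t.2.2⟩
    rw [Set.IccExtend_of_mem _ _ hs']
    exact h ⟨s, hs'⟩
  · exact (by fun_prop : Continuous fun s : ℝ => B * ‖L‖ * (M * s ^ n)).intervalIntegrable _ _

theorem isUnit_one_sub_of_step {T : ℝ} (hT : 0 ≤ T) (K : CC T →L[ℝ] CC T) (C : ℝ) (hC : 0 ≤ C)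
    (hK : ∀ (y : CC T) (n : ℕ) (M : ℝ), (∀ s : Set.Icc (0:ℝ) T, ‖y s‖ ≤ M * (s:ℝ) ^ n) →
      ∀ t : Set.Icc (0:ℝ) T, ‖K y t‖ ≤ C * M * ((t:ℝ) ^ (n+1) / (n+1))) :
    IsUnit (1 - K) := by
  have hp : ∀ n : ℕ, ∀ y : CC T, ∀ t : Set.Icc (0:ℝ) T,
      ‖(K ^ n) y t‖ ≤ (C ^ n * ‖y‖ / n.factorial) * (t:ℝ) ^ n := by
    intro n
    induction n with
    | zero => intro y t; simpa using y.norm_coe_le_norm t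
    | succ n ih =>
      intro y t
      have := hK ((K^n) y) n _ (ih y) t
      rw [pow_succ', mul_apply_eq_comp]
      refine this.trans (le_of_eq ?_)
      rw [Nat.factorial_succ]
      push_cast
      field_simp; try ring
  have hn : ∀ n : ℕ, ‖K ^ n‖ ≤ (C * T) ^ n / n.factorial := by
    intro n
    refine ContinuousLinearMap.opNorm_le_bound _ (by positivity) fun y => ?_
    rw [ContinuousMap.norm_le _ (by positivity)]
    intro t
    refine (hp n y t).trans ?_
    have h1 : (t:ℝ)^n ≤ T^n := pow_le_pow_left₀ t.2.1 t.2.2 n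
    calc C ^ n * ‖y‖ / n.factorial * (t:ℝ) ^ n ≤ C ^ n * ‖y‖ / n.factorial * T ^ n := by gcongr
      _ = _ := by rw [mul_pow]; ring
  have hlim := FloorSemiring.tendsto_pow_div_factorial_atTop (C * T)
  obtain ⟨n, hn1⟩ := (hlim.eventually (gt_mem_nhds (zero_lt_one))).exists
  have hu : IsUnit (1 - K ^ n) := isUnit_one_sub_of_norm_lt_one (R := CC T →L[ℝ] CC T) (x := K ^ n) ((hn n).trans_lt hn1)
  have h2 := mul_neg_geom_sum K n
  have h3 := geom_sum_mul_neg K n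
  rw [← h2] at hu
  have hcomm : Commute (1 - K) (∑ i ∈ Finset.range n, K ^ i) := by
    show _ * _ = _ * _
    rw [h2, h3]
  exact (hcomm.isUnit_mul_iff.1 hu).1


theorem solve_lemma {P E : Type*} [NormedAddCommGroup P] [NormedSpace ℝ P] [CompleteSpace P]
    [NormedAddCommGroup E] [NormedSpace ℝ E] [CompleteSpace E] {f : P → E} {f' : P →L[ℝ] E}
    (hf : HasStrictFDerivAt f f' 0) (hs : f'.range = ⊤) {c : P} (hc : f' c = 0)
    {κ : ℝ} (hκ : 0 < κ) : ∃ η, 0 < η ∧ η < κ ∧ ∃ p, ‖p - η • c‖ ≤ κ * η ∧ f p = f 0 := by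
  let N := f'.nonlinearRightInverseOfSurjective hs
  have hN : 0 < N.nnnorm := f'.nonlinearRightInverseOfSurjective_nnnorm_pos hs
  have hN' : (0:ℝ) < (N.nnnorm:ℝ)⁻¹ := by positivity
  set ε : ℝ := (N.nnnorm:ℝ)⁻¹ * κ / (‖c‖ + κ + 1) with hε
  have hεpos : 0 < ε := by positivity
  have hmul : ε * (‖c‖ + κ + 1) = (N.nnnorm:ℝ)⁻¹ * κ := by
    rw [hε]; field_simp
  obtain ⟨s, hs0, hs1⟩ := hf.approximates_deriv_on_nhds (c := ⟨ε, hεpos.le⟩) (Or.inr hεpos)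
  obtain ⟨r, hr, hrs⟩ := Metric.mem_nhds_iff.1 hs0
  set η : ℝ := min (κ / 2) (r / (2 * (‖c‖ + κ + 1))) with hη
  have hη0 : 0 < η := by positivity
  have hη1 : η < κ := (min_le_left _ _).trans_lt (by linarith)
  have hη2 : η * (‖c‖ + κ + 1) ≤ r / 2 := by
    have : η ≤ r / (2 * (‖c‖ + κ + 1)) := min_le_right _ _
    rw [le_div_iff₀ (by positivity)] at this
    linarith
  refine ⟨η, hη0, hη1, ?_⟩
  have hnc : ‖η • c‖ = η * ‖c‖ := by rw [norm_smul, Real.norm_of_nonneg hη0.le]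
  have hsub : Metric.closedBall (η • c) (κ * η) ⊆ s := by
    intro x hx
    apply hrs
    rw [mem_ball_zero_iff]
    rw [mem_closedBall_iff_norm] at hx
    have : ‖x‖ ≤ ‖x - η • c‖ + ‖η • c‖ := by
      simpa using norm_add_le (x - η • c) (η • c)
    nlinarith
  have hsurj := hs1.surjOn_closedBall_of_nonlinearRightInverse N (by positivity) hsub
  have h0s : (0:P) ∈ s := mem_of_mem_nhds hs0
  have hcs : η • c ∈ s := hsub (Metric.mem_closedBall_self (by positivity))
  have h1 := hs1 0 h0s _ hcs
  have hmem : f 0 ∈ Metric.closedBall (f (η • c)) (((N.nnnorm:ℝ)⁻¹ - ε) * (κ * η)) := by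
    rw [mem_closedBall_iff_norm]
    simp only [zero_sub, map_neg, map_smul, hc, smul_zero, neg_zero, sub_zero, norm_neg, hnc] at h1
    refine h1.trans ?_
    show ε * (η * ‖c‖) ≤ _
    have : ε * ‖c‖ ≤ ((N.nnnorm:ℝ)⁻¹ - ε) * κ := by nlinarith
    nlinarith
  obtain ⟨p, hp, hfp⟩ := hsurj hmem
  exact ⟨p, by rwa [← mem_closedBall_iff_norm], hfp⟩

theorem exists_support {C : Set (ℝ × ℝ)} (hC : Convex ℝ C) (h0 : (0 : ℝ × ℝ) ∈ C)
    (hi : (0 : ℝ × ℝ) ∉ interior C) : ∃ l : (ℝ × ℝ) →L[ℝ] ℝ, l ≠ 0 ∧ ∀ x ∈ C, l x ≤ 0 := by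
  by_cases hne : (interior C).Nonempty
  · obtain ⟨l, hl⟩ := geometric_hahn_banach_open_point hC.interior isOpen_interior hi
    rw [map_zero] at hl
    refine ⟨l, ?_, ?_⟩
    · rintro rfl
      obtain ⟨x, hx⟩ := hne
      simpa using hl x hx
    · have h1 : C ⊆ closure (interior C) := by
        rw [hC.closure_interior_eq_closure_of_nonempty_interior hne]; exact subset_closure
      have h2 : closure (interior C) ⊆ {x | l x ≤ 0} :=
        closure_minimal (fun x hx => (hl x hx).le) (isClosed_le l.continuous continuous_const)
      exact fun x hx => h2 (h1 hx)
  · have h1 : affineSpan ℝ C ≠ ⊤ := fun h => hne (hC.interior_nonempty_iff_affineSpan_eq_top.2 h)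
    have h2 : Submodule.span ℝ C < ⊤ := by
      rw [lt_top_iff_ne_top]
      intro h
      apply h1
      rw [AffineSubspace.affineSpan_eq_top_iff_vectorSpan_eq_top_of_nonempty ℝ _ _ ⟨0, h0⟩]
      rw [vectorSpan_eq_span_vsub_set_right ℝ h0]
      simpa using h
    obtain ⟨l, hl0, hl⟩ := Submodule.exists_le_ker_of_lt_top _ h2
    refine ⟨LinearMap.toContinuousLinearMap l, ?_, ?_⟩
    · intro h; apply hl0
      refine LinearMap.ext fun x => ?_
      exact congrArg (fun f : (ℝ × ℝ) →L[ℝ] ℝ => f x) h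
    · intro x hx
      have : l x = 0 := hl (Submodule.subset_span hx)
      exact le_of_eq this


/-! ### Pontryagin maximum principle -/

theorem ader_of_curve {T : ℝ} (hT : 0 ≤ T) (y : CC T) (v : V3) (Φ : ℝ → V3)
    (hΦ : IntervalIntegrable Φ volume 0 T)
    (h : ∀ t : Set.Icc (0:ℝ) T, y t = v + ∫ s in (0:ℝ)..t, Φ s) :
    Set.IccExtend hT y 0 = v ∧
    ∀ i, ADer 0 T (fun t => Set.IccExtend hT y t i) (fun t => Φ t i) := by
  have h0 : Set.IccExtend hT y 0 = v := by
    rw [Set.IccExtend_of_mem hT y ⟨le_rfl, hT⟩, h]; simp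
  refine ⟨h0, fun i => ADer.of_integral hT ?_ fun t ht => ?_⟩
  · rw [intervalIntegrable_iff] at hΦ ⊢
    exact (ContinuousLinearMap.proj (R := ℝ) (φ := fun _ : Fin 3 => ℝ) i).integrable_comp hΦ
  · have hi : IntervalIntegrable Φ volume 0 t := by
      apply hΦ.mono_set
      rw [Set.uIcc_of_le ht.1, Set.uIcc_of_le hT]
      exact Set.Icc_subset_Icc le_rfl ht.2
    have := (ContinuousLinearMap.proj (R := ℝ) (φ := fun _ : Fin 3 => ℝ) i).intervalIntegral_comp_comm hi
    simp only [ContinuousLinearMap.proj_apply] at this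
    rw [h0, Set.IccExtend_of_mem hT y ht, h, this]
    rfl

/-- the drift/control Volterra operator -/
noncomputable def K0 {T : ℝ} (hT : 0 ≤ T) (α : ℝ) {u : ℝ → ℝ} (hu : Measurable u)
    (hB : ∀ t, |u t| ≤ 1) : CC T →L[ℝ] CC T :=
  vop hT (FL3 α) (fun _ => 1) measurable_const 1 (by simp) + vop hT (GL3 α) u hu 1 hB

theorem K0_unit {T : ℝ} (hT : 0 ≤ T) (α : ℝ) {u : ℝ → ℝ} (hu : Measurable u)
    (hB : ∀ t, |u t| ≤ 1) : IsUnit (1 - K0 hT α hu hB) := by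
  refine isUnit_one_sub_of_step hT _ (1 * ‖FL3 α‖ + 1 * ‖GL3 α‖) (by positivity) ?_
  intro y n M h t
  have h1 := vop_pow_step hT (FL3 α) (fun _ => 1) measurable_const 1 (by simp) y n M h t
  have h2 := vop_pow_step hT (GL3 α) u hu 1 hB y n M h t
  refine (norm_add_le _ _).trans ((add_le_add h1 h2).trans (le_of_eq ?_))
  ring

/-- perturbed solutions -/
theorem fix_ader {T : ℝ} (hT : 0 ≤ T) (α : ℝ) {u : ℝ → ℝ} (hu : Measurable u)
    (hB : ∀ t, |u t| ≤ 1) {δ : ℝ → ℝ} (hδ : Measurable δ) {B : ℝ} (hδB : ∀ t, |δ t| ≤ B)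
    (y g : CC T) (v : V3)
    (h : y = ContinuousMap.const _ v + K0 hT α hu hB y + vop hT (GL3 α) δ hδ B hδB g) :
    Set.IccExtend hT y 0 = v ∧
    ∀ i, ADer 0 T (fun t => Set.IccExtend hT y t i)
      (fun t => FS α (Set.IccExtend hT y t) i + u t * GS α (Set.IccExtend hT y t) i
        + δ t * GS α (Set.IccExtend hT g t) i) := by
  have i1 := vop_intble hT (FL3 α) (w := fun _ => 1) measurable_const (B := 1) (by simp) y
  have i2 := vop_intble hT (GL3 α) hu hB y
  have i3 := vop_intble hT (GL3 α) hδ hδB g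
  have := ader_of_curve hT y v _ (((i1 0 T).add (i2 0 T)).add (i3 0 T)) (by
    intro t
    have h2 := congrArg (fun z : CC T => z t) h
    simp only [K0, ContinuousMap.add_apply, _root_.add_apply, vop_apply,
      ContinuousMap.const_apply] at h2
    rw [intervalIntegral.integral_add ((i1 0 t).add (i2 0 t)) (i3 0 t),
      intervalIntegral.integral_add (i1 0 t) (i2 0 t), h2]
    abel)
  refine ⟨this.1, fun i => (this.2 i).congr_der' fun t _ => ?_⟩
  simp

theorem vinv_apply {T : ℝ} {K : CC T →L[ℝ] CC T} (hK : IsUnit (1 - K)) (z : CC T) :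
    Ring.inverse (1 - K) z = z + K (Ring.inverse (1 - K) z) := by
  have h := congrArg (fun A : CC T →L[ℝ] CC T => A z) (Ring.mul_inverse_cancel _ hK)
  simp only [mul_apply_eq_comp, _root_.sub_apply, one_apply_eq_self] at h
  rw [sub_eq_iff_eq_add] at h
  exact h

/-- unperturbed solutions -/
theorem fix_rot {T : ℝ} (hT : 0 ≤ T) (α : ℝ) {u : ℝ → ℝ} (hu : Measurable u)
    (hB : ∀ t, |u t| ≤ 1) (y : CC T) (v : V3)
    (h : y = ContinuousMap.const _ v + K0 hT α hu hB y) :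
    Set.IccExtend hT y 0 = v ∧ Rot α 0 T u (Set.IccExtend hT y) := by
  have := fix_ader hT α hu hB (δ := fun _ => 0) measurable_const (B := 0) (by simp) y y v (by
    have : vop hT (GL3 α) (fun _ => 0) measurable_const 0 (by simp) y = 0 := by
      ext1 t; rw [vop_apply]; simp
    rw [this, add_zero]; exact h)
  refine ⟨this.1, (this.2 0).congr_der' ?_, (this.2 1).congr_der' ?_, (this.2 2).congr_der' ?_⟩ <;>
  · intro t _; simp [FS, GS]; try ring

/-- solution with initial condition `v` -/
noncomputable def Sol {T : ℝ} (hT : 0 ≤ T) (α : ℝ) {u : ℝ → ℝ} (hu : Measurable u)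
    (hB : ∀ t, |u t| ≤ 1) (v : V3) : CC T :=
  Ring.inverse (1 - K0 hT α hu hB) (ContinuousMap.const _ v)

theorem sol_rot {T : ℝ} (hT : 0 ≤ T) (α : ℝ) {u : ℝ → ℝ} (hu : Measurable u)
    (hB : ∀ t, |u t| ≤ 1) (v : V3) :
    Set.IccExtend hT (Sol hT α hu hB v) 0 = v ∧
      Rot α 0 T u (Set.IccExtend hT (Sol hT α hu hB v)) :=
  fix_rot hT α hu hB _ v (vinv_apply (K0_unit hT α hu hB) _)

/-- derivative in direction `δ` -/
theorem dir_der {T : ℝ} (hT : 0 ≤ T) (α : ℝ) {u : ℝ → ℝ} (hu : Measurable u)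
    (hB : ∀ t, |u t| ≤ 1) {δ : ℝ → ℝ} (hδ : Measurable δ) {B : ℝ} (hδB : ∀ t, |δ t| ≤ B)
    (g : CC T) (p : ℝ → V3) (hp : Rot α 0 T u p) :
    dt (Ring.inverse (1 - K0 hT α hu hB) (vop hT (GL3 α) δ hδ B hδB g) ⟨T, hT, le_rfl⟩) (p T) =
      ∫ t in (0:ℝ)..T, δ t * dt (GS α (Set.IccExtend hT g t)) (p t) := by
  set d := Ring.inverse (1 - K0 hT α hu hB) (vop hT (GL3 α) δ hδ B hδB g) with hd
  have h1 := vinv_apply (K0_unit hT α hu hB) (vop hT (GL3 α) δ hδ B hδB g)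
  rw [← hd] at h1
  obtain ⟨h0, hA⟩ := fix_ader hT α hu hB hδ hδB d g 0 (by
    conv_lhs => rw [h1]
    ext1 t; simp; abel)
  have h2 : ADer 0 T (fun t => dt (Set.IccExtend hT d t) (p t))
      (fun t => δ t * dt (GS α (Set.IccExtend hT g t)) (p t)) := by
    refine ((((hA 0).mul hp.h0).add ((hA 1).mul hp.h1)).add ((hA 2).mul hp.h2)).congr_both hT ?_ ?_
    · intro t _; rfl
    · intro t _; simp [FS, GS, dt]; ring
  have h3 := h2.eq_integral_sub hT
  rw [h0, Set.IccExtend_of_mem hT d ⟨hT, le_rfl⟩] at h3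
  rw [← h3]; simp [dt]

/-- dot product with a fixed vector, as a functional -/
noncomputable def dtL (q : V3) : V3 →L[ℝ] ℝ :=
  LinearMap.toContinuousLinearMap
    { toFun := fun v => dt v q
      map_add' := by intro x y; simp [dt]; ring
      map_smul' := by intro c x; simp [dt]; ring }

@[simp] theorem dtL_apply (q v : V3) : dtL q v = dt v q := rfl

/-- orthonormal frames are complete -/
theorem frame_aux {p q g y : V3} (hp : dt p p = 1) (hq : dt q q = 1) (hg : dt g g = 1)
    (hpq : dt p q = 0) (hpg : dt p g = 0) (hqg : dt q g = 0) (h1 : dt y p = 0) (h2 : dt y q = 0) :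
    y = dt y g • g := by
  have hM : (Matrix.of ![p, q, g]) * (Matrix.of ![p, q, g]).transpose = 1 := by
    ext i j
    simp only [dt] at *
    fin_cases i <;> fin_cases j <;> simp [Matrix.mul_apply, Fin.sum_univ_three] <;> linarith
  have hM' := mul_eq_one_comm.1 hM
  have e : ∀ i j, p i * p j + q i * q j + g i * g j = if i = j then 1 else 0 := by
    intro i j
    have := congrFun (congrFun hM' i) j
    simpa [Matrix.mul_apply, Fin.sum_univ_three, Matrix.one_apply] using this
  ext i
  have a0 := e i 0
  have a1 := e i 1
  have a2 := e i 2
  simp only [dt] at *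
  simp only [Pi.smul_apply, smul_eq_mul]
  have : y 0 * (p i * p 0 + q i * q 0 + g i * g 0) + y 1 * (p i * p 1 + q i * q 1 + g i * g 1) +
      y 2 * (p i * p 2 + q i * q 2 + g i * g 2) = y i := by
    rw [a0, a1, a2]
    fin_cases i <;> simp
  linear_combination (-1) * this + p i * h1 + q i * h2


section abstract_pert
variable {E : Type*} [NormedAddCommGroup E] [NormedSpace ℝ E] [CompleteSpace E]

theorem Kp_strict (K : E →L[ℝ] E) (hK : IsUnit (1 - K)) (D : Fin 4 → (E →L[ℝ] E))
    (Λ : (E →L[ℝ] E) →L[ℝ] ℝ × ℝ) :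
    ∃ f' : (ℝ × (Fin 4 → ℝ)) →L[ℝ] ℝ × ℝ,
      HasStrictFDerivAt (fun p : ℝ × (Fin 4 → ℝ) =>
        Λ (Ring.inverse (1 - (1 + p.1) • (K + ∑ i, p.2 i • D i)))) f' 0 ∧
      ∀ p, f' p = Λ (Ring.inverse (1 - K) * (p.1 • K + ∑ i, p.2 i • D i) * Ring.inverse (1 - K)) := by
  let L : (ℝ × (Fin 4 → ℝ)) →L[ℝ] (E →L[ℝ] E) :=
    ∑ i, ((ContinuousLinearMap.proj (R := ℝ) (φ := fun _ : Fin 4 => ℝ) i).comp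
      (ContinuousLinearMap.snd ℝ ℝ (Fin 4 → ℝ))).smulRight (D i)
  have hL : ∀ p, L p = ∑ i, p.2 i • D i := by
    intro p
    simp [L, _root_.sum_apply]
  have h1 : HasStrictFDerivAt (fun p : ℝ × (Fin 4 → ℝ) => 1 - (1 + p.1) • (K + ∑ i, p.2 i • D i))
      (-((ContinuousLinearMap.fst ℝ ℝ (Fin 4 → ℝ)).smulRight K + L)) 0 := by
    have a1 : HasStrictFDerivAt (fun p : ℝ × (Fin 4 → ℝ) => 1 + p.1)
      (ContinuousLinearMap.fst ℝ ℝ (Fin 4 → ℝ)) 0 := hasStrictFDerivAt_fst.const_add 1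
    have a2 : HasStrictFDerivAt (fun p : ℝ × (Fin 4 → ℝ) => K + ∑ i, p.2 i • D i) L 0 := by
      have := (L.hasStrictFDerivAt (x := 0)).const_add K
      simp only [hL] at this
      exact this
    have a3 := (a1.smul a2).const_sub 1
    refine a3.congr_fderiv ?_
    refine ContinuousLinearMap.ext fun p => ?_
    simp [add_comm]
  have h2 : HasStrictFDerivAt Ring.inverse (-ContinuousLinearMap.mulLeftRight ℝ (E →L[ℝ] E)
      (Ring.inverse (1 - K)) (Ring.inverse (1 - K)))
      ((fun p : ℝ × (Fin 4 → ℝ) => 1 - (1 + p.1) • (K + ∑ i, p.2 i • D i)) 0) := by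
    have := hasStrictFDerivAt_ringInverse (𝕜 := ℝ) hK.unit
    simp only [Prod.fst_zero, add_zero, Prod.snd_zero, Pi.zero_apply, zero_smul,
      Finset.sum_const_zero, one_smul]
    rw [← Ring.inverse_unit] at this
    simpa using this
  refine ⟨_, Λ.hasStrictFDerivAt.comp 0 (h2.comp 0 h1), fun p => ?_⟩
  simp only [ContinuousLinearMap.comp_apply, _root_.neg_apply, _root_.add_apply, hL,
    ContinuousLinearMap.smulRight_apply, ContinuousLinearMap.coe_fst',
    ContinuousLinearMap.mulLeftRight_apply, mul_neg, neg_mul, neg_neg]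

theorem abstract_pert (K : E →L[ℝ] E) (hKu : IsUnit (1 - K)) (D : Fin 4 → (E →L[ℝ] E)) (e : E)
    (ev1 ev2 ev3 : E →L[ℝ] ℝ) {ρ : ℝ} (hρ : 0 < ρ)
    (hd1 : ∀ i, ev1 (Ring.inverse (1 - K) (D i (Ring.inverse (1 - K) e))) = ρ * (![1,-1,0,0] : Fin 4 → ℝ) i)
    (hd2 : ∀ i, ev2 (Ring.inverse (1 - K) (D i (Ring.inverse (1 - K) e))) = ρ * (![0,0,1,-1] : Fin 4 → ℝ) i)
    (h3 : 0 < ev3 (Ring.inverse (1 - K) e)) :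
    ∃ (σ : ℝ) (ε : Fin 4 → ℝ) (y : E), -(1/8) ≤ σ ∧ σ < 0 ∧ (∀ i, 0 ≤ ε i ∧ ε i ≤ 1/8) ∧
      y = e + (1 + σ) • (K y + ∑ i, ε i • D i y) ∧ ev1 y = ev1 (Ring.inverse (1 - K) e) ∧
      ev2 y = ev2 (Ring.inverse (1 - K) e) ∧ 0 < ev3 y := by
  let ap : (E →L[ℝ] E) →L[ℝ] E := ContinuousLinearMap.apply ℝ E e
  have hap : ∀ A, ap A = A e := fun A => rfl
  let Λ : (E →L[ℝ] E) →L[ℝ] ℝ × ℝ := (ev1.comp ap).prod (ev2.comp ap)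
  have hΛ : ∀ A, Λ A = (ev1 (A e), ev2 (A e)) := fun A => rfl
  obtain ⟨f', hf, hf'⟩ := Kp_strict K hKu D Λ
  have hdir : ∀ ε : Fin 4 → ℝ, f' (0, ε) = (ρ * (ε 0 - ε 1), ρ * (ε 2 - ε 3)) := by
    intro ε
    rw [hf', hΛ]
    simp only [zero_smul, zero_add, mul_apply_eq_comp, _root_.smul_apply,
      _root_.add_apply, map_add, map_smul, hd1, hd2, Fin.sum_univ_four]
    ext <;> simp <;> ring
  have hsurj : f'.range = ⊤ := by
    rw [eq_top_iff]
    rintro ⟨x, y⟩ -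
    refine ⟨(0, ![x/ρ, 0, y/ρ, 0]), ?_⟩
    simp only [ContinuousLinearMap.coe_coe]
    rw [hdir]
    ext <;> simp <;> field_simp
  set v := f' (1, 0) with hv
  let cc : ℝ × (Fin 4 → ℝ) := (-1, ![1 + |v.1| / ρ + v.1 / ρ, 1 + |v.1| / ρ, 1 + |v.2| / ρ + v.2 / ρ, 1 + |v.2| / ρ])
  have hc : f' cc = 0 := by
    have e : cc = (-1:ℝ) • ((1:ℝ), (0 : Fin 4 → ℝ)) + (0, cc.2) := by
      ext <;> simp [cc]
    rw [e, map_add, map_smul, hdir, ← hv]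
    ext <;> simp [cc] <;> field_simp <;> ring
  have hc1 : ∀ i, 1 ≤ cc.2 i := by
    intro i
    have b1 := neg_abs_le v.1
    have b2 := neg_abs_le v.2
    have b3 : 0 ≤ |v.1| / ρ + v.1 / ρ := by rw [← add_div]; apply div_nonneg _ hρ.le; linarith
    have b4 : 0 ≤ |v.2| / ρ + v.2 / ρ := by rw [← add_div]; apply div_nonneg _ hρ.le; linarith
    have b5 : 0 ≤ |v.1| / ρ := by positivity
    have b6 : 0 ≤ |v.2| / ρ := by positivity
    fin_cases i <;> simp [cc] <;> linarith
  -- neighbourhood conditions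
  have hcontA : ContinuousAt (fun p : ℝ × (Fin 4 → ℝ) => 1 - (1 + p.1) • (K + ∑ i, p.2 i • D i)) 0 := by
    apply Continuous.continuousAt
    fun_prop
  have hval0 : (fun p : ℝ × (Fin 4 → ℝ) => 1 - (1 + p.1) • (K + ∑ i, p.2 i • D i)) 0 = 1 - K := by
    simp
  have hunit : ∀ᶠ p : ℝ × (Fin 4 → ℝ) in nhds 0, IsUnit (1 - (1 + p.1) • (K + ∑ i, p.2 i • D i)) := by
    apply hcontA.eventually
    rw [hval0]
    exact (Units.isOpen (R := E →L[ℝ] E)).mem_nhds hKu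
  have hclose : ∀ᶠ p : ℝ × (Fin 4 → ℝ) in nhds 0,
      0 < ev3 (ap (Ring.inverse (1 - (1 + p.1) • (K + ∑ i, p.2 i • D i)))) := by
    have c1 : ContinuousAt (Ring.inverse : (E →L[ℝ] E) → _)
        ((fun p : ℝ × (Fin 4 → ℝ) => 1 - (1 + p.1) • (K + ∑ i, p.2 i • D i)) 0) := by
      rw [hval0]
      have := (hasStrictFDerivAt_ringInverse (𝕜 := ℝ) hKu.unit).continuousAt
      simpa using this
    have c2 : ContinuousAt (fun p : ℝ × (Fin 4 → ℝ) =>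
        ev3 (ap (Ring.inverse (1 - (1 + p.1) • (K + ∑ i, p.2 i • D i))))) 0 :=
      (ev3.continuous.comp ap.continuous).continuousAt.comp
        (ContinuousAt.comp (f := fun p : ℝ × (Fin 4 → ℝ) => 1 - (1 + p.1) • (K + ∑ i, p.2 i • D i)) c1 hcontA)
    refine c2.eventually (lt_mem_nhds ?_)
    simpa [hap] using h3
  obtain ⟨r, hr, hrP⟩ := Metric.eventually_nhds_iff.1 (hunit.and hclose)
  set κ := min (1/2) (min (r / (2 * (‖cc‖ + 1))) (1 / (8 * (‖cc‖ + 1)))) with hκ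
  have hκ0 : 0 < κ := by positivity
  have hκ1 : κ ≤ 1/2 := min_le_left _ _
  have hκ2 : κ * (‖cc‖ + 1) ≤ r / 2 := by
    have : κ ≤ r / (2 * (‖cc‖ + 1)) := (min_le_right _ _).trans (min_le_left _ _)
    rw [le_div_iff₀ (by positivity)] at this
    linarith
  have hκ3 : κ * (‖cc‖ + 1) ≤ 1 / 8 := by
    have : κ ≤ 1 / (8 * (‖cc‖ + 1)) := (min_le_right _ _).trans (min_le_right _ _)
    rw [le_div_iff₀ (by positivity)] at this
    linarith
  obtain ⟨η, hη0, hη1, p, hp, hfp⟩ := solve_lemma hf hsurj hc hκ0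
  have hpn : ‖p‖ ≤ η * (‖cc‖ + 1) := by
    have : ‖p‖ ≤ ‖p - η • cc‖ + ‖η • cc‖ := by
      simpa using norm_add_le (p - η • cc) (η • cc)
    rw [norm_smul, Real.norm_of_nonneg hη0.le] at this
    nlinarith
  have hpn' : ‖p‖ ≤ κ * (‖cc‖ + 1) := hpn.trans (by gcongr)
  obtain ⟨hpu, hpc⟩ := hrP (y := p) (by rw [dist_zero_right]; linarith)
  have hσ : |p.1 + η| ≤ κ * η := by
    have := (norm_fst_le (p - η • cc)).trans hp
    simpa [cc, Real.norm_eq_abs] using this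
  have hε : ∀ i, |p.2 i - η * cc.2 i| ≤ κ * η := by
    intro i
    have := (norm_le_pi_norm _ i).trans ((norm_snd_le (p - η • cc)).trans hp)
    simpa [Real.norm_eq_abs] using this
  have hσ1 : |p.1| ≤ 1/8 := (norm_fst_le p).trans (hpn'.trans hκ3)
  have hε1 : ∀ i, |p.2 i| ≤ 1/8 := fun i =>
    (norm_le_pi_norm _ i).trans ((norm_snd_le p).trans (hpn'.trans hκ3))
  have hε0 : ∀ i, 0 ≤ p.2 i := by
    intro i
    have := (abs_le.1 (hε i)).1
    have := hc1 i
    nlinarith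
  have hσ0 : p.1 < 0 := by
    have := (abs_le.1 hσ).2
    nlinarith
  refine ⟨p.1, p.2, Ring.inverse (1 - (1 + p.1) • (K + ∑ i, p.2 i • D i)) e,
    (abs_le.1 hσ1).1, hσ0, fun i => ⟨hε0 i, (abs_le.1 (hε1 i)).2⟩, ?_, ?_, ?_, hpc⟩
  · have h := congrArg (fun A : E →L[ℝ] E => A e) (Ring.mul_inverse_cancel _ hpu)
    simp only [mul_apply_eq_comp, _root_.sub_apply, one_apply_eq_self] at h
    rw [sub_eq_iff_eq_add] at h
    simpa using h
  · have := congrArg Prod.fst hfp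
    simpa [hΛ] using this
  · have := congrArg Prod.snd hfp
    simpa [hΛ] using this

end abstract_pert


theorem faster_of_interior {T : ℝ} (hT : 0 < T) (α : ℝ) {u : ℝ → ℝ} (hu : Measurable u)
    (hB : ∀ t, |u t| ≤ 1) (δ : Fin 4 → ℝ → ℝ) (hδ : ∀ i, Measurable (δ i))
    (hδB : ∀ i t, |u t + δ i t| ≤ 1) {ρ : ℝ} (hρ : 0 < ρ)
    (hi1 : ∀ i, ∫ t in (0:ℝ)..T, δ i t * dt (GS α (Set.IccExtend hT.le (Sol hT.le α hu hB ![0,0,1]) t))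
      (Set.IccExtend hT.le (Sol hT.le α hu hB ![1,0,0]) t) = ρ * (![1,-1,0,0] : Fin 4 → ℝ) i)
    (hi2 : ∀ i, ∫ t in (0:ℝ)..T, δ i t * dt (GS α (Set.IccExtend hT.le (Sol hT.le α hu hB ![0,0,1]) t))
      (Set.IccExtend hT.le (Sol hT.le α hu hB ![0,1,0]) t) = ρ * (![0,0,1,-1] : Fin 4 → ℝ) i) :
    ∃ T' γ' u', T' < T ∧ AdmissiblePairS α 0 T' γ' u' ∧ γ' 0 = ![0,0,1] ∧
      γ' T' = Set.IccExtend hT.le (Sol hT.le α hu hB ![0,0,1]) T := by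
  have hB2 : ∀ i t, |δ i t| ≤ 2 := by
    intro i t
    have h1 := hδB i t
    have h2 := hB t
    rw [abs_le] at *
    constructor <;> linarith [h1.1, h1.2, h2.1, h2.2]
  have hKu : IsUnit (1 - K0 hT.le α hu hB) := K0_unit hT.le α hu hB
  have hTm : T ∈ Set.Icc (0:ℝ) T := ⟨hT.le, le_rfl⟩
  obtain ⟨g0, gR⟩ := sol_rot hT.le α hu hB ![0,0,1]
  obtain ⟨p10, p1R⟩ := sol_rot hT.le α hu hB ![1,0,0]
  obtain ⟨p20, p2R⟩ := sol_rot hT.le α hu hB ![0,1,0]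
  set g := Set.IccExtend hT.le (Sol hT.le α hu hB ![0,0,1]) with hg
  set p1 := Set.IccExtend hT.le (Sol hT.le α hu hB ![1,0,0]) with hp1
  set p2 := Set.IccExtend hT.le (Sol hT.le α hu hB ![0,1,0]) with hp2
  let ev : V3 → (CC T →L[ℝ] ℝ) := fun q => (dtL q).comp (ContinuousMap.evalCLM ℝ ⟨T, hTm⟩)
  have hev : ∀ q y, ev q y = dt (y ⟨T, hTm⟩) q := fun q y => rfl
  have hgT : Ring.inverse (1 - K0 hT.le α hu hB) (ContinuousMap.const _ ![0,0,1]) ⟨T, hTm⟩ = g T := by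
    rw [hg, Set.IccExtend_of_mem _ _ hTm]; rfl
  obtain ⟨σ, ε, y, hσ1, hσ0, hε, hy, e1, e2, e3⟩ := abstract_pert (K0 hT.le α hu hB) hKu
    (fun i => vop hT.le (GL3 α) (δ i) (hδ i) 2 (hB2 i)) (ContinuousMap.const _ ![0,0,1])
    (ev (p1 T)) (ev (p2 T)) (ev (g T)) hρ (by
      intro i
      rw [hev, ← hi1]
      exact dir_der hT.le α hu hB (hδ i) (hB2 i) (Sol hT.le α hu hB ![0,0,1]) p1 p1R)
    (by
      intro i
      rw [hev, ← hi2]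
      exact dir_der hT.le α hu hB (hδ i) (hB2 i) (Sol hT.le α hu hB ![0,0,1]) p2 p2R)
    (by
      rw [hev, hgT, gR.dt_const gR T hTm, g0]; simp [dt])
  rw [hev, hev, hgT] at e1 e2
  rw [hev] at e3
  -- the perturbed control
  set w : ℝ → ℝ := fun t => u t + ∑ i, ε i * δ i t with hw
  have hwm : Measurable w := hu.add (Finset.measurable_sum _ fun i _ => (hδ i).const_mul _)
  have hwB : ∀ t, |w t| ≤ 1 := by
    intro t
    have e : w t = (1 - ∑ i, ε i) * u t + ∑ i, ε i * (u t + δ i t) := by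
      simp only [hw, Fin.sum_univ_four]; ring
    have h0 := abs_le.1 (hB t)
    have h1 := abs_le.1 (hδB 0 t)
    have h2 := abs_le.1 (hδB 1 t)
    have h3 := abs_le.1 (hδB 2 t)
    have h4 := abs_le.1 (hδB 3 t)
    have k1 := hε 0
    have k2 := hε 1
    have k3 := hε 2
    have k4 := hε 3
    rw [e, abs_le]
    simp only [Fin.sum_univ_four]
    constructor <;> nlinarith
  have hk : 0 < 1 + σ := by linarith
  -- the perturbed trajectory
  have hyA : Set.IccExtend hT.le y 0 = ![0,0,1] ∧ ∀ i, ADer 0 T (fun t => Set.IccExtend hT.le y t i)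
      (fun t => (1 + σ) * (FS α (Set.IccExtend hT.le y t) i + w t * GS α (Set.IccExtend hT.le y t) i)) := by
    have i1 := vop_intble hT.le (FL3 α) (w := fun _ => 1) measurable_const (B := 1) (by simp) y
    have i2 := vop_intble hT.le (GL3 α) hu hB y
    have i3 := fun i => vop_intble hT.le (GL3 α) (hδ i) (hB2 i) y
    have i4 := vop_intble hT.le (GL3 α) hwm hwB y
    have := ader_of_curve hT.le y ![0,0,1] _ (((i1 0 T).add (i4 0 T)).smul (1 + σ)) (by
      intro t
      have h2 := congrArg (fun z : CC T => z t) hy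
      simp only [K0, ContinuousMap.add_apply, _root_.add_apply, vop_apply, ContinuousMap.smul_apply,
        ContinuousMap.const_apply, ContinuousMap.sum_apply] at h2
      have e : ∫ s in (0:ℝ)..t, w s • (GL3 α) (Set.IccExtend hT.le y s) =
          (∫ s in (0:ℝ)..t, u s • (GL3 α) (Set.IccExtend hT.le y s)) +
          ∑ i, ε i • ∫ s in (0:ℝ)..t, δ i s • (GL3 α) (Set.IccExtend hT.le y s) := by
        have i5 : ∀ i, IntervalIntegrable
            (fun s => ε i • δ i s • (GL3 α) (Set.IccExtend hT.le y s)) volume 0 t :=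
          fun i => (i3 i 0 t).smul (ε i)
        have i6 : IntervalIntegrable
            (fun s => ∑ i, ε i • δ i s • (GL3 α) (Set.IccExtend hT.le y s)) volume 0 t := by
          have := IntervalIntegrable.sum Finset.univ (fun i _ => i5 i)
          simpa [Finset.sum_fn] using this
        simp only [← intervalIntegral.integral_smul]
        rw [← intervalIntegral.integral_finsetSum (fun i _ => i5 i),
          ← intervalIntegral.integral_add (i2 0 t) i6]
        apply intervalIntegral.integral_congr
        intro s _
        simp [hw, add_smul, Finset.sum_smul, mul_smul]
      simp only [Pi.smul_apply]
      rw [intervalIntegral.integral_smul, intervalIntegral.integral_add (i1 0 t) (i4 0 t), h2, e,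
        add_assoc])
    refine ⟨this.1, fun i => (this.2 i).congr_der' fun t _ => ?_⟩
    simp
  obtain ⟨y0, hyA⟩ := hyA
  set Y := Set.IccExtend hT.le y with hY
  have hYT : y ⟨T, hTm⟩ = Y T := by rw [hY, Set.IccExtend_of_mem _ _ hTm]
  rw [hYT] at e1 e2 e3
  have hkk : (1 + σ)⁻¹ * (1 + σ) = 1 := inv_mul_cancel₀ hk.ne'
  have hTT : T / (1 + σ)⁻¹ = T * (1 + σ) := by rw [div_inv_eq_mul]
  have hZ : Rot α 0 (T * (1 + σ)) (fun t => w ((1 + σ)⁻¹ * t)) (fun t => Y ((1 + σ)⁻¹ * t)) := by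
    have k := fun i => (hyA i).comp_mul (k := (1 + σ)⁻¹) (by positivity) hT.le
    simp only [hTT, ← mul_assoc, hkk, one_mul] at k
    refine ⟨(k 0).congr_der' ?_, (k 1).congr_der' ?_, (k 2).congr_der' ?_⟩ <;>
    · intro t _; simp [FS, GS]; try ring
  have hadm : AdmissiblePairS α 0 (T * (1 + σ)) (fun t => Y ((1 + σ)⁻¹ * t))
      (fun t => w ((1 + σ)⁻¹ * t)) :=
    AdmissiblePairS.of_rot (by positivity) (hwm.comp (measurable_const_mul _)) (fun t _ => hwB _) hZ
      (by simp [y0, dt])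
  refine ⟨T * (1 + σ), _, _, by nlinarith, hadm, by simp [y0], ?_⟩
  have hend : (1 + σ)⁻¹ * (T * (1 + σ)) = T := by field_simp
  have hY1 : dt (Y T) (Y T) = 1 := by
    have := hadm.dt_one (T * (1 + σ)) ⟨by positivity, le_rfl⟩
    rwa [hend] at this
  simp only [hend]
  have c1 := p1R.dt_const p1R T hTm
  have c2 := p2R.dt_const p2R T hTm
  have c3 := gR.dt_const gR T hTm
  have c4 := p1R.dt_const p2R T hTm
  have c5 := p1R.dt_const gR T hTm
  have c6 := p2R.dt_const gR T hTm
  rw [dt_comm (g T)] at e1 e2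
  rw [c5] at e1
  rw [c6] at e2
  rw [g0, p10, p20] at *
  have f1 := frame_aux (p := p1 T) (q := p2 T) (g := g T) (y := Y T)
    (by rw [c1]; simp [dt]) (by rw [c2]; simp [dt]) (by rw [c3]; simp [dt]) (by rw [c4]; simp [dt])
    (by rw [c5]; simp [dt]) (by rw [c6]; simp [dt]) (by rw [e1]; simp [dt]) (by rw [e2]; simp [dt])
  have hl : dt (Y T) (g T) = 1 := by
    have h1 : dt (Y T) (Y T) = dt (Y T) (g T) * dt (Y T) (g T) := by
      conv_lhs => arg 2; rw [f1]
      simp [dt]; ring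
    nlinarith
  rw [f1, hl, one_smul]


theorem rot_unique {α a b : ℝ} {u : ℝ → ℝ} {v w : ℝ → Fin 3 → ℝ} (h : Rot α a b u v)
    (h' : Rot α a b u w) {t₀ : ℝ} (ht₀ : t₀ ∈ Set.Icc a b) (h0 : v t₀ = w t₀) :
    ∀ t ∈ Set.Icc a b, v t = w t := by
  intro t ht
  have hab := ht.1.trans ht.2
  have hd := h.add (h'.smul (-1) hab) hab
  have e1 := hd.dt_const hd t ht
  have e2 := hd.dt_const hd t₀ ht₀
  rw [← e2] at e1
  have e3 : dt (v t₀ + (-1:ℝ) • w t₀) (v t₀ + (-1:ℝ) • w t₀) = 0 := by rw [h0]; simp [dt]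
  rw [e3] at e1
  simp only [dt, Pi.add_apply, Pi.smul_apply, smul_eq_mul] at e1
  ext i
  have s0 := mul_self_nonneg (v t 0 + -1 * w t 0)
  have s1 := mul_self_nonneg (v t 1 + -1 * w t 1)
  have s2 := mul_self_nonneg (v t 2 + -1 * w t 2)
  fin_cases i
  · have : v t 0 + -1 * w t 0 = 0 := mul_self_eq_zero.1 (by linarith)
    simp; linarith
  · have : v t 1 + -1 * w t 1 = 0 := mul_self_eq_zero.1 (by linarith)
    simp; linarith
  · have : v t 2 + -1 * w t 2 = 0 := mul_self_eq_zero.1 (by linarith)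
    simp; linarith

theorem pmp {α T : ℝ} (hs : 0 < sin α) (hT : 0 < T) {γ : ℝ → Fin 3 → ℝ} {u : ℝ → ℝ}
    (h : TimeOptimalS α 0 T γ u) (h0 : γ 0 = ![0,0,1]) :
    ∃ M : ℝ → Fin 3 → ℝ, Rot α 0 T u M ∧ (∀ t ∈ Set.Icc 0 T, dt (M t) (M t) = 1) ∧
      (∀ t ∈ Set.Icc 0 T, dt (M t) (γ t) = 0) ∧ M 0 2 = 0 ∧
      ∀ᵐ t, t ∈ Set.Ioo 0 T → u t * M t 0 = |M t 0| := by
  obtain ⟨hadm, hopt⟩ := h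
  have hTm : T ∈ Set.Icc (0:ℝ) T := ⟨hT.le, le_rfl⟩
  have h0m : (0:ℝ) ∈ Set.Icc (0:ℝ) T := ⟨le_rfl, hT.le⟩
  set w : ℝ → ℝ := (Set.Icc 0 T).indicator u with hw
  have hwm : Measurable w := hadm.humeas.indicator measurableSet_Icc
  have hwu : ∀ t ∈ Set.Icc 0 T, w t = u t := fun t ht => Set.indicator_of_mem ht u
  have hwB : ∀ t, |w t| ≤ 1 := by
    intro t
    by_cases ht : t ∈ Set.Icc 0 T
    · rw [hwu t ht]; exact hadm.hubound t ht
    · simp [hw, Set.indicator_of_notMem ht]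
  have hγw : Rot α 0 T w γ := hadm.rot.congr_u
    (Filter.Eventually.of_forall fun t ht => (hwu t ⟨ht.1.le, ht.2.le⟩).symm)
  obtain ⟨g0, gR⟩ := sol_rot hT.le α hwm hwB ![0,0,1]
  obtain ⟨p10, p1R⟩ := sol_rot hT.le α hwm hwB ![1,0,0]
  obtain ⟨p20, p2R⟩ := sol_rot hT.le α hwm hwB ![0,1,0]
  have hfast := faster_of_interior hT α hwm hwB
  set g := Set.IccExtend hT.le (Sol hT.le α hwm hwB ![0,0,1]) with hg
  set p1 := Set.IccExtend hT.le (Sol hT.le α hwm hwB ![1,0,0]) with hp1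
  set p2 := Set.IccExtend hT.le (Sol hT.le α hwm hwB ![0,1,0]) with hp2
  have hgγ : ∀ t ∈ Set.Icc 0 T, g t = γ t := rot_unique gR hγw h0m (by rw [g0, h0])
  have hgc : Continuous g := by rw [hg]; fun_prop
  have hp1c : Continuous p1 := by rw [hp1]; fun_prop
  have hp2c : Continuous p2 := by rw [hp2]; fun_prop
  set φ1 : ℝ → ℝ := fun t => dt (GS α (g t)) (p1 t) with hφ1
  set φ2 : ℝ → ℝ := fun t => dt (GS α (g t)) (p2 t) with hφ2
  have cg : ∀ i, Continuous fun t => g t i := fun i => (continuous_apply i).comp hgc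
  have cp1 : ∀ i, Continuous fun t => p1 t i := fun i => (continuous_apply i).comp hp1c
  have cp2 : ∀ i, Continuous fun t => p2 t i := fun i => (continuous_apply i).comp hp2c
  have hcφ1 : Continuous φ1 := by
    have e : φ1 = fun t => sin α * (-(g t 2)) * p1 t 1 + sin α * g t 1 * p1 t 2 := by
      ext t; simp [hφ1, dt, GS]
    rw [e]
    have := cg 1; have := cg 2; have := cp1 1; have := cp1 2
    fun_prop
  have hcφ2 : Continuous φ2 := by
    have e : φ2 = fun t => sin α * (-(g t 2)) * p2 t 1 + sin α * g t 1 * p2 t 2 := by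
      ext t; simp [hφ2, dt, GS]
    rw [e]
    have := cg 1; have := cg 2; have := cp2 1; have := cp2 2
    fun_prop
  -- bounded measurable times continuous is integrable
  have hInt : ∀ δ : ℝ → ℝ, Measurable δ → (∀ t, |δ t| ≤ 2) → ∀ φ : ℝ → ℝ, Continuous φ →
      IntervalIntegrable (fun t => δ t * φ t) volume 0 T := by
    intro δ hδ hb φ hφ
    have h1 : IntervalIntegrable (fun s => 2 * φ s) volume 0 T :=
      (hφ.const_mul 2).intervalIntegrable _ _
    rw [intervalIntegrable_iff] at h1 ⊢
    refine Integrable.mono h1 (hδ.aestronglyMeasurable.mul hφ.aestronglyMeasurable) ?_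
    refine Filter.Eventually.of_forall fun t => ?_
    rw [norm_mul, norm_mul, Real.norm_eq_abs, Real.norm_two]
    exact mul_le_mul_of_nonneg_right (hb t) (norm_nonneg _)
  have hb2 : ∀ δ : ℝ → ℝ, (∀ t, |w t + δ t| ≤ 1) → ∀ t, |δ t| ≤ 2 := by
    intro δ hδ t
    have h1 := hδ t
    have h2 := hwB t
    rw [abs_le] at *
    constructor <;> linarith [h1.1, h1.2, h2.1, h2.2]
  let C : Set (ℝ × ℝ) := {x | ∃ δ : ℝ → ℝ, Measurable δ ∧ (∀ t, |w t + δ t| ≤ 1) ∧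
    ∫ t in (0:ℝ)..T, δ t * φ1 t = x.1 ∧ ∫ t in (0:ℝ)..T, δ t * φ2 t = x.2}
  have hC0 : (0 : ℝ × ℝ) ∈ C := ⟨fun _ => 0, measurable_const, by simpa using hwB, by simp, by simp⟩
  have hCc : Convex ℝ C := by
    rintro x ⟨δ, m, b, h1, h2⟩ x' ⟨δ', m', b', h1', h2'⟩ a b'' ha hb hab
    refine ⟨fun t => a * δ t + b'' * δ' t, (m.const_mul a).add (m'.const_mul b''), ?_, ?_, ?_⟩
    · intro t
      have e : w t + (a * δ t + b'' * δ' t) = a * (w t + δ t) + b'' * (w t + δ' t) := by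
        linear_combination (1 - (a + b'')) * w t - w t * (1 - (a + b'')) - w t * hab
      rw [e]
      have k1 := abs_le.1 (b t)
      have k2 := abs_le.1 (b' t)
      rw [abs_le]
      constructor <;> nlinarith
    · have e : ∀ t, (a * δ t + b'' * δ' t) * φ1 t = a * (δ t * φ1 t) + b'' * (δ' t * φ1 t) := by
        intro t; ring
      simp only [e]
      rw [intervalIntegral.integral_add ((hInt δ m (hb2 δ b) φ1 hcφ1).const_mul a)
        ((hInt δ' m' (hb2 δ' b') φ1 hcφ1).const_mul b''), intervalIntegral.integral_const_mul,
        intervalIntegral.integral_const_mul, h1, h1']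
      simp
    · have e : ∀ t, (a * δ t + b'' * δ' t) * φ2 t = a * (δ t * φ2 t) + b'' * (δ' t * φ2 t) := by
        intro t; ring
      simp only [e]
      rw [intervalIntegral.integral_add ((hInt δ m (hb2 δ b) φ2 hcφ2).const_mul a)
        ((hInt δ' m' (hb2 δ' b') φ2 hcφ2).const_mul b''), intervalIntegral.integral_const_mul,
        intervalIntegral.integral_const_mul, h2, h2']
      simp
  by_cases hint0 : (0 : ℝ × ℝ) ∈ interior C
  · exfalso
    obtain ⟨r, hr, hrC⟩ := Metric.mem_nhds_iff.1 (mem_interior_iff_mem_nhds.1 hint0)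
    have hmem : ∀ i : Fin 4, ((r/2 * (![1,-1,0,0] : Fin 4 → ℝ) i, r/2 * (![0,0,1,-1] : Fin 4 → ℝ) i) : ℝ × ℝ) ∈ C := by
      intro i
      apply hrC
      rw [mem_ball_zero_iff, Prod.norm_def]
      fin_cases i <;> simp [abs_of_pos hr] <;> linarith
    choose δ hδm hδb hδ1 hδ2 using hmem
    obtain ⟨T', γ', u', hT', hadm', h0', hend⟩ := hfast δ hδm hδb (ρ := r/2) (by positivity) hδ1 hδ2
    have := hopt 0 T' γ' u' hadm' (by rw [h0', h0]) (by rw [hend, hgγ T hTm])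
    linarith
  · obtain ⟨l, hl0, hlC⟩ := exists_support hCc hC0 hint0
    set a := l (1, 0) with ha
    set b := l (0, 1) with hb
    have hl : ∀ x : ℝ × ℝ, l x = a * x.1 + b * x.2 := by
      intro x
      have : x = x.1 • ((1:ℝ), (0:ℝ)) + x.2 • ((0:ℝ), (1:ℝ)) := by ext <;> simp
      conv_lhs => rw [this]
      rw [map_add, map_smul, map_smul]
      simp [ha, hb, mul_comm]
    have hab : 0 < a ^ 2 + b ^ 2 := by
      by_contra hcon
      have h1 : a = 0 := by nlinarith [sq_nonneg a, sq_nonneg b]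
      have h2 : b = 0 := by nlinarith [sq_nonneg a, sq_nonneg b]
      apply hl0
      refine ContinuousLinearMap.ext fun x => ?_
      rw [hl, h1, h2]; simp
    set ψ : ℝ → ℝ := fun t => a * φ1 t + b * φ2 t with hψ
    have hψc : Continuous ψ := (hcφ1.const_mul a).add (hcφ2.const_mul b)
    set sg : ℝ → ℝ := fun t => if 0 ≤ ψ t then 1 else -1 with hsg
    have hsgm : Measurable sg :=
      Measurable.ite (measurableSet_le measurable_const hψc.measurable) measurable_const measurable_const
    have hsgψ : ∀ t, sg t * ψ t = |ψ t| := by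
      intro t
      by_cases ht : 0 ≤ ψ t
      · simp [hsg, ht, abs_of_nonneg ht]
      · simp [hsg, ht, abs_of_neg (not_le.1 ht)]
    have hδb : ∀ t, |w t + (sg t - w t)| ≤ 1 := by
      intro t
      rw [add_sub_cancel]
      by_cases ht : 0 ≤ ψ t <;> simp [hsg, ht]
    have hδm : Measurable (fun t => sg t - w t) := hsgm.sub hwm
    have hle := hlC (_, _) ⟨fun t => sg t - w t, hδm, hδb, rfl, rfl⟩
    rw [hl] at hle
    simp only [] at hle
    have hnn : ∀ t, 0 ≤ (sg t - w t) * ψ t := by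
      intro t
      rw [sub_mul, hsgψ, sub_nonneg]
      calc w t * ψ t ≤ |w t * ψ t| := le_abs_self _
        _ = |w t| * |ψ t| := abs_mul _ _
        _ ≤ 1 * |ψ t| := mul_le_mul_of_nonneg_right (hwB t) (abs_nonneg _)
        _ = |ψ t| := one_mul _
    have hI := hInt _ hδm (hb2 _ hδb) ψ hψc
    have hz : ∫ t in (0:ℝ)..T, (sg t - w t) * ψ t = 0 := by
      apply le_antisymm
      · have e : ∀ t, (sg t - w t) * ψ t = a * ((sg t - w t) * φ1 t) + b * ((sg t - w t) * φ2 t) := by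
          intro t; simp only [hψ]; ring
        simp only [e]
        rw [intervalIntegral.integral_add ((hInt _ hδm (hb2 _ hδb) φ1 hcφ1).const_mul a)
          ((hInt _ hδm (hb2 _ hδb) φ2 hcφ2).const_mul b), intervalIntegral.integral_const_mul,
          intervalIntegral.integral_const_mul]
        exact hle
      · exact intervalIntegral.integral_nonneg hT.le fun t _ => hnn t
    have hae : ∀ᵐ t, t ∈ Set.Ioo 0 T → w t * ψ t = |ψ t| := by
      have := (intervalIntegral.integral_eq_zero_iff_of_le_of_nonneg_ae hT.le
        (Filter.Eventually.of_forall hnn) hI).1 hz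
      rw [Filter.EventuallyEq, ae_restrict_iff' measurableSet_Ioc] at this
      filter_upwards [this] with t ht h1
      have := ht ⟨h1.1, h1.2.le⟩
      rw [sub_mul, hsgψ] at this
      simp at this
      linarith
    -- the adjoint
    set n := Real.sqrt (a ^ 2 + b ^ 2) with hn
    have hn0 : 0 < n := Real.sqrt_pos.2 hab
    have hn2 : n ^ 2 = a ^ 2 + b ^ 2 := Real.sq_sqrt hab.le
    set p : ℝ → Fin 3 → ℝ := fun t => (a / n) • p1 t + (b / n) • p2 t with hp
    have hpR : Rot α 0 T w p := (p1R.smul _ hT.le).add (p2R.smul _ hT.le) hT.le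
    have hp0 : p 0 = ![a / n, b / n, 0] := by
      simp only [hp, p10, p20]; ext i; fin_cases i <;> simp
    have hMR := gR.cross hpR hT.le
    refine ⟨fun t => cr (g t) (p t), ?_, ?_, ?_, ?_, ?_⟩
    · exact hMR.congr_u (Filter.Eventually.of_forall fun t ht => hwu t ⟨ht.1.le, ht.2.le⟩)
    · intro t ht
      rw [hMR.dt_const hMR t ht, dt_cr_cr, g0, hp0]
      simp [dt]
      field_simp
      linarith
    · intro t ht
      rw [← hgγ t ht, dt_cr_self]
    · simp [cr, g0]
    · filter_upwards [hae] with t ht h1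
      have e : ψ t = (n * sin α) * cr (g t) (p t) 0 := by
        simp [hψ, hφ1, hφ2, cr, hp, dt, GS]
        field_simp
        ring
      have := ht h1
      have hns : 0 < n * sin α := by positivity
      rw [e, abs_mul, abs_of_pos hns, hwu t ⟨h1.1.le, h1.2.le⟩] at this
      have h2 : (n * sin α) * (u t * cr (g t) (p t) 0) = (n * sin α) * |cr (g t) (p t) 0| := by
        linarith
      exact mul_left_cancel₀ hns.ne' h2


/-- discrete sets criterion -/
theorem disc_of_ev {S : Set ℝ} (h : ∀ x ∈ S, ∀ᶠ z in nhdsWithin x {x}ᶜ, z ∉ S) : IsDiscrete S := by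
  rw [isDiscrete_iff_nhdsNE]
  intro x hx
  rw [← Filter.empty_mem_iff_bot, Filter.mem_inf_principal]
  filter_upwards [h x hx] with z hz hz'
  exact absurd hz' hz

/-- Extremal data. -/
structure Extr (α T : ℝ) (γ : ℝ → Fin 3 → ℝ) (u : ℝ → ℝ) (M : ℝ → Fin 3 → ℝ) : Prop where
  hs : 0 < sin α
  hsc : sin α < cos α
  hT : 0 < T
  hγ : Rot α 0 T u γ
  hM : Rot α 0 T u M
  γ0 : γ 0 = ![0, 0, 1]
  hM1 : ∀ t ∈ Set.Icc 0 T, dt (M t) (M t) = 1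
  hp : ∀ t ∈ Set.Icc 0 T, dt (M t) (γ t) = 0
  hM0 : M 0 2 = 0
  hu : ∀ᵐ t, t ∈ Set.Ioo 0 T → u t * M t 0 = |M t 0|

namespace Extr

variable {α T : ℝ} {γ M : ℝ → Fin 3 → ℝ} {u : ℝ → ℝ}

theorem hc (h : Extr α T γ u M) : 0 < cos α := h.hs.trans h.hsc

theorem γ1 (h : Extr α T γ u M) : ∀ t ∈ Set.Icc 0 T, dt (γ t) (γ t) = 1 := by
  intro t ht
  rw [h.hγ.dt_const h.hγ t ht, h.γ0]; simp [dt]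

theorem cM (h : Extr α T γ u M) (i : Fin 3) : ContinuousOn (fun t => M t i) (Set.Icc 0 T) :=
  h.hM.cont h.hT.le i

theorem der (h : Extr α T γ u M) : ∀ t ∈ Set.Icc 0 T,
    HasDerivWithinAt (fun t => M t 0) (-(cos α * M t 1)) (Set.Icc 0 T) t :=
  h.hM.h0.hasDerivWithinAt h.hT.le ((continuousOn_const.mul (h.cM 1)).neg)

theorem der' (h : Extr α T γ u M) : ∀ t ∈ Set.Ioo 0 T,
    HasDerivAt (fun t => M t 0) (-(cos α * M t 1)) t := fun t ht =>
  (h.der t ⟨ht.1.le, ht.2.le⟩).hasDerivAt (Icc_mem_nhds ht.1 ht.2)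

theorem ham (h : Extr α T γ u M) : ∀ t ∈ Set.Icc 0 T,
    sin α * |M t 0| + cos α * M t 2 = sin α * |M 0 0| := by
  have h1 : AbsolutelyContinuousOnInterval (fun t => |M t 0|) 0 T :=
    ac_comp_lip (g := fun x => |x|) h.hM.h0.1 (K := 1)
      (LipschitzWith.of_dist_le_mul fun x y => by
        simpa [Real.dist_eq] using abs_abs_sub_abs_le_abs_sub x y)
  set S : Set ℝ := {t | t ∈ Set.Ioo 0 T ∧ M t 0 = 0 ∧ M t 1 ≠ 0} with hS
  have hSc : S.Countable := by
    refine (HereditarilyLindelofSpace.isLindelof S).countable_of_isDiscrete (disc_of_ev ?_)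
    intro x hx
    have := (h.der' x hx.1).eventually_ne (c := 0)
      (by simpa using ⟨h.hc.ne', hx.2.2⟩)
    filter_upwards [this] with z hz hz'
    exact hz hz'.2.1
  have hS0 : ∀ᵐ t, t ∉ S := hSc.ae_notMem volume
  have h2 : ADer 0 T (fun t => |M t 0|) (fun t => -(u t * (cos α * M t 1))) := by
    refine ⟨h1, ?_⟩
    have e : ∀ᵐ t, t ∈ Set.Ioo 0 T → DifferentiableAt ℝ (fun t => |M t 0|) t := by
      have := h1.ae_differentiableAt
      have h' := ADer.Ioo_ae_iff (a := 0) (b := T)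
        (P := fun t => DifferentiableAt ℝ (fun t => |M t 0|) t)
      rw [h']
      filter_upwards [this] with t ht h3
      exact ht (by rw [Set.uIcc_of_le h.hT.le]; exact h3)
    filter_upwards [hS0, h.hu, e] with t ht1 ht2 ht3 ht
    have hd := h.der' t ht
    rcases lt_trichotomy (M t 0) 0 with h0 | h0 | h0
    · have hu : u t = -1 := by
        have := ht2 ht
        rw [abs_of_neg h0] at this
        have h3 : (u t + 1) * M t 0 = 0 := by linarith
        rcases mul_eq_zero.1 h3 with h4 | h4
        · linarith
        · exact absurd h4 h0.ne
      rw [hu]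
      refine (hd.neg.congr_of_eventuallyEq ?_).congr_deriv (by ring)
      filter_upwards [hd.continuousAt.eventually_lt continuousAt_const h0] with z hz
      exact abs_of_neg hz
    · have hM1 : M t 1 = 0 := by
        by_contra h3
        exact ht1 ⟨ht, h0, h3⟩
      rw [hM1]
      have h4 := (ht3 ht).hasDerivAt
      have h5 : IsLocalMin (fun t => |M t 0|) t := by
        refine Filter.Eventually.of_forall fun z => ?_
        simp only [h0, abs_zero]; positivity
      rw [h5.deriv_eq_zero] at h4
      simpa using h4
    · have hu : u t = 1 := by
        have := ht2 ht
        rw [abs_of_pos h0] at this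
        have h3 : (u t - 1) * M t 0 = 0 := by linarith
        rcases mul_eq_zero.1 h3 with h4 | h4
        · linarith
        · exact absurd h4 h0.ne'
      rw [hu]
      refine (hd.congr_of_eventuallyEq ?_).congr_deriv (by ring)
      filter_upwards [continuousAt_const.eventually_lt hd.continuousAt h0] with z hz
      exact abs_of_pos hz
  intro t ht
  have := ((h2.const_mul (sin α)).add (h.hM.h2.const_mul (cos α))).eq_const'
    (fun t => by ring) t ht
  simpa [h.hM0] using this

/-- third component of `M` at a zero of the switching function -/
noncomputable def mm (_ : Extr α T γ u M) : ℝ := sin α * |M 0 0| / cos α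

theorem mm_eq (h : Extr α T γ u M) : cos α * h.mm = sin α * |M 0 0| := by
  unfold mm; field_simp [h.hc.ne']

theorem M00_le (h : Extr α T γ u M) : |M 0 0| ≤ 1 := by
  have := h.hM1 0 ⟨le_rfl, h.hT.le⟩
  unfold dt at this
  rw [abs_le]
  constructor <;> nlinarith [sq_nonneg (M 0 1), sq_nonneg (M 0 2)]

theorem mm_nonneg (h : Extr α T γ u M) : 0 ≤ h.mm := by
  unfold mm; have := h.hc; have := h.hs; positivity

theorem cmm_le (h : Extr α T γ u M) : cos α * h.mm ≤ sin α := by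
  rw [h.mm_eq]; nlinarith [h.M00_le, h.hs]

theorem mm_lt (h : Extr α T γ u M) : h.mm < 1 := by
  nlinarith [h.cmm_le, h.hsc, h.hc]

theorem zero2 (h : Extr α T γ u M) {t : ℝ} (ht : t ∈ Set.Icc 0 T) (h0 : M t 0 = 0) :
    M t 2 = h.mm := by
  have := h.ham t ht
  rw [h0, abs_zero, mul_zero, zero_add, ← h.mm_eq] at this
  exact mul_left_cancel₀ h.hc.ne' this

theorem zero1 (h : Extr α T γ u M) {t : ℝ} (ht : t ∈ Set.Icc 0 T) (h0 : M t 0 = 0) :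
    M t 1 ^ 2 = 1 - h.mm ^ 2 := by
  have := h.hM1 t ht
  unfold dt at this
  rw [h0, h.zero2 ht h0] at this
  linarith

theorem zero1_ne (h : Extr α T γ u M) {t : ℝ} (ht : t ∈ Set.Icc 0 T) (h0 : M t 0 = 0) :
    M t 1 ≠ 0 := by
  intro h1
  have := h.zero1 ht h0
  rw [h1] at this
  nlinarith [h.mm_lt, h.mm_nonneg]

theorem Z_finite (h : Extr α T γ u M) : {t | t ∈ Set.Icc 0 T ∧ M t 0 = 0}.Finite := by
  refine IsCompact.finite ?_ (disc_of_ev ?_)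
  · have : IsClosed (Set.Icc 0 T ∩ (fun t => M t 0) ⁻¹' {0}) :=
      (h.cM 0).preimage_isClosed_of_isClosed isClosed_Icc isClosed_singleton
    exact isCompact_Icc.of_isClosed_subset this fun x hx => hx.1
  · intro x hx
    have := (h.der x hx.1).eventually_ne (c := 0) (by simpa using ⟨h.hc.ne', h.zero1_ne hx.1 hx.2⟩)
    rw [eventually_nhdsWithin_iff] at this ⊢
    filter_upwards [this] with z hz hz' hz2
    exact hz ⟨hz2.1, hz'⟩ hz2.2

/-- zeros in the open interval -/
def Zs (_ : Extr α T γ u M) : Set ℝ := {t | t ∈ Set.Ioo 0 T ∧ M t 0 = 0}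

theorem Zs_finite (h : Extr α T γ u M) : h.Zs.Finite :=
  h.Z_finite.subset fun _ ht => ⟨⟨ht.1.1.le, ht.1.2.le⟩, ht.2⟩

/-- constant sign between zeros -/
theorem sign (h : Extr α T γ u M) {p q : ℝ} (hp : 0 ≤ p) (hpq : p < q) (hq : q ≤ T)
    (hz : ∀ t ∈ Set.Ioo p q, M t 0 ≠ 0) :
    ∃ e : ℝ, (e = 1 ∨ e = -1) ∧ (∀ t ∈ Set.Ioo p q, 0 < e * M t 0) ∧
      (∀ᵐ t, t ∈ Set.Ioo p q → u t = e) ∧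
      (M q 0 = 0 → 0 < e * M q 1) ∧ (M p 0 = 0 → e * M p 1 < 0) := by
  have hsub : Set.Ioo p q ⊆ Set.Icc 0 T := fun t ht => ⟨hp.trans ht.1.le, ht.2.le.trans hq⟩
  have hcon : ContinuousOn (fun t => M t 0) (Set.Ioo p q) := (h.cM 0).mono hsub
  have key : ∃ e : ℝ, (e = 1 ∨ e = -1) ∧ (∀ t ∈ Set.Ioo p q, 0 < e * M t 0) := by
    have hmid : (p + q) / 2 ∈ Set.Ioo p q := ⟨by linarith, by linarith⟩
    by_contra hno
    push Not at hno
    obtain ⟨x, hx, hx0⟩ := hno 1 (Or.inl rfl)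
    obtain ⟨y, hy, hy0⟩ := hno (-1) (Or.inr rfl)
    have : (0 : ℝ) ∈ (fun t => M t 0) '' Set.Ioo p q := by
      refine isPreconnected_Ioo.intermediate_value hx hy hcon ⟨?_, ?_⟩ <;> linarith
    obtain ⟨z, hz1, hz2⟩ := this
    exact hz z hz1 hz2
  obtain ⟨e, he, hpos⟩ := key
  have hee : e * e = 1 := by rcases he with rfl | rfl <;> norm_num
  refine ⟨e, he, hpos, ?_, ?_, ?_⟩
  · filter_upwards [h.hu] with t ht htt
    have h1 := ht ⟨hp.trans_lt htt.1, htt.2.trans_le hq⟩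
    have h2 := hpos t htt
    have h3 : |M t 0| = e * M t 0 := by
      rcases he with rfl | rfl
      · rw [abs_of_pos (by linarith)]; ring
      · rw [abs_of_neg (by linarith)]; ring
    rw [h3] at h1
    exact mul_right_cancel₀ (hz t htt) h1
  · intro hq0
    have hqm : q ∈ Set.Icc 0 T := ⟨hp.trans hpq.le, hq⟩
    have hd := ((h.der q hqm).mono hsub).const_mul e
    have hle : e * -(cos α * M q 1) ≤ 0 := by
      rw [hasDerivWithinAt_iff_tendsto_slope' (by simp)] at hd
      have : (nhdsWithin q (Set.Ioo p q)).NeBot := right_nhdsWithin_Ioo_neBot hpq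
      refine le_of_tendsto hd ?_
      filter_upwards [self_mem_nhdsWithin] with z hz1
      rw [slope_def_field]
      refine div_nonpos_of_nonneg_of_nonpos ?_ (by linarith [hz1.2])
      simp only [hq0]; linarith [hpos z hz1]
    have h4 := h.zero1_ne hqm hq0
    have h5 : e * M q 1 ≠ 0 := mul_ne_zero (by rcases he with rfl | rfl <;> norm_num) h4
    have h6 : 0 ≤ e * M q 1 := by
      by_contra h7
      push Not at h7
      nlinarith [h.hc, mul_neg_of_pos_of_neg h.hc h7]
    exact lt_of_le_of_ne h6 (Ne.symm h5)
  · intro hp0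
    have hpm : p ∈ Set.Icc 0 T := ⟨hp, hpq.le.trans hq⟩
    have hd := ((h.der p hpm).mono hsub).const_mul e
    have hle : 0 ≤ e * -(cos α * M p 1) := by
      rw [hasDerivWithinAt_iff_tendsto_slope' (by simp)] at hd
      have : (nhdsWithin p (Set.Ioo p q)).NeBot := left_nhdsWithin_Ioo_neBot hpq
      refine ge_of_tendsto hd ?_
      filter_upwards [self_mem_nhdsWithin] with z hz1
      rw [slope_def_field]
      refine div_nonneg ?_ (by linarith [hz1.1])
      simp only [hp0]; linarith [hpos z hz1]
    have h4 := h.zero1_ne hpm hp0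
    have h5 : e * M p 1 ≠ 0 := mul_ne_zero (by rcases he with rfl | rfl <;> norm_num) h4
    have h6 : e * M p 1 ≤ 0 := by
      by_contra h7
      push Not at h7
      nlinarith [h.hc, mul_pos h.hc h7]
    exact lt_of_le_of_ne h6 h5

/-- gap of zeros around a point, right side -/
theorem gap_right (h : Extr α T γ u M) {t : ℝ} (ht : t < T) : ∃ q, t < q ∧ q ≤ T ∧
    ∀ s ∈ Set.Ioo t q, 0 ≤ s → M s 0 ≠ 0 := by
  have hf := h.Z_finite.subset (Set.sdiff_subset (t := {t}))
  have : ({x | x ∈ Set.Icc 0 T ∧ M x 0 = 0} \ {t})ᶜ ∈ nhds t :=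
    hf.isClosed.isOpen_compl.mem_nhds (by simp)
  obtain ⟨ε, hε, hb⟩ := Metric.mem_nhds_iff.1 this
  refine ⟨min T (t + ε), lt_min ht (by linarith), min_le_left _ _, fun s hs h0 hM => ?_⟩
  have h1 := hs.2.trans_le (min_le_left _ _)
  have h2 := hs.2.trans_le (min_le_right _ _)
  refine hb (a := s) ?_ ⟨⟨⟨h0, h1.le⟩, hM⟩, hs.1.ne'⟩
  rw [Metric.mem_ball, Real.dist_eq, abs_lt]; constructor <;> linarith [hs.1]

theorem gap_left (h : Extr α T γ u M) {t : ℝ} (ht : 0 < t) : ∃ p, p < t ∧ 0 ≤ p ∧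
    ∀ s ∈ Set.Ioo p t, s ≤ T → M s 0 ≠ 0 := by
  have hf := h.Z_finite.subset (Set.sdiff_subset (t := {t}))
  have : ({x | x ∈ Set.Icc 0 T ∧ M x 0 = 0} \ {t})ᶜ ∈ nhds t :=
    hf.isClosed.isOpen_compl.mem_nhds (by simp)
  obtain ⟨ε, hε, hb⟩ := Metric.mem_nhds_iff.1 this
  refine ⟨max 0 (t - ε), max_lt ht (by linarith), le_max_left _ _, fun s hs h0 hM => ?_⟩
  have h1 := (le_max_left _ _).trans_lt hs.1
  have h2 := (le_max_right _ _).trans_lt hs.1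
  refine hb (a := s) ?_ ⟨⟨⟨h1.le, h0⟩, hM⟩, hs.2.ne⟩
  rw [Metric.mem_ball, Real.dist_eq, abs_lt]; constructor <;> linarith [hs.2]

theorem ae_contra {p q e c : ℝ} {P : Set ℝ} (hpq : p < q) (h1 : ∀ᵐ t, t ∈ Set.Ioo p q → u t = e)
    (h2 : ∀ᵐ t ∂(volume.restrict P), u t = c) (hsub : Set.Ioo p q ⊆ P) : e = c := by
  have h3 := ae_restrict_of_ae_restrict_of_subset hsub h2
  rw [ae_restrict_iff' measurableSet_Ioo] at h3
  by_contra hne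
  have : ∀ᵐ t, t ∉ Set.Ioo p q := by
    filter_upwards [h1, h3] with t ha hb ht
    exact hne ((ha ht).symm.trans (hb ht))
  have h0 : volume (Set.Ioo p q) = 0 := by
    rw [ae_iff] at this; simp only [not_not] at this; exact this
  rw [Real.volume_Ioo] at h0
  have := ENNReal.ofReal_eq_zero.1 h0
  linarith

theorem switching_eq (h : Extr α T γ u M) : {t | IsSwitching 0 T u t} = h.Zs := by
  ext t
  constructor
  · rintro ⟨ht, hsw⟩
    by_contra hn
    -- there is an interval (p,q) around t in [0,T] without zeros
    rcases ht.1.eq_or_lt with rfl | ht0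
    · obtain ⟨q, hq1, hq2, hq⟩ := h.gap_right h.hT
      obtain ⟨e, he, -, hae, -⟩ := h.sign le_rfl hq1 hq2 (fun s hs => hq s hs hs.1.le)
      refine hsw q hq1 ⟨e, he, ?_⟩
      have hae' := ADer.Ioo_ae_iff.1 hae
      rw [ae_restrict_iff' (measurableSet_Ioo.inter measurableSet_Icc)]
      filter_upwards [hae'] with s hs hs'
      exact hs ⟨hs'.2.1, by simpa using hs'.1.2.le⟩
    rcases ht.2.eq_or_lt with rfl | htT
    · obtain ⟨p, hq1, hq2, hq⟩ := h.gap_left h.hT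
      obtain ⟨e, he, -, hae, -⟩ := h.sign hq2 hq1 le_rfl (fun s hs => hq s hs hs.2.le)
      refine hsw (t - p) (by linarith) ⟨e, he, ?_⟩
      have hae' := ADer.Ioo_ae_iff.1 hae
      rw [ae_restrict_iff' (measurableSet_Ioo.inter measurableSet_Icc)]
      filter_upwards [hae'] with s hs hs'
      exact hs ⟨by have := hs'.1.1; linarith, hs'.2.2⟩
    obtain ⟨p, hp1, hp2, hp⟩ := h.gap_left ht0
    obtain ⟨q, hq1, hq2, hq⟩ := h.gap_right htT
    obtain ⟨e, he, -, hae, -⟩ := h.sign hp2 (hp1.trans hq1) hq2 (fun s hs hs0 => by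
      rcases lt_trichotomy s t with hst | rfl | hst
      · exact hp s ⟨hs.1, hst⟩ (hs.2.le.trans hq2) hs0
      · exact hn ⟨⟨ht0, htT⟩, hs0⟩
      · exact hq s ⟨hst, hs.2⟩ (hp2.trans hs.1.le) hs0)
    refine hsw (min (t - p) (q - t)) (lt_min (by linarith) (by linarith)) ⟨e, he, ?_⟩
    rw [ae_restrict_iff' (measurableSet_Ioo.inter measurableSet_Icc)]
    filter_upwards [hae] with s hs hs'
    refine hs ⟨?_, ?_⟩
    · have := hs'.1.1; have := min_le_left (t - p) (q - t); linarith
    · have := hs'.1.2; have := min_le_right (t - p) (q - t); linarith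
  · rintro ⟨ht, h0⟩
    refine ⟨⟨ht.1.le, ht.2.le⟩, fun ε hε => ?_⟩
    rintro ⟨c, hc, hae⟩
    obtain ⟨p, hp1, hp2, hp⟩ := h.gap_left ht.1
    obtain ⟨q, hq1, hq2, hq⟩ := h.gap_right ht.2
    obtain ⟨e, he, -, h1, h2, -⟩ := h.sign hp2 hp1 ht.2.le (fun s hs => hp s hs (hs.2.le.trans ht.2.le))
    obtain ⟨e', he', -, h1', -, h2'⟩ := h.sign ht.1.le hq1 hq2 (fun s hs => hq s hs (ht.1.le.trans hs.1.le))
    have a1 := h2 h0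
    have a2 := h2' h0
    have b1 : e = c := by
      refine ae_contra (p := max p (t - ε)) (q := t) (max_lt hp1 (by linarith)) ?_ hae ?_
      · filter_upwards [h1] with s hs hs'
        exact hs ⟨(le_max_left _ _).trans_lt hs'.1, hs'.2⟩
      · intro s hs
        have := (le_max_left _ _).trans_lt hs.1
        exact ⟨⟨(le_max_right _ _).trans_lt hs.1, by linarith [hs.2]⟩, by linarith, by linarith [hs.2, ht.2]⟩
    have b2 : e' = c := by
      refine ae_contra (p := t) (q := min q (t + ε)) (lt_min hq1 (by linarith)) ?_ hae ?_
      · filter_upwards [h1'] with s hs hs'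
        exact hs ⟨hs'.1, hs'.2.trans_le (min_le_left _ _)⟩
      · intro s hs
        have := hs.2.trans_le (min_le_left _ _)
        exact ⟨⟨by linarith [hs.1], hs.2.trans_le (min_le_right _ _)⟩, by linarith [hs.1, ht.1], by linarith⟩
    rw [b1] at a1; rw [b2] at a2; linarith

end Extr

theorem TimeOptimalS.ext {α T : ℝ} (hs : 0 < sin α) (hsc : sin α < cos α) (hT : 0 < T)
    {γ : ℝ → Fin 3 → ℝ} {u : ℝ → ℝ} (h : TimeOptimalS α 0 T γ u) (h0 : γ 0 = ![0,0,1]) :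
    ∃ M, Extr α T γ u M := by
  obtain ⟨M, h1, h2, h3, h4, h5⟩ := pmp hs hT h h0
  exact ⟨M, hs, hsc, hT, h.1.rot, h1, h0, h2, h3, h4, h5⟩


theorem chain_ind {Z : Set ℝ} (hZ : Z.Finite) (P : ℕ → ℝ → Prop)
    (base : ∀ t ∈ Z, (∀ s ∈ Z, ¬ s < t) → P 1 t)
    (step : ∀ k t' t, 1 ≤ k → t' ∈ Z → t ∈ Z → t' < t → (∀ s ∈ Z, t' < s → ¬ s < t) → P k t' →
      P (k + 1) t) :
    ∀ n, ∀ t ∈ Z, (Z ∩ Set.Iic t).ncard = n → P n t := by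
  intro n
  induction n with
  | zero =>
    intro t ht h0
    rw [Set.ncard_eq_zero (hZ.subset Set.inter_subset_left)] at h0
    exact absurd (show t ∈ Z ∩ Set.Iic t from ⟨ht, Set.mem_Iic.2 le_rfl⟩) (by rw [h0]; simp)
  | succ n ih =>
    intro t ht hn
    by_cases hA : ∀ s ∈ Z, ¬ s < t
    · have : Z ∩ Set.Iic t = {t} := by
        ext s; constructor
        · rintro ⟨h1, h2⟩
          exact le_antisymm h2 (not_lt.1 (hA s h1))
        · rintro rfl; exact ⟨ht, Set.mem_Iic.2 le_rfl⟩
      rw [this, Set.ncard_singleton] at hn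
      rw [← hn]; exact base t ht hA
    · push Not at hA
      obtain ⟨s, hs, hst⟩ := hA
      obtain ⟨t', ht', hmax⟩ := (hZ.subset (Set.inter_subset_left (t := Set.Iio t))).exists_maximal
        ⟨s, hs, hst⟩
      have hlt : t' < t := ht'.2
      have hgap : ∀ s ∈ Z, t' < s → ¬ s < t := fun s hs h1 h2 =>
        absurd (hmax ⟨hs, h2⟩ h1.le) (not_le.2 h1)
      have hins : Z ∩ Set.Iic t = insert t (Z ∩ Set.Iic t') := by
        ext s; constructor
        · rintro ⟨h1, h2⟩
          rcases (show s ≤ t from h2).eq_or_lt with rfl | h3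
          · exact Or.inl rfl
          · exact Or.inr ⟨h1, not_lt.1 fun h4 => hgap s h1 h4 h3⟩
        · rintro (rfl | h1)
          · exact ⟨ht, Set.mem_Iic.2 le_rfl⟩
          · exact ⟨h1.1, (show s ≤ t' from h1.2).trans hlt.le⟩
      have hcard : (Z ∩ Set.Iic t').ncard = n := by
        rw [hins, Set.ncard_insert_of_notMem (fun h => absurd (Set.mem_Iic.1 h.2) (not_le.2 hlt))
          (hZ.subset Set.inter_subset_left)] at hn
        omega
      have h1 : 1 ≤ n := by
        rw [← hcard]
        exact (Set.ncard_pos (hZ.subset Set.inter_subset_left)).2 ⟨t', ht'.1, Set.mem_Iic.2 le_rfl⟩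
      exact step n t' t h1 ht'.1 ht hlt hgap (ih t' ht'.1 hcard)

theorem chain_last {Z : Set ℝ} (hZ : Z.Finite) (hne : Z.Nonempty) :
    ∃ t ∈ Z, (∀ s ∈ Z, s ≤ t) ∧ (Z ∩ Set.Iic t).ncard = Z.ncard := by
  obtain ⟨t, ht, hmax⟩ := hZ.exists_maximal hne
  have h1 : ∀ s ∈ Z, s ≤ t := fun s hs => by
    rcases le_total s t with h | h
    · exact h
    · exact hmax hs h
  refine ⟨t, ht, h1, ?_⟩
  congr 1
  exact Set.inter_eq_left.2 h1

namespace Extr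

variable {α T : ℝ} {γ M : ℝ → Fin 3 → ℝ} {u : ℝ → ℝ}

noncomputable def m2 (h : Extr α T γ u M) : ℝ := √(1 - h.mm ^ 2)

noncomputable def om (h : Extr α T γ u M) : ℝ := arctan (sin α / (cos α * h.m2))

theorem m2_sq (h : Extr α T γ u M) : h.m2 ^ 2 = 1 - h.mm ^ 2 := by
  unfold m2; rw [Real.sq_sqrt]; nlinarith [h.mm_lt, h.mm_nonneg]

theorem m2_pos (h : Extr α T γ u M) : 0 < h.m2 := by
  unfold m2; apply Real.sqrt_pos.2; nlinarith [h.mm_lt, h.mm_nonneg]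

theorem m2_le (h : Extr α T γ u M) : h.m2 ≤ 1 := by
  nlinarith [h.m2_sq, h.m2_pos, sq_nonneg h.mm]

theorem om_lt (h : Extr α T γ u M) : h.om < π / 2 := arctan_lt_pi_div_two _

theorem le_om (h : Extr α T γ u M) (hα : α ∈ Set.Ioo 0 (π / 4)) : α ≤ h.om := by
  have h1 : arctan (tan α) = α := arctan_tan (by linarith [hα.1, pi_pos]) (by linarith [hα.2, pi_pos])
  conv_lhs => rw [← h1, tan_eq_sin_div_cos]
  unfold om
  apply arctan_mono
  have := h.hs; have := h.hc; have := h.m2_pos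
  apply div_le_div_of_nonneg_left h.hs.le (by positivity)
  nlinarith [h.m2_le]

theorem lt_om (h : Extr α T γ u M) (hα : α ∈ Set.Ioo 0 (π / 4)) (hm : 0 < h.mm) : α < h.om := by
  have h1 : arctan (tan α) = α := arctan_tan (by linarith [hα.1, pi_pos]) (by linarith [hα.2, pi_pos])
  have hm2 : h.m2 < 1 := by nlinarith [h.m2_sq, h.m2_pos, mul_pos hm hm]
  conv_lhs => rw [← h1, tan_eq_sin_div_cos]
  unfold om
  apply arctan_strictMono
  have := h.hs; have := h.hc; have := h.m2_pos
  apply div_lt_div_of_pos_left h.hs (by positivity)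
  nlinarith

theorem om_zero (h : Extr α T γ u M) (hα : α ∈ Set.Ioo 0 (π / 4)) (hm : h.mm = 0) : h.om = α := by
  have h1 : arctan (tan α) = α := arctan_tan (by linarith [hα.1, pi_pos]) (by linarith [hα.2, pi_pos])
  have hm2 : h.m2 = 1 := by simp [m2, hm]
  unfold om; rw [hm2, mul_one, ← tan_eq_sin_div_cos, h1]

theorem polar (h : Extr α T γ u M) : ∃ A : ℝ, 0 < A ∧ sin α = A * sin h.om ∧
    cos α * h.m2 = A * cos h.om := by
  have h1 := h.hc; have h2 := h.m2_pos
  have h3 : 0 < cos α * h.m2 := mul_pos h1 h2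
  have h4 : 0 < cos h.om := cos_arctan_pos _
  refine ⟨cos α * h.m2 / cos h.om, by positivity, ?_, by field_simp⟩
  have : tan h.om = sin α / (cos α * h.m2) := tan_arctan _
  rw [tan_eq_sin_div_cos] at this
  field_simp at this ⊢
  linarith

theorem e_m2 (h : Extr α T γ u M) {t e : ℝ} (he : e = 1 ∨ e = -1) (ht : t ∈ Set.Icc 0 T)
    (h0 : M t 0 = 0) (hp : 0 < e * M t 1) : M t 1 = e * h.m2 := by
  have h1 := h.zero1 ht h0
  rw [← h.m2_sq] at h1
  have h2 := h.m2_pos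
  rcases he with rfl | rfl
  · nlinarith [mul_pos h2 hp, sq_nonneg (M t 1 - h.m2)]
  · nlinarith [mul_pos h2 hp, sq_nonneg (M t 1 + h.m2)]

/-- The two invariants along an arc with constant control `e`. -/
theorem invs (h : Extr α T γ u M) {p q e : ℝ} (hp : 0 ≤ p) (hpq : p ≤ q) (hq : q ≤ T)
    (he : ∀ᵐ t, t ∈ Set.Ioo p q → u t = e) :
    (e * sin α * γ q 0 + cos α * γ q 2 = e * sin α * γ p 0 + cos α * γ p 2) ∧
    (e * sin α * M q 0 + cos α * M q 2 = e * sin α * M p 0 + cos α * M p 2) ∧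
    (e * sin α * (M q 1 * γ q 2 - M q 2 * γ q 1) + cos α * (M q 0 * γ q 1 - M q 1 * γ q 0) =
     e * sin α * (M p 1 * γ p 2 - M p 2 * γ p 1) + cos α * (M p 0 * γ p 1 - M p 1 * γ p 0)) := by
  have hqm : q ∈ Set.Icc p q := ⟨hpq, le_rfl⟩
  refine ⟨(h.hγ.mono hp hpq hq).axis he q hqm, (h.hM.mono hp hpq hq).axis he q hqm, ?_⟩
  have := ((h.hM.cross h.hγ h.hT.le).mono hp hpq hq).axis he q hqm
  simpa [cr] using this

/-- value of the cross product at a zero -/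
theorem cr0_zero (h : Extr α T γ u M) {t : ℝ} (ht : t ∈ Set.Icc 0 T) (h0 : M t 0 = 0) :
    M t 1 * (M t 1 * γ t 2 - M t 2 * γ t 1) = γ t 2 := by
  have h1 := h.hp t ht
  have h2 := h.hM1 t ht
  unfold dt at h1 h2
  rw [h0] at h1 h2
  linear_combination γ t 2 * h2 - M t 2 * h1

theorem arc_formula {C S m2 s c A om e M1 y0 y2 cr0 : ℝ} (hm2 : 0 < m2) (he : e = 1 ∨ e = -1)
    (hM1 : M1 = e * m2) (hy2 : y2 = m2 * C) (hS : M1 * y0 = m2 * S) (hcr : M1 * cr0 = y2)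
    (hs : s = A * sin om) (hc : c * m2 = A * cos om) :
    e * y0 = S ∧ e * cr0 = C ∧ e * s * y0 + c * y2 = A * (C * cos om + S * sin om) ∧
    e * s * cr0 + c * (0 - M1 * y0) = A * (C * sin om - S * cos om) := by
  have a1 : e * y0 = S := by
    apply mul_left_cancel₀ hm2.ne'; rw [← hS, hM1]; ring
  have a2 : e * cr0 = C := by
    apply mul_left_cancel₀ hm2.ne'; rw [← hy2, ← hcr, hM1]; ring
  refine ⟨a1, a2, ?_, ?_⟩
  · rw [hy2]; linear_combination s * a1 + C * hc + S * hs
  · rw [hS]; linear_combination s * a2 + C * hs - S * hc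

theorem solve_rot {C S om a : ℝ} (h1 : C * cos om + S * sin om = cos a)
    (h2 : C * sin om - S * cos om = - sin a) : C = cos (a + om) ∧ S = sin (a + om) := by
  have h3 := sin_sq_add_cos_sq om
  rw [cos_add, sin_add, ← h1]
  constructor
  · linear_combination C * (-h3) + sin om * h2
  · linear_combination S * (-h3) - cos om * h2

/-- The angle claim at zeros. -/
def Ang (h : Extr α T γ u M) (k : ℕ) (t : ℝ) : Prop :=
  ∃ ψ : ℝ, γ t 2 = h.m2 * cos ψ ∧ M t 1 * γ t 0 = h.m2 * sin ψ ∧ 2 * h.om * (k - 1) < ψ ∧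
    (h.mm = 0 → ψ = 2 * α * k) ∧ ((∀ s ∈ Set.Icc 0 T, 0 ≤ γ s 2) → ψ ≤ π / 2)

theorem ang_le (h : Extr α T γ u M) {t ψ : ℝ} (ht : t ∈ Set.Icc 0 T) (h1 : γ t 2 = h.m2 * cos ψ)
    (h2 : ψ < 3 * π / 2) (h3 : ∀ s ∈ Set.Icc 0 T, 0 ≤ γ s 2) : ψ ≤ π / 2 := by
  by_contra h4
  push Not at h4
  have := cos_neg_of_pi_div_two_lt_of_lt h4 (by linarith)
  have h5 := h3 t ht
  rw [h1] at h5
  nlinarith [mul_neg_of_pos_of_neg h.m2_pos this]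

set_option maxHeartbeats 1000000 in
theorem ang_base (h : Extr α T γ u M) (hα : α ∈ Set.Ioo 0 (π / 4)) {t : ℝ} (ht : t ∈ h.Zs)
    (hz : ∀ s ∈ h.Zs, ¬ s < t) : h.Ang 1 t := by
  have ht' : t ∈ Set.Icc 0 T := ⟨ht.1.1.le, ht.1.2.le⟩
  obtain ⟨e, he, hpos, hae, hq, hp0⟩ := h.sign le_rfl ht.1.1 ht.1.2.le (fun s hs h0 =>
    hz s ⟨⟨hs.1, hs.2.trans ht.1.2⟩, h0⟩ hs.2)
  have hM1 := h.e_m2 he ht' ht.2 (hq ht.2)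
  obtain ⟨i1, -, i3⟩ := h.invs le_rfl ht'.1 ht'.2 hae
  obtain ⟨A, hA, hsA, hcA⟩ := h.polar
  have hee : e * e = 1 := by rcases he with rfl | rfl <;> norm_num
  obtain ⟨a1, a2, a3, a4⟩ := arc_formula (y0 := γ t 0) (y2 := γ t 2) (M1 := M t 1) (C := γ t 2 / h.m2) (S := M t 1 * γ t 0 / h.m2) h.m2_pos he
    hM1 (by field_simp [h.m2_pos.ne']) (by field_simp [h.m2_pos.ne']) (h.cr0_zero ht' ht.2) hsA hcA
  rw [ht.2, zero_mul] at i3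
  rw [i1] at a3
  rw [i3] at a4
  have g0 : γ 0 0 = 0 := by simp [h.γ0]
  have g1 : γ 0 1 = 0 := by simp [h.γ0]
  have g2 : γ 0 2 = 1 := by simp [h.γ0]
  rw [g0, g2] at a3
  rw [g0, g1, g2, h.hM0] at a4
  set C := γ t 2 / h.m2 with hC
  set S := M t 1 * γ t 0 / h.m2 with hS
  set δ := arctan (-(e * M 0 1) * sin α / cos α) with hδ
  have hcδ : 0 < cos δ := cos_arctan_pos _
  have htδ : sin δ / cos δ = -(e * M 0 1) * sin α / cos α := by
    rw [← tan_eq_sin_div_cos]; exact tan_arctan _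
  have hc := h.hc
  have hs := h.hs
  have hsδ : sin δ * cos α = -(e * M 0 1) * sin α * cos δ := by
    field_simp at htδ; linarith
  have hM01 : M 0 0 ^ 2 + M 0 1 ^ 2 = 1 := by
    have := h.hM1 0 ⟨le_rfl, h.hT.le⟩
    unfold dt at this; rw [h.hM0] at this; linarith
  have hA2 : A ^ 2 = cos α ^ 2 + sin α ^ 2 * M 0 1 ^ 2 := by
    have e1 : A ^ 2 = sin α ^ 2 + (cos α * h.m2) ^ 2 := by
      rw [hsA, hcA]; linear_combination A ^ 2 * (-(sin_sq_add_cos_sq h.om))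
    have e2 := h.mm_eq
    have e3 : (cos α * h.mm) ^ 2 = sin α ^ 2 * M 0 0 ^ 2 := by rw [e2, mul_pow, sq_abs]
    rw [e1, mul_pow, h.m2_sq]; linear_combination (-1) * e3 - sin α ^ 2 * hM01
  -- A cos δ = cos α
  have hAc : A * cos δ = cos α := by
    have e1 : (A * cos δ) ^ 2 = cos α ^ 2 := by
      have e2 : cos δ ^ 2 * (cos α ^ 2 + sin α ^ 2 * M 0 1 ^ 2) = cos α ^ 2 := by
        have e3 : (sin δ * cos α) ^ 2 = (-(e * M 0 1) * sin α * cos δ) ^ 2 := by rw [hsδ]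
        have e4 := sin_sq_add_cos_sq δ
        linear_combination cos α ^ 2 * e4 - e3 + (-1) * M 0 1 ^ 2 * sin α ^ 2 * cos δ ^ 2 * (hee)
      rw [mul_pow, hA2]; linarith
    have e5 : 0 < A * cos δ := by positivity
    nlinarith
  have hAs : A * sin δ = -(e * M 0 1) * sin α := by
    apply mul_right_cancel₀ hcδ.ne'
    apply mul_right_cancel₀ hc.ne'
    linear_combination sin δ * cos α * hAc + cos α * hsδ
  have b1 : C * cos h.om + S * sin h.om = cos δ := by
    apply mul_left_cancel₀ hA.ne'
    rw [← a3, hAc]; ring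
  have b2 : C * sin h.om - S * cos h.om = - sin δ := by
    apply mul_left_cancel₀ hA.ne'
    rw [← a4, mul_neg, hAs]; ring
  obtain ⟨c1, c2⟩ := solve_rot b1 b2
  have htan : arctan (sin α / cos α) = α := by
    rw [← tan_eq_sin_div_cos]
    exact arctan_tan (by linarith [hα.1, pi_pos]) (by linarith [hα.2, pi_pos])
  have hM011 : M 0 1 ^ 2 ≤ 1 := by nlinarith [sq_nonneg (M 0 0)]
  have heM : |e * M 0 1| ≤ 1 := by
    rw [abs_le]
    have : (e * M 0 1) ^ 2 ≤ 1 := by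
      rw [mul_pow, sq e, hee, one_mul]; exact hM011
    exact abs_le.1 ((sq_le_one_iff_abs_le_one _).1 this)
  have hδ1 : δ ≤ α := by
    rw [← htan]; apply arctan_mono
    apply div_le_div_of_nonneg_right _ hc.le
    nlinarith [(abs_le.1 heM).1]
  have hδ2 : -α ≤ δ := by
    rw [← htan, ← arctan_neg]; apply arctan_mono
    rw [← neg_div]
    apply div_le_div_of_nonneg_right _ hc.le
    nlinarith [(abs_le.1 heM).2]
  have hzero : h.mm = 0 → δ = α := by
    intro hm
    have e1 := h.mm_eq
    rw [hm, mul_zero] at e1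
    have e2 : M 0 0 = 0 := by
      rcases mul_eq_zero.1 e1.symm with e | e
      · exact absurd e hs.ne'
      · exact abs_eq_zero.1 e
    have e3 := hp0 e2
    have e4 : (e * M 0 1) ^ 2 = 1 := by
      rw [mul_pow, sq e, hee, one_mul]; rw [e2] at hM01; linarith
    have e5 : e * M 0 1 = -1 := by nlinarith
    rw [hδ, e5, neg_neg, one_mul, htan]
  refine ⟨δ + h.om, ?_, ?_, ?_, ?_, ?_⟩
  · rw [← c1, hC]; field_simp [h.m2_pos.ne']
  · rw [← c2, hS]; field_simp [h.m2_pos.ne']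
  · rcases h.mm_nonneg.eq_or_lt with hm | hm
    · have := hzero hm.symm; have := h.om_zero hα hm.symm
      push_cast; linarith [hα.1]
    · have := h.lt_om hα hm
      push_cast; linarith
  · intro hm
    have := hzero hm; have := h.om_zero hα hm
    push_cast; linarith
  · intro hpos
    refine h.ang_le ht' ?_ ?_ hpos
    · rw [← c1, hC]; field_simp [h.m2_pos.ne']
    · linarith [h.om_lt, hα.2, pi_pos]

theorem ang_step (h : Extr α T γ u M) (hα : α ∈ Set.Ioo 0 (π / 4)) {k : ℕ} {t' t : ℝ}
    (ht' : t' ∈ h.Zs) (ht : t ∈ h.Zs) (hlt : t' < t)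
    (hz : ∀ s ∈ h.Zs, t' < s → ¬ s < t) (hA : h.Ang k t') : h.Ang (k + 1) t := by
  have hti : t ∈ Set.Icc 0 T := ⟨ht.1.1.le, ht.1.2.le⟩
  have hti' : t' ∈ Set.Icc 0 T := ⟨ht'.1.1.le, ht'.1.2.le⟩
  obtain ⟨e, he, hpos, hae, hq, hp0⟩ := h.sign ht'.1.1.le hlt ht.1.2.le (fun s hs h0 =>
    hz s ⟨⟨ht'.1.1.trans hs.1, hs.2.trans ht.1.2⟩, h0⟩ hs.1 hs.2)
  have he' : -e = 1 ∨ -e = -1 := by rcases he with rfl | rfl <;> norm_num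
  have hM1 := h.e_m2 he hti ht.2 (hq ht.2)
  have hM1' := h.e_m2 he' hti' ht'.2 (by have := hp0 ht'.2; linarith)
  obtain ⟨i1, -, i3⟩ := h.invs hti'.1 hlt.le hti.2 hae
  obtain ⟨A, hApos, hsA, hcA⟩ := h.polar
  obtain ⟨ψ, p1, p2, p3, p4, p5⟩ := hA
  obtain ⟨-, -, a3, a4⟩ := arc_formula (y0 := γ t 0) (y2 := γ t 2) (M1 := M t 1) (C := γ t 2 / h.m2) (S := M t 1 * γ t 0 / h.m2) h.m2_pos he
    hM1 (by field_simp [h.m2_pos.ne']) (by field_simp [h.m2_pos.ne']) (h.cr0_zero hti ht.2) hsA hcA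
  obtain ⟨a1', a2', -, -⟩ := arc_formula (y0 := γ t' 0) (y2 := γ t' 2) (M1 := M t' 1) (C := cos ψ) (S := sin ψ) h.m2_pos he'
    hM1' p1 p2 (h.cr0_zero hti' ht'.2) hsA hcA
  rw [ht.2, ht'.2, zero_mul, zero_mul] at i3
  rw [i1] at a3
  rw [i3] at a4
  set C := γ t 2 / h.m2 with hC
  set S := M t 1 * γ t 0 / h.m2 with hS
  have b1 : C * cos h.om + S * sin h.om = cos (ψ + h.om) := by
    apply mul_left_cancel₀ hApos.ne'
    rw [← a3, p1, cos_add]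
    linear_combination (-sin α) * a1' - sin ψ * hsA + cos ψ * hcA
  have b2 : C * sin h.om - S * cos h.om = - sin (ψ + h.om) := by
    apply mul_left_cancel₀ hApos.ne'
    rw [← a4, p2, sin_add]
    linear_combination (-sin α) * a2' - cos ψ * hsA - sin ψ * hcA
  obtain ⟨c1, c2⟩ := solve_rot b1 b2
  have d1 : γ t 2 = h.m2 * cos (ψ + h.om + h.om) := by
    rw [← c1, hC]; field_simp [h.m2_pos.ne']
  refine ⟨ψ + h.om + h.om, d1, ?_, ?_, ?_, ?_⟩
  · rw [← c2, hS]; field_simp [h.m2_pos.ne']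
  · push_cast; linarith
  · intro hm
    have := p4 hm; have := h.om_zero hα hm
    push_cast; linarith
  · intro hpos
    refine h.ang_le hti d1 ?_ hpos
    have := p5 hpos
    linarith [h.om_lt, pi_pos]

theorem ang (h : Extr α T γ u M) (hα : α ∈ Set.Ioo 0 (π / 4)) (hne : h.Zs.Nonempty) :
    ∃ t ∈ h.Zs, (∀ s ∈ h.Zs, s ≤ t) ∧ h.Ang h.Zs.ncard t := by
  obtain ⟨t, h1, h2, h3⟩ := chain_last h.Zs_finite hne
  exact ⟨t, h1, h2, chain_ind h.Zs_finite h.Ang (fun t ht hz => h.ang_base hα ht hz)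
    (fun k t' t _ ht' ht hlt hz hA => h.ang_step hα ht' ht hlt hz hA) _ t h1 h3⟩

/-- Part (a) count given nonnegativity. -/
theorem count (h : Extr α T γ u M) (hα : α ∈ Set.Ioo 0 (π / 4))
    (hpos : ∀ s ∈ Set.Icc 0 T, 0 ≤ γ s 2) : 2 * α * ((h.Zs.ncard : ℝ) - 1) < π / 2 := by
  rcases h.Zs.eq_empty_or_nonempty with he | hne
  · rw [he, Set.ncard_empty]; push_cast; linarith [hα.1, pi_pos]
  · obtain ⟨t, ht, -, ψ, -, -, p3, -, p5⟩ := h.ang hα hne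
    have h1 := p5 hpos
    have hn : (1 : ℝ) ≤ h.Zs.ncard := by
      exact_mod_cast (Set.ncard_pos h.Zs_finite).2 hne
    nlinarith [h.le_om hα]

end Extr


theorem ae_contra2 {u v : ℝ → ℝ} {p q p' q' e c : ℝ} (hpq : max p p' < min q q')
    (h1 : ∀ᵐ t, t ∈ Set.Ioo p q → u t = e) (h2 : ∀ᵐ t, t ∈ Set.Ioo p' q' → v t = c)
    (huv : ∀ t ∈ Set.Ioo (max p p') (min q q'), u t = v t) : e = c := by
  refine Extr.ae_contra (u := u) (P := Set.Ioo (max p p') (min q q')) hpq ?_ ?_ le_rfl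
  · filter_upwards [h1] with s hs hs'
    exact hs ⟨(le_max_left _ _).trans_lt hs'.1, hs'.2.trans_le (min_le_left _ _)⟩
  · rw [ae_restrict_iff' measurableSet_Ioo]
    filter_upwards [h2] with s hs hs'
    rw [huv s hs']
    exact hs ⟨(le_max_right _ _).trans_lt hs'.1, hs'.2.trans_le (min_le_right _ _)⟩

namespace Extr

variable {α T : ℝ} {γ M γ' M' : ℝ → Fin 3 → ℝ} {u u' : ℝ → ℝ}

theorem side (h : Extr α T γ u M) {t : ℝ} (ht : t ∈ Set.Ioo 0 T) :
    ∃ p q e e' : ℝ, (e = 1 ∨ e = -1) ∧ (e' = 1 ∨ e' = -1) ∧ p < t ∧ t < q ∧ 0 ≤ p ∧ q ≤ T ∧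
      (∀ᵐ s, s ∈ Set.Ioo p t → u s = e) ∧ (∀ᵐ s, s ∈ Set.Ioo t q → u s = e') ∧
      (M t 0 = 0 ↔ e' = -e) := by
  obtain ⟨p, hp1, hp2, hp⟩ := h.gap_left ht.1
  obtain ⟨q, hq1, hq2, hq⟩ := h.gap_right ht.2
  obtain ⟨e, he, -, h1, h2, -⟩ := h.sign hp2 hp1 ht.2.le (fun s hs => hp s hs (hs.2.le.trans ht.2.le))
  obtain ⟨e', he', -, h1', -, h2'⟩ := h.sign ht.1.le hq1 hq2 (fun s hs => hq s hs (ht.1.le.trans hs.1.le))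
  refine ⟨p, q, e, e', he, he', hp1, hq1, hp2, hq2, h1, h1', ?_, ?_⟩
  · intro h0
    have a1 := h2 h0
    have a2 := h2' h0
    rcases he with rfl | rfl <;> rcases he' with rfl | rfl <;> norm_num <;> linarith
  · intro hee
    by_contra hn
    obtain ⟨f, hf, -, hae, -⟩ := h.sign hp2 (hp1.trans hq1) hq2 (fun s hs hs0 => by
      rcases lt_trichotomy s t with hst | rfl | hst
      · exact hp s ⟨hs.1, hst⟩ (hs.2.le.trans hq2) hs0
      · exact hn hs0
      · exact hq s ⟨hst, hs.2⟩ (hp2.trans hs.1.le) hs0)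
    have b1 : e = f := ae_contra2 (by simp [hp1, hp1.trans hq1, hq1]) h1 hae (fun _ _ => rfl)
    have b2 : e' = f := ae_contra2 (by simp [hp1, hp1.trans hq1, hq1]) h1' hae (fun _ _ => rfl)
    rcases he with rfl | rfl <;> linarith

/-- no arc from the pole reaches `±e₁`. -/
theorem not_e1 (h : Extr α T γ u M) {t : ℝ} (ht : t ∈ Set.Ioo 0 T) (h0 : M t 0 = 0)
    (hz : ∀ s ∈ Set.Ioo 0 t, M s 0 ≠ 0) : γ t 2 ≠ 0 := by
  intro hγ
  have ht' : t ∈ Set.Icc 0 T := ⟨ht.1.le, ht.2.le⟩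
  obtain ⟨e, he, hpos, hae, hq, hp0⟩ := h.sign le_rfl ht.1 ht.2.le hz
  obtain ⟨i1, -, -⟩ := h.invs le_rfl ht'.1 ht'.2 hae
  have g0 : γ 0 0 = 0 := by simp [h.γ0]
  have g2 : γ 0 2 = 1 := by simp [h.γ0]
  rw [g0, g2, hγ] at i1
  have h1 := h.γ1 t ht'
  unfold dt at h1
  have h2 : |γ t 0| ≤ 1 := by
    rw [← sq_le_one_iff_abs_le_one]; nlinarith [sq_nonneg (γ t 1), sq_nonneg (γ t 2)]
  have h3 := abs_le.1 h2
  have := h.hs; have := h.hsc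
  rcases he with rfl | rfl <;> nlinarith

theorem both_zero (h : Extr α T γ u M) (h' : Extr α T γ' u' M') {t1 : ℝ} (ht1 : t1 ∈ Set.Ioo 0 T)
    (hγ : ∀ t ∈ Set.Icc 0 t1, γ t = γ' t) (hu : ∀ t ∈ Set.Ioo 0 t1, u t = u' t)
    (hz : γ t1 2 = 0) (h0 : M t1 0 = 0) : M' t1 0 = 0 := by
  have hZ : (h.Zs ∩ Set.Iio t1).Nonempty := by
    by_contra hne
    refine h.not_e1 ht1 h0 (fun s hs hs0 => hne ⟨s, ⟨⟨hs.1, hs.2.trans ht1.2⟩, hs0⟩, hs.2⟩) hz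
  obtain ⟨τ, hτ, hmin⟩ := (h.Zs_finite.subset (Set.inter_subset_left (t := Set.Iio t1))).exists_minimal hZ
  have hτ1 : τ < t1 := hτ.2
  have hτ0 : 0 < τ := hτ.1.1.1
  have hτi : τ ∈ Set.Icc 0 T := ⟨hτ.1.1.1.le, hτ.1.1.2.le⟩
  have hg2 : γ τ 2 ≠ 0 := h.not_e1 hτ.1.1 hτ.1.2 (fun s hs hs0 => by
    have := hmin (y := s) ⟨⟨⟨hs.1, hs.2.trans hτ.1.1.2⟩, hs0⟩, hs.2.trans hτ1⟩ hs.2.le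
    exact absurd hs.2 (not_lt.2 this))
  -- `τ` is also a zero of `M'`
  have hM'τ : M' τ 0 = 0 := by
    obtain ⟨p, q, e, f, he, hf, hp, hq, hp0, hqT, a1, a2, a3⟩ := h.side hτ.1.1
    obtain ⟨p', q', e', f', he', hf', hp', hq', hp0', hqT', a1', a2', a3'⟩ := h'.side hτ.1.1
    have b1 : e = e' := ae_contra2 (by simp [hp, hp']) a1 a1' (fun s hs => by
      have h1 := (le_max_left _ _).trans_lt hs.1
      have h2 := hs.2.trans_le (min_le_left _ _)
      exact hu s ⟨by linarith, by linarith⟩)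
    have b2 : f = f' := by
      have a2t : ∀ᵐ s, s ∈ Set.Ioo τ (min q t1) → u s = f := by
        filter_upwards [a2] with s hs hs'
        exact hs ⟨hs'.1, hs'.2.trans_le (min_le_left _ _)⟩
      refine ae_contra2 (by simp [hq, hq', hτ1]) a2t a2' (fun s hs => ?_)
      have h1 := (le_max_left _ _).trans_lt hs.1
      have h2 := (hs.2.trans_le (min_le_left _ _)).trans_le (min_le_right _ _)
      exact hu s ⟨by linarith, by linarith⟩
    rw [a3', ← b1, ← b2]; exact a3.1 hτ.1.2
  have hne := h.zero1_ne hτi hτ.1.2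
  set κ := M' τ 1 / M τ 1 with hκ
  have hκ1 : M' τ 1 = κ * M τ 1 := by rw [hκ]; field_simp
  have p1 := h.hp τ hτi
  have p2 := h'.hp τ hτi
  unfold dt at p1 p2
  rw [← hγ τ ⟨hτ0.le, hτ1.le⟩, hM'τ] at p2
  rw [hτ.1.2] at p1
  have hκ2 : M' τ 2 = κ * M τ 2 := by
    apply mul_right_cancel₀ hg2
    rw [hκ1] at p2
    linear_combination p2 - κ * p1
  have hR : Rot α 0 t1 u (fun t => κ • M t) :=
    (h.hM.mono le_rfl ht1.1.le ht1.2.le).smul κ ht1.1.le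
  have hR' : Rot α 0 t1 u M' :=
    (h'.hM.mono le_rfl ht1.1.le ht1.2.le).congr_u
      (Filter.Eventually.of_forall fun t ht => (hu t ht).symm)
  have key := rot_unique hR hR' (t₀ := τ) ⟨hτ0.le, hτ1.le⟩ (by
    ext i
    fin_cases i
    · simp [hτ.1.2, hM'τ]
    · simp [hκ1]
    · simp [hκ2]) t1 ⟨ht1.1.le, le_rfl⟩
  rw [← key]; simp [h0]

end Extr

/-- reflection of the third coordinate -/
def refl3 (y : Fin 3 → ℝ) : Fin 3 → ℝ := ![y 0, y 1, -(y 2)]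

theorem refl3_rot {α a b : ℝ} {u : ℝ → ℝ} {v : ℝ → Fin 3 → ℝ} (hab : a ≤ b) (h : Rot α a b u v) :
    Rot α a b (fun t => -(u t)) (fun t => refl3 (v t)) := by
  refine ⟨h.h0.congr_both hab ?_ ?_, h.h1.congr_both hab ?_ ?_, h.h2.neg.congr_both hab ?_ ?_⟩ <;>
    intro t _ <;> simp [refl3]

theorem Rot.congr {α a b : ℝ} {u u' : ℝ → ℝ} {v v' : ℝ → Fin 3 → ℝ} (hab : a ≤ b)
    (h : Rot α a b u v) (hv : ∀ t ∈ Set.Icc a b, v t = v' t) (hu : ∀ t ∈ Set.Ioo a b, u t = u' t) :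
    Rot α a b u' v' := by
  refine ⟨h.h0.congr_both hab ?_ ?_, h.h1.congr_both hab ?_ ?_, h.h2.congr_both hab ?_ ?_⟩ <;>
    intro t ht
  · rw [hv t ht]
  · rw [hv t ⟨ht.1.le, ht.2.le⟩]
  · rw [hv t ht]
  · rw [hv t ⟨ht.1.le, ht.2.le⟩, hu t ht]
  · rw [hv t ht]
  · rw [hv t ⟨ht.1.le, ht.2.le⟩, hu t ht]

theorem Rot.glue {α a b c : ℝ} {u : ℝ → ℝ} {v : ℝ → Fin 3 → ℝ} (h1 : a ≤ c) (h2 : c ≤ b)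
    (h : Rot α a c u v) (h' : Rot α c b u v) : Rot α a b u v :=
  ⟨h.h0.glue h1 h2 h'.h0, h.h1.glue h1 h2 h'.h1, h.h2.glue h1 h2 h'.h2⟩

theorem TimeOptimalS.nonneg {α T : ℝ} (hs : 0 < sin α) (hsc : sin α < cos α) (hT : 0 < T)
    {γ : ℝ → Fin 3 → ℝ} {u : ℝ → ℝ} (h : TimeOptimalS α 0 T γ u) (h0 : γ 0 = ![0,0,1])
    (hTz : 0 ≤ γ T 2) : ∀ s ∈ Set.Icc 0 T, 0 ≤ γ s 2 := by
  intro t0 ht0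
  by_contra hneg
  push Not at hneg
  have hcont : ContinuousOn (fun t => γ t 2) (Set.Icc 0 T) := h.1.rot.cont hT.le 2
  -- last point before `t0`
  have hcl : IsClosed (Set.Icc 0 T ∩ (fun t => γ t 2) ⁻¹' Set.Ici 0) :=
    hcont.preimage_isClosed_of_isClosed isClosed_Icc isClosed_Ici
  have hK : IsCompact (Set.Icc 0 T ∩ (fun t => γ t 2) ⁻¹' Set.Ici 0) :=
    isCompact_Icc.of_isClosed_subset hcl Set.inter_subset_left
  have g2 : γ 0 2 = 1 := by simp [h0]
  obtain ⟨t1, ⟨⟨ht1i, ht1z⟩, ht1le⟩, hmax⟩ := (hK.inter_right (isClosed_Iic (a := t0))).exists_isGreatest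
    ⟨0, ⟨⟨le_rfl, hT.le⟩, by show 0 ≤ γ 0 2; rw [g2]; norm_num⟩, ht0.1⟩
  obtain ⟨t2, ⟨⟨ht2i, ht2z⟩, ht2ge⟩, hmin⟩ := (hK.inter_right (isClosed_Ici (a := t0))).exists_isLeast
    ⟨T, ⟨⟨hT.le, le_rfl⟩, hTz⟩, ht0.2⟩
  have ht1z' : 0 ≤ γ t1 2 := ht1z
  have ht2z' : 0 ≤ γ t2 2 := ht2z
  have hlt1 : t1 < t0 := lt_of_le_of_ne ht1le (by rintro rfl; linarith)
  have hlt2 : t0 < t2 := lt_of_le_of_ne ht2ge (by rintro rfl; linarith)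
  have hin : ∀ t ∈ Set.Ioo t1 t2, γ t 2 < 0 := by
    intro t ht
    by_contra hn
    push Not at hn
    have hti : t ∈ Set.Icc 0 T := ⟨ht1i.1.trans ht.1.le, ht.2.le.trans ht2i.2⟩
    rcases le_total t t0 with hh | hh
    · exact absurd (hmax ⟨⟨hti, hn⟩, hh⟩) (not_le.2 ht.1)
    · exact absurd (hmin ⟨⟨hti, hn⟩, hh⟩) (not_le.2 ht.2)
  have z1 : γ t1 2 = 0 := by
    refine le_antisymm ?_ ht1z'
    have hc1 : ContinuousWithinAt (fun t => γ t 2) (Set.Ioo t1 t2) t1 :=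
      (hcont t1 ht1i).mono fun t ht => ⟨ht1i.1.trans ht.1.le, ht.2.le.trans ht2i.2⟩
    have : (nhdsWithin t1 (Set.Ioo t1 t2)).NeBot := left_nhdsWithin_Ioo_neBot (hlt1.trans hlt2)
    refine le_of_tendsto hc1 ?_
    filter_upwards [self_mem_nhdsWithin] with t ht using (hin t ht).le
  have z2 : γ t2 2 = 0 := by
    refine le_antisymm ?_ ht2z'
    have hc1 : ContinuousWithinAt (fun t => γ t 2) (Set.Ioo t1 t2) t2 :=
      (hcont t2 ht2i).mono fun t ht => ⟨ht1i.1.trans ht.1.le, ht.2.le.trans ht2i.2⟩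
    have : (nhdsWithin t2 (Set.Ioo t1 t2)).NeBot := right_nhdsWithin_Ioo_neBot (hlt1.trans hlt2)
    refine le_of_tendsto hc1 ?_
    filter_upwards [self_mem_nhdsWithin] with t ht using (hin t ht).le
  have ht1pos : 0 < t1 := lt_of_le_of_ne ht1i.1 (by rintro rfl; rw [g2] at z1; norm_num at z1)
  have hlt : t1 < t2 := hlt1.trans hlt2
  classical
  set γ' : ℝ → Fin 3 → ℝ := fun t => if t ∈ Set.Ioo t1 t2 then refl3 (γ t) else γ t with hγ'
  set u' : ℝ → ℝ := fun t => if t ∈ Set.Ioo t1 t2 then -(u t) else u t with hu'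
  have hr3 : ∀ y : Fin 3 → ℝ, y 2 = 0 → refl3 y = y := by
    intro y hy; ext i; fin_cases i <;> simp [refl3, hy]
  have e1 : ∀ t ∈ Set.Icc 0 t1, γ t = γ' t := by
    intro t ht; simp only [hγ']; rw [if_neg]; exact fun hh => absurd hh.1 (not_lt.2 ht.2)
  have e3 : ∀ t ∈ Set.Icc t2 T, γ t = γ' t := by
    intro t ht; simp only [hγ']; rw [if_neg]; exact fun hh => absurd hh.2 (not_lt.2 ht.1)
  have e2 : ∀ t ∈ Set.Icc t1 t2, refl3 (γ t) = γ' t := by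
    intro t ht
    rcases ht.1.eq_or_lt with rfl | ha
    · rw [← e1 t1 ⟨ht1i.1, le_rfl⟩, hr3 _ z1]
    rcases ht.2.eq_or_lt with rfl | hb
    · rw [← e3 t ⟨le_rfl, ht2i.2⟩, hr3 _ z2]
    simp only [hγ']; rw [if_pos ⟨ha, hb⟩]
  have f1 : ∀ t ∈ Set.Ioo 0 t1, u t = u' t := by
    intro t ht; simp only [hu']; rw [if_neg]; exact fun hh => absurd hh.1 (not_lt.2 ht.2.le)
  have f3 : ∀ t ∈ Set.Ioo t2 T, u t = u' t := by
    intro t ht; simp only [hu']; rw [if_neg]; exact fun hh => absurd hh.2 (not_lt.2 ht.1.le)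
  have f2 : ∀ t ∈ Set.Ioo t1 t2, -(u t) = u' t := by
    intro t ht
    simp only [hu']; rw [if_pos ht]
  have hrot : Rot α 0 T u γ := h.1.rot
  have hrot' : Rot α 0 T u' γ' := by
    refine Rot.glue ht1i.1 ht1i.2 ((hrot.mono le_rfl ht1i.1 ht1i.2).congr ht1i.1 e1 f1)
      (Rot.glue hlt.le ht2i.2 ?_ ((hrot.mono ht2i.1 ht2i.2 le_rfl).congr ht2i.2 e3 f3))
    exact (refl3_rot hlt.le (hrot.mono ht1i.1 hlt.le ht2i.2)).congr hlt.le e2 f2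
  have b0 : γ' 0 = γ 0 := (e1 0 ⟨le_rfl, ht1i.1⟩).symm
  have bT : γ' T = γ T := (e3 T ⟨ht2i.2, le_rfl⟩).symm
  have hopt : TimeOptimalS α 0 T γ' u' := by
    refine ⟨AdmissiblePairS.of_rot hT.le ?_ ?_ hrot' ?_, ?_⟩
    · exact Measurable.ite measurableSet_Ioo h.1.humeas.neg h.1.humeas
    · intro t ht
      simp only [hu']
      split_ifs
      · rw [abs_neg]; exact h.1.hubound t ht
      · exact h.1.hubound t ht
    · rw [b0, h0]; simp [dt]
    · intro a b η v hη ha hb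
      exact h.2 a b η v hη (ha.trans b0) (hb.trans bT)
  obtain ⟨M, hE⟩ := h.ext hs hsc hT h0
  obtain ⟨M', hE'⟩ := hopt.ext hs hsc hT (b0.trans h0)
  have ht1o : t1 ∈ Set.Ioo 0 T := ⟨ht1pos, hlt.trans_le ht2i.2⟩
  have z1' : γ' t1 2 = 0 := by rw [← e1 t1 ⟨ht1i.1, le_rfl⟩]; exact z1
  have hiff : M t1 0 = 0 ↔ M' t1 0 = 0 :=
    ⟨fun hh => hE.both_zero hE' ht1o e1 f1 z1 hh,
     fun hh => hE'.both_zero hE ht1o (fun t ht => (e1 t ht).symm) (fun t ht => (f1 t ht).symm) z1' hh⟩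
  obtain ⟨p, q, e, f, he, hf, hp, hq, hp0, hqT, a1, a2, a3⟩ := hE.side ht1o
  obtain ⟨p', q', e', f', he', hf', hp', hq', hp0', hqT', a1', a2', a3'⟩ := hE'.side ht1o
  have b1 : e = e' := ae_contra2 (by simp [hp, hp']) a1 a1' (fun s hs => by
    have h1 := (le_max_left _ _).trans_lt hs.1
    have h2 := hs.2.trans_le (min_le_left _ _)
    exact f1 s ⟨by linarith, by linarith⟩)
  have b2 : -f = f' := by
    have a2t : ∀ᵐ s, s ∈ Set.Ioo t1 (min q t2) → -(u s) = -f := by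
      filter_upwards [a2] with s hs hs'
      rw [hs ⟨hs'.1, hs'.2.trans_le (min_le_left _ _)⟩]
    refine ae_contra2 (u := fun s => -(u s)) (by simp [hq, hq', hlt]) a2t a2' (fun s hs => ?_)
    have h1 := (le_max_left _ _).trans_lt hs.1
    have h2 := (hs.2.trans_le (min_le_left _ _)).trans_le (min_le_right _ _)
    exact f2 s ⟨by linarith, by linarith⟩
  rw [a3, a3', ← b1, ← b2] at hiff
  rcases he with rfl | rfl <;> rcases hf with rfl | rfl <;> norm_num at hiff

/-- Part (a), positive time. -/
theorem part_a {α T : ℝ} (hα : α ∈ Set.Ioo 0 (π / 4)) (hT : 0 < T)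
    {γ : ℝ → Fin 3 → ℝ} {u : ℝ → ℝ} (h : TimeOptimalS α 0 T γ u) (h0 : γ 0 = ![0,0,1])
    (hTz : 0 ≤ γ T 2) : {t | IsSwitching 0 T u t}.Finite ∧
      2 * α * (({t | IsSwitching 0 T u t}.ncard : ℝ) - 1) < π / 2 := by
  have hs : 0 < sin α := sin_pos_of_pos_of_lt_pi hα.1 (by linarith [hα.2, pi_pos])
  have hsc : sin α < cos α := by
    rw [← cos_pi_div_two_sub]
    exact cos_lt_cos_of_nonneg_of_le_pi (by linarith [hα.1]) (by linarith [hα.1, pi_pos]) (by linarith [hα.2])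
  obtain ⟨M, hE⟩ := h.ext hs hsc hT h0
  rw [hE.switching_eq]
  exact ⟨hE.Zs_finite, hE.count hα (h.nonneg hs hsc hT h0 hTz)⟩


abbrev V4 := Fin 4 → ℝ

theorem lip_compact (v0 : V4) : IsCompact {f : C(ℝ, V4) | LipschitzWith 1 f ∧ f 0 = v0} := by
  refine ArzelaAscoli.isCompact_of_equicontinuous _ ?_ ?_
  · have himg : ContinuousMap.toFun '' {f : C(ℝ, V4) | LipschitzWith 1 f ∧ f 0 = v0} =
        {g : ℝ → V4 | (∀ s t, dist (g s) (g t) ≤ dist s t) ∧ g 0 = v0} := by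
      ext g; constructor
      · rintro ⟨f, ⟨h1, h2⟩, rfl⟩
        exact ⟨fun s t => by simpa using h1.dist_le_mul s t, h2⟩
      · rintro ⟨h1, h2⟩
        have hl : LipschitzWith 1 g := LipschitzWith.of_dist_le_mul (by simpa using h1)
        exact ⟨⟨g, hl.continuous⟩, ⟨hl, h2⟩, rfl⟩
    rw [himg]
    refine (isCompact_univ_pi (fun t : ℝ => isCompact_closedBall v0 |t|)).of_isClosed_subset ?_ ?_
    · refine IsClosed.inter ?_ ?_
      · have : {g : ℝ → V4 | ∀ s t, dist (g s) (g t) ≤ dist s t} =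
          ⋂ s, ⋂ t, {g : ℝ → V4 | dist (g s) (g t) ≤ dist s t} := by ext; simp
        change IsClosed {g : ℝ → V4 | ∀ s t, dist (g s) (g t) ≤ dist s t}
        rw [this]
        refine isClosed_iInter fun s => isClosed_iInter fun t => ?_
        exact isClosed_le (by fun_prop) continuous_const
      · exact isClosed_eq (f := fun g : ℝ → V4 => g 0) (by fun_prop) continuous_const
    · rintro g ⟨h1, h2⟩ t -
      rw [Metric.mem_closedBall, ← h2]
      simpa [Real.dist_eq] using h1 t 0
  · exact (LipschitzWith.uniformEquicontinuous _ 1 (fun f => f.2.1)).equicontinuous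

/-- vector fields after rotating the control out -/
noncomputable def gg (α : ℝ) (i : Fin 3) (v : V4) : ℝ :=
  ![-(cos α * (cos (sin α * v 0) * v 2 - sin (sin α * v 0) * v 3)),
    cos α * v 1 * cos (sin α * v 0), -(cos α * v 1 * sin (sin α * v 0))] i

theorem gg_cont (α : ℝ) (i : Fin 3) : Continuous (gg α i) := by
  fin_cases i
  · change Continuous fun v : V4 => -(cos α * (cos (sin α * v 0) * v 2 - sin (sin α * v 0) * v 3))
    fun_prop
  · change Continuous fun v : V4 => cos α * v 1 * cos (sin α * v 0)
    fun_prop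
  · change Continuous fun v : V4 => -(cos α * v 1 * sin (sin α * v 0))
    fun_prop

/-- the sphere point -/
noncomputable def pt (α : ℝ) (v : V4) : Fin 3 → ℝ :=
  ![v 1, cos (sin α * v 0) * v 2 - sin (sin α * v 0) * v 3,
    sin (sin α * v 0) * v 2 + cos (sin α * v 0) * v 3]

theorem pt_cont (α : ℝ) : Continuous (pt α) := by
  refine continuous_pi fun i => ?_
  fin_cases i <;> simp [pt] <;> fun_prop

def v40 : V4 := ![0, 0, 0, 1]

/-- set of normalized trajectories reaching `q` -/
def SS (α Tm : ℝ) (q : Fin 3 → ℝ) : Set (ℝ × C(ℝ, V4)) :=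
  {p | p.1 ∈ Set.Icc 0 Tm ∧ (LipschitzWith 1 p.2 ∧ p.2 0 = v40) ∧
    (∀ t : ℝ, 0 ≤ t → ∀ i : Fin 3, p.2 t i.succ = v40 i.succ + ∫ s in (0:ℝ)..(min t p.1), gg α i (p.2 s)) ∧
    pt α (p.2 p.1) = q}

theorem SS_compact (α Tm : ℝ) (q : Fin 3 → ℝ) : IsCompact (SS α Tm q) := by
  refine ((isCompact_Icc (a := (0:ℝ)) (b := Tm)).prod (lip_compact v40)).of_isClosed_subset ?_
    (fun p hp => ⟨hp.1, hp.2.1⟩)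
  have h1 : IsClosed {p : ℝ × C(ℝ, V4) | p.1 ∈ Set.Icc 0 Tm} := isClosed_Icc.preimage continuous_fst
  have h2 : IsClosed {p : ℝ × C(ℝ, V4) | LipschitzWith 1 p.2 ∧ p.2 0 = v40} := 
    (lip_compact v40).isClosed.preimage continuous_snd
  have h4 : IsClosed {p : ℝ × C(ℝ, V4) | pt α (p.2 p.1) = q} :=
    isClosed_eq ((pt_cont α).comp (by fun_prop)) continuous_const
  have h3 : IsClosed {p : ℝ × C(ℝ, V4) | ∀ t : ℝ, 0 ≤ t → ∀ i : Fin 3,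
      p.2 t i.succ = v40 i.succ + ∫ s in (0:ℝ)..(min t p.1), gg α i (p.2 s)} := by
    simp only [Set.ofPred_forall]
    refine isClosed_iInter fun t => isClosed_iInter fun _ => isClosed_iInter fun i => ?_
    refine isClosed_eq ?_ (continuous_const.add ?_)
    · have : Continuous fun p : ℝ × C(ℝ, V4) => p.2 t := by fun_prop
      exact (continuous_apply _).comp this
    · refine intervalIntegral.continuous_parametric_intervalIntegral_of_continuous
        (f := fun (p : ℝ × C(ℝ, V4)) s => gg α i (p.2 s)) ?_ (by fun_prop)
      refine (gg_cont α i).comp ?_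
      fun_prop
  exact h1.inter (h2.inter (h3.inter h4))

theorem cos_lip : LipschitzWith 1 cos := by
  refine lipschitzWith_of_nnnorm_deriv_le differentiable_cos fun x => ?_
  rw [← NNReal.coe_le_coe]; simpa using abs_sin_le_one x

theorem sin_lip : LipschitzWith 1 sin := by
  refine lipschitzWith_of_nnnorm_deriv_le differentiable_sin fun x => ?_
  rw [← NNReal.coe_le_coe]; simpa using abs_cos_le_one x

/-- from a normalized trajectory to an admissible pair -/
theorem SS_adm {α Tm : ℝ} {q : Fin 3 → ℝ} {T : ℝ} {f : C(ℝ, V4)} (h : (T, f) ∈ SS α Tm q) :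
    AdmissiblePairS α 0 T (fun t => pt α (f t)) (deriv fun t => f t 0) ∧ pt α (f 0) = ![0,0,1] := by
  obtain ⟨hT, ⟨hl, h0⟩, hi, -⟩ := h
  have hT0 : 0 ≤ T := hT.1
  have hp0 : pt α (f 0) = ![0,0,1] := by
    rw [h0]; ext i; fin_cases i <;> simp [pt, v40]
  have hl0 : LipschitzWith 1 (fun t => f t 0) := by
    refine LipschitzWith.of_dist_le_mul fun s t => ?_
    exact (dist_le_pi_dist _ _ 0).trans (hl.dist_le_mul s t)
  have d0 : ADer 0 T (fun t => f t 0) (deriv fun t => f t 0) := ADer.of_lip hl0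
  have d : ∀ i : Fin 3, ADer 0 T (fun t => f t i.succ) (fun t => gg α i (f t)) := by
    intro i
    refine ADer.of_integral hT0 (((gg_cont α i).comp f.continuous).intervalIntegrable _ _) ?_
    intro t ht
    have e1 := hi t ht.1 i
    have e0 := hi 0 le_rfl i
    simp only [min_eq_left ht.2] at e1
    simp only [min_eq_left hT0, intervalIntegral.integral_same, add_zero] at e0
    rw [e1, e0]
  have dθ := d0.const_mul (sin α)
  have dc := dθ.comp cos_lip (F' := fun x => -sin x) (fun x => hasDerivAt_cos x)
  have ds := dθ.comp sin_lip (F' := fun x => cos x) (fun x => hasDerivAt_sin x)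
  have d1 := d 0
  have d2 := d 1
  have d3 := d 2
  refine ⟨AdmissiblePairS.of_rot hT0 (measurable_deriv _) ?_ ⟨?_, ?_, ?_⟩ ?_, hp0⟩
  · intro t _
    have := norm_deriv_le_of_lipschitz (x₀ := t) hl0
    simpa using this
  · refine d1.congr_both hT0 ?_ ?_ <;> intro t _ <;> simp [pt, gg]
  · refine ((dc.mul d2).sub (ds.mul d3)).congr_both hT0 ?_ ?_
    · intro t _; simp [pt]
    · intro t _; simp [pt, gg]
      linear_combination cos α * f t 1 * (sin_sq_add_cos_sq (sin α * f t 0))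
  · refine ((ds.mul d2).add (dc.mul d3)).congr_both hT0 ?_ ?_
    · intro t _; simp [pt]
    · intro t _; simp [pt, gg]; ring
  · simp only [hp0]; simp [dt]


theorem ADer.lip1 {a b : ℝ} {f φ : ℝ → ℝ} (h : ADer a b f φ)
    (hφ : ∀ t ∈ Set.Icc a b, |φ t| ≤ 1) :
    ∀ s ∈ Set.Icc a b, ∀ t ∈ Set.Icc a b, dist (f s) (f t) ≤ dist s t := by
  have key : ∀ s ∈ Set.Icc a b, ∀ t ∈ Set.Icc a b, s ≤ t → dist (f s) (f t) ≤ dist s t := by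
    intro s hs t ht hst
    have h1 := ADer.eq_integral_sub hst (h.mono hs.1 hst ht.2)
    rw [dist_comm, dist_comm s t, Real.dist_eq, Real.dist_eq, h1]
    have := intervalIntegral.norm_integral_le_of_norm_le_const (a := s) (b := t) (f := φ) (C := 1) ?_
    · simpa using this
    · intro x hx
      rw [Set.uIoc_of_le hst] at hx
      exact hφ x ⟨hs.1.trans hx.1.le, hx.2.trans ht.2⟩
  intro s hs t ht
  rcases le_total s t with hst | hst
  · exact key s hs t ht hst
  · rw [dist_comm, dist_comm s t]; exact key t ht s hs hst

theorem adm_SS {α a b Tm : ℝ} {γ : ℝ → Fin 3 → ℝ} {u : ℝ → ℝ} {q : Fin 3 → ℝ}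
    (h : AdmissiblePairS α a b γ u) (h0 : γ a = ![0,0,1]) (hq : γ b = q) (hT : b - a ≤ Tm) :
    ∃ f, (b - a, f) ∈ SS α Tm q := by
  have hab := h.hab
  have hr := h.rot
  have hui : IntervalIntegrable u volume a b := by
    refine (intervalIntegrable_const (c := (1:ℝ))).mono_fun h.humeas.aestronglyMeasurable ?_
    rw [Filter.EventuallyLE, ae_restrict_iff' measurableSet_uIoc]
    refine Filter.Eventually.of_forall fun t ht => ?_
    rw [Set.uIoc_of_le hab] at ht
    simpa using h.hubound t ⟨ht.1.le, ht.2⟩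
  have dU : ADer a b (fun t => ∫ s in a..t, u s) u :=
    ADer.of_integral hab hui (fun t _ => by simp)
  set U : ℝ → ℝ := fun t => ∫ s in a..t, u s with hU
  have dθ := dU.const_mul (sin α)
  have dc := dθ.comp cos_lip (F' := fun x => -sin x) (fun x => hasDerivAt_cos x)
  have ds := dθ.comp sin_lip (F' := fun x => cos x) (fun x => hasDerivAt_sin x)
  set F : ℝ → V4 := fun t => ![U t, γ t 0, cos (sin α * U t) * γ t 1 + sin (sin α * U t) * γ t 2,
    -(sin (sin α * U t) * γ t 1) + cos (sin α * U t) * γ t 2] with hF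
  have e1 : ∀ t, cos (sin α * U t) * F t 2 - sin (sin α * U t) * F t 3 = γ t 1 := by
    intro t; simp [hF]; linear_combination γ t 1 * (sin_sq_add_cos_sq (sin α * U t))
  have e2 : ∀ t, sin (sin α * U t) * F t 2 + cos (sin α * U t) * F t 3 = γ t 2 := by
    intro t; simp [hF]; linear_combination γ t 2 * (sin_sq_add_cos_sq (sin α * U t))
  have g0 : ∀ t, gg α 0 (F t) = -(cos α * γ t 1) := by
    intro t; rw [← e1 t]; simp [gg, hF]
  have g1 : ∀ t, gg α 1 (F t) = cos α * γ t 0 * cos (sin α * U t) := by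
    intro t; simp [gg, hF]
  have g2 : ∀ t, gg α 2 (F t) = -(cos α * γ t 0 * sin (sin α * U t)) := by
    intro t; simp [gg, hF]
  have D : ∀ i : Fin 3, ADer a b (fun t => F t i.succ) (fun t => gg α i (F t)) := by
    intro i
    fin_cases i
    · refine hr.h0.congr_both hab ?_ ?_
      · intro t _; simp [hF]
      · intro t _; simp [g0]
    · refine ((dc.mul hr.h1).add (ds.mul hr.h2)).congr_both hab ?_ ?_
      · intro t _; simp [hF]
      · intro t _; simp [g1]; ring
    · refine ((ds.mul hr.h1).neg.add (dc.mul hr.h2)).congr_both hab ?_ ?_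
      · intro t _; simp [hF]
      · intro t _; simp [g2]; ring
  have hy : ∀ t ∈ Set.Icc a b, ∀ i, |γ t i| ≤ 1 := by
    intro t ht i
    have := h.hsph t ht
    rw [abs_le_one_iff_mul_self_le_one]
    fin_cases i <;> simp <;> nlinarith [sq_nonneg (γ t 0), sq_nonneg (γ t 1), sq_nonneg (γ t 2)]
  have m1 : ∀ x y : ℝ, |x| ≤ 1 → |y| ≤ 1 → |x * y| ≤ 1 := by
    intro x y hx hy
    rw [abs_mul]; exact mul_le_one₀ hx (abs_nonneg _) hy
  have B : ∀ i : Fin 3, ∀ t ∈ Set.Icc a b, |gg α i (F t)| ≤ 1 := by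
    intro i t ht
    fin_cases i
    · simp only [Fin.zero_eta]; rw [g0, abs_neg]; exact m1 _ _ (abs_cos_le_one _) (hy t ht 1)
    · simp only [Fin.mk_one]; rw [g1]
      exact m1 _ _ (m1 _ _ (abs_cos_le_one _) (hy t ht 0)) (abs_cos_le_one _)
    · simp only [Fin.reduceFinMk]; rw [g2, abs_neg]
      exact m1 _ _ (m1 _ _ (abs_cos_le_one _) (hy t ht 0)) (abs_sin_le_one _)
  have L : ∀ s ∈ Set.Icc a b, ∀ t ∈ Set.Icc a b, dist (F s) (F t) ≤ dist s t := by
    intro s hs t ht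
    rw [dist_pi_le_iff dist_nonneg]
    intro i
    refine Fin.cases ?_ (fun j => ?_) i
    · exact dU.lip1 (fun t ht => h.hubound t ht) s hs t ht
    · exact (D j).lip1 (B j) s hs t ht
  set k : ℝ → ℝ := fun t => a + max 0 (min t (b - a)) with hk
  have kI : ∀ t, k t ∈ Set.Icc a b := by
    intro t
    constructor
    · simp [hk]
    · have : max 0 (min t (b - a)) ≤ b - a := max_le (by linarith) (min_le_right _ _)
      simp only [hk]; linarith
  have kL : ∀ s t, dist (k s) (k t) ≤ dist s t := by
    intro s t
    simp only [hk, dist_add_left]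
    have l := ((LipschitzWith.id.min_const (b - a)).const_max 0).dist_le_mul s t
    simpa using l
  have fL : LipschitzWith 1 (fun t => F (k t)) := by
    refine LipschitzWith.of_dist_le_mul fun s t => ?_
    simpa using (L _ (kI s) _ (kI t)).trans (kL s t)
  have k0 : k 0 = a := by simp [hk, hab]
  have kT : k (b - a) = b := by simp [hk, hab]
  have F0 : F a = v40 := by
    ext i
    fin_cases i <;> simp [hF, hU, h0, v40]
  refine ⟨⟨fun t => F (k t), fL.continuous⟩, ⟨by simpa using hab, hT⟩, ⟨fL, ?_⟩, ?_, ?_⟩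
  · simp only [ContinuousMap.coe_mk, k0, F0]
  · intro t ht i
    simp only [ContinuousMap.coe_mk]
    have hm : max 0 (min t (b - a)) = min t (b - a) := max_eq_right (le_min ht (by linarith))
    have hm0 : 0 ≤ min t (b - a) := le_min ht (by linarith)
    have e := (D i).to_integral (k t) (kI t)
    rw [F0] at e
    rw [e]
    congr 1
    have e3 : k t = a + min t (b - a) := by simp only [hk, hm]
    rw [e3]
    have e4 := intervalIntegral.integral_comp_add_left (a := 0) (b := min t (b - a))
      (fun s => gg α i (F s)) a
    rw [add_zero] at e4
    rw [← e4]
    refine intervalIntegral.integral_congr fun s hs => ?_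
    rw [Set.uIcc_of_le hm0] at hs
    have : k s = a + s := by
      simp only [hk]
      rw [min_eq_left (hs.2.trans (min_le_right _ _)), max_eq_right hs.1]
    simp only [this]
  · simp only [ContinuousMap.coe_mk, kT]
    rw [← hq]
    ext i
    fin_cases i
    · simp [pt, hF]
    · exact e1 b
    · exact e2 b

theorem exists_optimal {α a b : ℝ} {γ : ℝ → Fin 3 → ℝ} {u : ℝ → ℝ} {q : Fin 3 → ℝ}
    (h : AdmissiblePairS α a b γ u) (h0 : γ a = ![0,0,1]) (hq : γ b = q) :
    ∃ T γ u, TimeOptimalS α 0 T γ u ∧ γ 0 = ![0,0,1] ∧ γ T = q := by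
  obtain ⟨f0, hf0⟩ := adm_SS h h0 hq le_rfl
  obtain ⟨⟨T, f⟩, hp, hmin⟩ := (SS_compact α (b - a) q).exists_isMinOn ⟨_, hf0⟩
    (continuous_fst.continuousOn)
  obtain ⟨hA, hP⟩ := SS_adm hp
  refine ⟨T, _, _, ⟨hA, ?_⟩, hP, hp.2.2.2⟩
  intro a' b' γ' u' h' h1 h2
  have hT : T ≤ b - a := hp.1.2
  simp only [sub_zero]
  by_cases hc : b' - a' ≤ b - a
  · obtain ⟨f', hf'⟩ := adm_SS h' (h1.trans hP) (h2.trans hp.2.2.2) hc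
    exact hmin hf'
  · linarith


/-- points of the meridian -/
noncomputable def PP (r : ℝ) : Fin 3 → ℝ := ![sin r, 0, cos r]

def Reach (α : ℝ) (q : Fin 3 → ℝ) : Prop :=
  ∃ b γ u, AdmissiblePairS α 0 b γ u ∧ γ 0 = ![0,0,1] ∧ γ b = q

/-- constant control arc -/
noncomputable def arcC (ρ b β d : ℝ) (t : ℝ) : Fin 3 → ℝ :=
  ![cos d * sin β + cos (ρ * (t - b)) * (sin d * cos β), sin (ρ * (t - b)) * sin d,
    cos d * cos β - cos (ρ * (t - b)) * (sin d * sin β)]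

theorem arcC_rot {α ρ b b' β d w : ℝ} (h1 : ρ * cos β = cos α) (h2 : ρ * sin β = w * sin α)
    (hb : b ≤ b') : Rot α b b' (fun _ => w) (arcC ρ b β d) := by
  have dl : ∀ t, HasDerivAt (fun t => ρ * (t - b)) ρ t := by
    intro t; simpa using ((hasDerivAt_id t).sub_const b).const_mul ρ
  have dc : ADer b b' (fun t => cos (ρ * (t - b))) (fun t => -sin (ρ * (t - b)) * ρ) := by
    refine ADer.of_integral hb (Continuous.intervalIntegrable (by fun_prop) _ _) ?_
    intro t ht
    rw [integral_eq_sub_of_hasDerivAt (fun x _ => (dl x).cos) (Continuous.intervalIntegrable (by fun_prop) _ _)]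
    ring
  have ds : ADer b b' (fun t => sin (ρ * (t - b))) (fun t => cos (ρ * (t - b)) * ρ) := by
    refine ADer.of_integral hb (Continuous.intervalIntegrable (by fun_prop) _ _) ?_
    intro t ht
    rw [integral_eq_sub_of_hasDerivAt (fun x _ => (dl x).sin) (Continuous.intervalIntegrable (by fun_prop) _ _)]
    ring
  have dk : ∀ k : ℝ, ADer b b' (fun _ => k) (fun _ => 0) := by
    intro k
    exact ADer.of_integral hb (Continuous.intervalIntegrable (by fun_prop) _ _) (by simp)
  refine ⟨((dk (cos d * sin β)).add (dc.const_mul (sin d * cos β))).congr_both hb ?_ ?_,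
    (ds.const_mul (sin d)).congr_both hb ?_ ?_,
    ((dk (cos d * cos β)).add (dc.const_mul (-(sin d * sin β)))).congr_both hb ?_ ?_⟩ <;> intro t ht
  · simp [arcC]; ring
  · simp [arcC]; rw [← h1]; ring
  · simp [arcC]; ring
  · simp [arcC]; rw [← h1, ← h2]
    linear_combination (-(cos (ρ * (t - b)) * sin d * ρ)) * (sin_sq_add_cos_sq β)
  · simp [arcC]; ring
  · simp [arcC]; rw [← h2]; ring

theorem reach_step {α r β : ℝ} (hα : α ∈ Set.Ioo 0 (π / 4)) (hβ : |β| ≤ α) (h : Reach α (PP r)) :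
    Reach α (PP (2 * β - r)) := by
  obtain ⟨b, γ, u, hA, h0, hb⟩ := h
  rw [abs_le] at hβ
  have pp := pi_pos
  have hs : 0 < sin α := sin_pos_of_pos_of_lt_pi hα.1 (by linarith [hα.2])
  have hc : 0 < cos α := cos_pos_of_mem_Ioo ⟨by linarith [hα.1], by linarith [hα.2]⟩
  have hcb : 0 < cos β := cos_pos_of_mem_Ioo ⟨by linarith [hα.2], by linarith [hα.2]⟩
  set ρ := cos α / cos β with hρ
  have hρ0 : 0 < ρ := by positivity
  set w := ρ * sin β / sin α with hw
  have h1 : ρ * cos β = cos α := by rw [hρ]; field_simp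
  have h2 : ρ * sin β = w * sin α := by rw [hw]; field_simp
  have hw1 : |w| ≤ 1 := by
    have i1 : 0 ≤ sin (α - β) := sin_nonneg_of_nonneg_of_le_pi (by linarith) (by linarith [hα.2])
    have i2 : 0 ≤ sin (α + β) := sin_nonneg_of_nonneg_of_le_pi (by linarith) (by linarith [hα.2])
    rw [sin_sub] at i1
    rw [sin_add] at i2
    have e : w = cos α * sin β / (cos β * sin α) := by rw [hw, hρ]; field_simp
    rw [e, abs_le, le_div_iff₀ (by positivity), div_le_iff₀ (by positivity)]
    constructor <;> linarith
  set b' := b + π / ρ with hb'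
  have hbb : b < b' := by rw [hb']; have : 0 < π / ρ := by positivity
                          linarith
  have hab := hA.hab
  set γ' : ℝ → Fin 3 → ℝ := fun t => if t ≤ b then γ t else arcC ρ b β (r - β) t with hγ'
  set u' : ℝ → ℝ := fun t => if t ≤ b then u t else w with hu'
  have ab : arcC ρ b β (r - β) b = PP r := by
    have e1 : sin r = sin ((r - β) + β) := by ring_nf
    have e2 : cos r = cos ((r - β) + β) := by ring_nf
    ext i
    fin_cases i <;> simp [arcC, PP]
    · rw [e1, sin_add]; ring
    · rw [e2, cos_add]
  have R1 : Rot α 0 b u' γ' := by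
    refine Rot.congr hab hA.rot ?_ ?_ <;> intro t ht
    · simp [hγ', ht.2]
    · simp [hu', ht.2.le]
  have R2 : Rot α b b' u' γ' := by
    refine Rot.congr hbb.le (arcC_rot (d := r - β) h1 h2 hbb.le) ?_ ?_ <;> intro t ht
    · by_cases hh : t ≤ b
      · have : t = b := le_antisymm hh ht.1
        subst this
        simp [hγ', ab, hb]
      · simp [hγ', hh]
    · simp [hu', not_le.2 ht.1]
  have g0 : γ' 0 = ![0,0,1] := by simp [hγ', hab, h0]
  refine ⟨b', γ', u', AdmissiblePairS.of_rot (hab.trans hbb.le) ?_ ?_ (R1.glue hab hbb.le R2) ?_, g0, ?_⟩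
  · exact Measurable.ite measurableSet_Iic hA.humeas measurable_const
  · intro t ht
    by_cases hh : t ≤ b
    · simp only [hu', hh, if_true]; exact hA.hubound t ⟨ht.1, hh⟩
    · simp only [hu', hh, if_false]; exact hw1
  · rw [g0]; simp [dt]
  · have e3 : ρ * (b' - b) = π := by rw [hb']; field_simp; ring
    have e1 : sin (2 * β - r) = sin (β - (r - β)) := by ring_nf
    have e2 : cos (2 * β - r) = cos (β - (r - β)) := by ring_nf
    simp only [hγ', not_le.2 hbb, if_false]
    ext i
    fin_cases i <;> simp [arcC, PP, e3]
    · rw [e1, sin_sub β (r - β)]; ring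
    · rw [e2, cos_sub β (r - β)]; ring

theorem reach_n {α : ℝ} (hα : α ∈ Set.Ioo 0 (π / 4)) (n : ℕ) : ∀ δ : ℝ, |δ| ≤ α → 
    Reach α (PP (2 * n * δ)) := by
  induction n with
  | zero =>
    intro δ _
    refine ⟨0, fun _ => ![0,0,1], fun _ => 0, ⟨le_rfl, measurable_const, by simp, by simp, 
      continuousOn_const, ?_⟩, rfl, ?_⟩
    · intro t ht i
      have : t = 0 := le_antisymm ht.2 ht.1
      subst this; simp
    · simp [PP]
  | succ n ih =>
    intro δ hδ
    have := reach_step hα hδ (ih (-δ) (by rwa [abs_neg]))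
    convert this using 2
    push_cast; ring

theorem opt_to {α r : ℝ} (hα : α ∈ Set.Ioo 0 (π / 4)) (n : ℕ) (hr : 0 ≤ r) (hrn : r ≤ 2 * n * α) :
    ∃ T γ u, TimeOptimalS α 0 T γ u ∧ γ 0 = ![0,0,1] ∧ γ T = PP r := by
  have : Reach α (PP r) := by
    by_cases hn : n = 0
    · subst hn
      have : r = 2 * (0:ℕ) * 0 := by simp at hrn ⊢; linarith
      rw [this]; exact reach_n hα 0 0 (by simpa using hα.1.le)
    · have hn' : (0:ℝ) < n := by positivity
      have e : r = 2 * n * (r / (2 * n)) := by field_simp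
      rw [e]
      refine reach_n hα n _ ?_
      rw [abs_of_nonneg (by positivity), div_le_iff₀ (by positivity)]; linarith
  obtain ⟨b, γ, u, hA, h0, hb⟩ := this
  exact exists_optimal hA h0 hb


theorem sph_sin {y : Fin 3 → ℝ} {e : ℝ} (hy : dt y y = 1) (he : e = 1 ∨ e = -1) :
    cos (arccos (y 2)) = y 2 ∧ |e * y 0| ≤ sin (arccos (y 2)) := by
  unfold dt at hy
  have h1 : -1 ≤ y 2 := by nlinarith [sq_nonneg (y 0), sq_nonneg (y 1)]
  have h2 : y 2 ≤ 1 := by nlinarith [sq_nonneg (y 0), sq_nonneg (y 1)]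
  refine ⟨cos_arccos h1 h2, ?_⟩
  rw [sin_arccos]
  apply Real.le_sqrt_of_sq_le
  rw [sq_abs]
  rcases he with rfl | rfl <;> nlinarith [sq_nonneg (y 1)]

theorem colat_low {α φ e : ℝ} {y : Fin 3 → ℝ} (hs : 0 < sin α) (h0 : 0 < α) (hφ : φ + α ≤ π)
    (hy : dt y y = 1) (he : e = 1 ∨ e = -1) (h : arccos (y 2) ≤ φ) :
    cos (φ + α) ≤ e * sin α * y 0 + cos α * y 2 := by
  obtain ⟨a1, a2⟩ := sph_sin hy he
  have a3 := (abs_le.1 a2).1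
  have h1 : cos (φ + α) ≤ cos (arccos (y 2) + α) :=
    cos_le_cos_of_nonneg_of_le_pi (by linarith [arccos_nonneg (y 2)]) hφ (by linarith)
  rw [cos_add (arccos _), a1] at h1
  nlinarith

theorem colat_up {α e : ℝ} {y : Fin 3 → ℝ} (hs : 0 < sin α) 
    (hy : dt y y = 1) (he : e = 1 ∨ e = -1) :
    e * sin α * y 0 + cos α * y 2 ≤ cos (arccos (y 2) - α) := by
  obtain ⟨a1, a2⟩ := sph_sin hy he
  have a3 := (abs_le.1 a2).2
  rw [cos_sub, a1]
  nlinarith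

theorem colat_step {α φ e : ℝ} {y z : Fin 3 → ℝ} (hs : 0 < sin α) (h0 : 0 < α) (hφ0 : 0 ≤ φ)
    (hφ : φ + α ≤ π) (hy : dt y y = 1) (hz : dt z z = 1) (he : e = 1 ∨ e = -1)
    (h : arccos (y 2) ≤ φ)
    (hyz : e * sin α * z 0 + cos α * z 2 = e * sin α * y 0 + cos α * y 2) :
    arccos (z 2) ≤ φ + 2 * α := by
  have h1 := colat_low hs h0 hφ hy he h
  have h2 := colat_up hs hz he
  by_contra hh
  push Not at hh
  have := cos_lt_cos_of_nonneg_of_le_pi (x := φ + α) (y := arccos (z 2) - α) (by linarith)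
    (by linarith [arccos_le_pi (z 2)]) (by linarith)
  linarith

namespace Extr

variable {α T : ℝ} {γ M : ℝ → Fin 3 → ℝ} {u : ℝ → ℝ}

theorem colat (h : Extr α T γ u M) (hα : 0 < α) : 
    ∀ n, ∀ t ∈ h.Zs, (h.Zs ∩ Set.Iic t).ncard = n → (2 * α * n ≤ π → arccos (γ t 2) ≤ 2 * α * n) := by
  refine chain_ind h.Zs_finite (fun n t => 2 * α * n ≤ π → arccos (γ t 2) ≤ 2 * α * n) ?_ ?_
  · intro t ht hz hk
    have ht' : t ∈ Set.Icc 0 T := ⟨ht.1.1.le, ht.1.2.le⟩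
    obtain ⟨e, he, hpos, hae, hq, hp0⟩ := h.sign le_rfl ht.1.1 ht.1.2.le (fun s hs h0 =>
      hz s ⟨⟨hs.1, hs.2.trans ht.1.2⟩, h0⟩ hs.2)
    obtain ⟨i1, -, -⟩ := h.invs le_rfl ht'.1 ht'.2 hae
    push_cast at hk
    have := colat_step (φ := 0) h.hs hα le_rfl (by linarith) (h.γ1 0 ⟨le_rfl, h.hT.le⟩) (h.γ1 t ht') he
      (by simp [h.γ0]) i1
    push_cast; linarith
  · intro k t' t _ ht' ht hlt hz hP hk
    have hti : t ∈ Set.Icc 0 T := ⟨ht.1.1.le, ht.1.2.le⟩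
    have hti' : t' ∈ Set.Icc 0 T := ⟨ht'.1.1.le, ht'.1.2.le⟩
    obtain ⟨e, he, hpos, hae, hq, hp0⟩ := h.sign ht'.1.1.le hlt ht.1.2.le (fun s hs h0 =>
      hz s ⟨⟨ht'.1.1.trans hs.1, hs.2.trans ht.1.2⟩, h0⟩ hs.1 hs.2)
    obtain ⟨i1, -, -⟩ := h.invs hti'.1 hlt.le hti.2 hae
    push_cast at hk
    have := colat_step (φ := 2 * α * k) h.hs hα (by positivity) (by linarith) (h.γ1 t' hti') (h.γ1 t hti) he
      (hP (by linarith)) i1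
    push_cast; linarith

theorem low_contra (h : Extr α T γ u M) (hα : α ∈ Set.Ioo 0 (π / 4)) {r : ℝ} (hq : γ T = PP r)
    (h1 : 2 * α * h.Zs.ncard < r) (h2 : r < π / 2) (h3 : 2 * α < r)
    (h4 : r ≠ 2 * α * (h.Zs.ncard + 1)) : False := by
  have a0 := hα.1
  have hpi := pi_pos
  have hTT : T ∈ Set.Icc 0 T := ⟨h.hT.le, le_rfl⟩
  have q0 : γ T 0 = sin r := by simp [hq, PP]
  have q1 : γ T 1 = 0 := by simp [hq, PP]
  have q2 : γ T 2 = cos r := by simp [hq, PP]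
  have hn0 : (0:ℝ) ≤ 2 * α * h.Zs.ncard := by positivity
  rcases h.Zs.eq_empty_or_nonempty with hE | hne
  · obtain ⟨e, he, hpos, hae, -, -⟩ := h.sign le_rfl h.hT le_rfl (fun s hs h0 => by
      have : s ∈ h.Zs := ⟨hs, h0⟩
      rw [hE] at this; exact this)
    obtain ⟨i1, -, -⟩ := h.invs le_rfl h.hT.le le_rfl hae
    have hb := colat_step (φ := 0) h.hs a0 le_rfl (by linarith [hα.2]) (h.γ1 0 ⟨le_rfl, h.hT.le⟩)
      (h.γ1 T hTT) he (by simp [h.γ0]) i1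
    rw [q2, arccos_cos (by linarith) (by linarith)] at hb
    linarith
  · obtain ⟨t, ht, hmax, hcard⟩ := chain_last h.Zs_finite hne
    have hti : t ∈ Set.Icc 0 T := ⟨ht.1.1.le, ht.1.2.le⟩
    have hc := h.colat a0 _ t ht hcard (by linarith)
    obtain ⟨e, he, hpos, hae, -, hp0⟩ := h.sign hti.1 ht.1.2 le_rfl (fun s hs h0 => by
      have := hmax s ⟨⟨ht.1.1.trans hs.1, hs.2⟩, h0⟩
      exact absurd hs.1 (not_lt.2 this))
    obtain ⟨i1, i2, -⟩ := h.invs hti.1 ht.1.2.le le_rfl hae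
    have hl := colat_low h.hs a0 (by linarith [hα.2]) (h.γ1 t hti) he hc
    rw [← i1, q0, q2] at hl
    rcases he with rfl | rfl
    · have hM0 : 0 ≤ M T 0 := by
        have hcl : T ∈ closure (Set.Ioo t T) := by
          rw [closure_Ioo ht.1.2.ne]; exact ⟨ht.1.2.le, le_rfl⟩
        have hcont : ContinuousWithinAt (fun s => M s 0) (Set.Ioo t T) T :=
          ((h.cM 0) T hTT).mono (fun s hs => ⟨hti.1.trans hs.1.le, hs.2.le⟩)
        have := ContinuousWithinAt.closure_le hcl continuousWithinAt_const hcont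
          (f := fun _ => (0:ℝ)) (fun s hs => by have := hpos s hs; linarith)
        exact this
      have e1 := h.hp T hTT
      unfold dt at e1
      rw [q0, q1, q2] at e1
      rw [ht.2, h.zero2 hti ht.2] at i2
      have hsr : 0 < sin (r - α) := sin_pos_of_pos_of_lt_pi (by linarith) (by linarith)
      have hcr : 0 < cos r := cos_pos_of_mem_Ioo ⟨by linarith, h2⟩
      have e2 : -(M T 0 * sin (r - α)) = cos α * h.mm * cos r := by
        rw [sin_sub]
        linear_combination cos r * i2 - cos α * e1
      have e3 : 0 ≤ cos α * h.mm * cos r := mul_nonneg (mul_nonneg h.hc.le h.mm_nonneg) hcr.le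
      have e4 : cos α * h.mm * cos r = 0 := le_antisymm (by nlinarith) e3
      have hm : h.mm = 0 := by
        rcases mul_eq_zero.1 e4 with e | e
        · exact (mul_eq_zero.1 e).resolve_left h.hc.ne'
        · exact absurd e hcr.ne'
      obtain ⟨t2, ht2, hmax2, ψ, p1, p2, -, p4, -⟩ := h.ang hα hne
      have : t2 = t := le_antisymm (hmax t2 ht2) (hmax2 t ht)
      subst this
      have hm2 : h.m2 = 1 := by simp [m2, hm]
      have hM1 := h.e_m2 (e := -1) (Or.inr rfl) hti ht.2 (by have := hp0 ht.2; linarith)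
      rw [hm2] at hM1 p1 p2
      rw [hM1] at p2
      have e5 : cos (r - α) = cos (2 * α * h.Zs.ncard + α) := by
        rw [← p4 hm, cos_sub, cos_add]
        rw [q0, q2] at i1
        linear_combination i1 - sin α * p2 + cos α * p1
      have := injOn_cos (show r - α ∈ Set.Icc 0 π from ⟨by linarith, by linarith⟩)
        (show 2 * α * h.Zs.ncard + α ∈ Set.Icc 0 π from ⟨by linarith, by linarith [hα.2]⟩) e5
      exact h4 (by linarith)
    · have : cos (r + α) < cos (2 * α * h.Zs.ncard + α) :=
        cos_lt_cos_of_nonneg_of_le_pi (by linarith) (by linarith [hα.2]) (by linarith)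
      rw [cos_add r] at this
      linarith

end Extr


theorem NS_spec {α : ℝ} (hα : α ∈ Set.Ioo 0 (π / 4)) :
    2 * α * ((NS α : ℝ) - 1) < π / 2 ∧ π / 2 ≤ 2 * α * (NS α : ℝ) ∧ 2 ≤ NS α := by
  have a0 := hα.1
  have key : ((NS α : ℝ) - 1 < π / (4 * α)) ∧ π / (4 * α) ≤ NS α := by
    unfold NS
    set k : ℤ := 2 * ⌊π / (8 * α)⌋
    have h1 := Int.floor_le ((k : ℝ) - π / (4 * α))
    have h2 := Int.lt_floor_add_one ((k : ℝ) - π / (4 * α))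
    push_cast
    constructor <;> linarith
  have e : 2 * α * (π / (4 * α)) = π / 2 := by field_simp; ring
  have h1 : 2 * α * ((NS α : ℝ) - 1) < 2 * α * (π / (4 * α)) :=
    mul_lt_mul_of_pos_left key.1 (by linarith)
  have h2 : 2 * α * (π / (4 * α)) ≤ 2 * α * (NS α : ℝ) :=
    mul_le_mul_of_nonneg_left key.2 (by linarith)
  refine ⟨by linarith, by linarith, ?_⟩
  have h3 : (1 : ℝ) < π / (4 * α) := by rw [lt_div_iff₀ (by linarith)]; linarith [hα.2]
  have h4 : (1 : ℝ) < NS α := h3.trans_le key.2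
  have h5 : (1 : ℤ) < NS α := by exact_mod_cast h4
  omega

theorem no_switch_zero (u : ℝ → ℝ) : {t | IsSwitching 0 0 u t} = ∅ := by
  ext t
  simp only [Set.mem_setOf_eq, Set.mem_empty_iff_false, iff_false]
  rintro ⟨-, h⟩
  refine h 1 one_pos ⟨1, Or.inl rfl, ?_⟩
  have : volume.restrict (Set.Ioo (t - 1) (t + 1) ∩ Set.Icc (0:ℝ) 0) = 0 := by
    rw [Measure.restrict_eq_zero]
    refine measure_mono_null Set.inter_subset_right ?_
    simp
  rw [this]; simp

theorem count_le {α : ℝ} (hα : α ∈ Set.Ioo 0 (π / 4)) {n : ℕ}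
    (h : 2 * α * ((n : ℝ) - 1) < π / 2) : (n : ℤ) ≤ NS α := by
  obtain ⟨-, h2, -⟩ := NS_spec hα
  have h3 : (n : ℝ) - 1 < NS α := by
    by_contra hh
    push Not at hh
    have := mul_le_mul_of_nonneg_left hh (show (0:ℝ) ≤ 2 * α by linarith [hα.1])
    linarith
  have h4 : (n : ℤ) - 1 < NS α := by exact_mod_cast h3
  omega

/-- The maximum number of switchings of time optimal trajectories of `(Σ)_S` starting at
the north pole and ending in the closed upper hemisphere equals `N_S(α)`. -/
theorem max_switchings_eq_NS (α : ℝ) (hα : α ∈ Set.Ioo 0 (π / 4)) :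
    (∀ T : ℝ, ∀ γ : ℝ → Fin 3 → ℝ, ∀ u : ℝ → ℝ, TimeOptimalS α 0 T γ u →
      γ 0 = ![0, 0, 1] → 0 ≤ γ T 2 →
      {t | IsSwitching 0 T u t}.Finite ∧
      ({t | IsSwitching 0 T u t}.ncard : ℤ) ≤ NS α) ∧
    (∃ (T : ℝ) (γ : ℝ → Fin 3 → ℝ) (u : ℝ → ℝ), TimeOptimalS α 0 T γ u ∧
      γ 0 = ![0, 0, 1] ∧ 0 ≤ γ T 2 ∧
      {t | IsSwitching 0 T u t}.Finite ∧
      ({t | IsSwitching 0 T u t}.ncard : ℤ) = NS α) := by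
  have hpi := pi_pos
  have a0 := hα.1
  obtain ⟨n1, n2, n3⟩ := NS_spec hα
  have partA : ∀ T : ℝ, ∀ γ : ℝ → Fin 3 → ℝ, ∀ u : ℝ → ℝ, TimeOptimalS α 0 T γ u →
      γ 0 = ![0, 0, 1] → 0 ≤ γ T 2 →
      {t | IsSwitching 0 T u t}.Finite ∧
      ({t | IsSwitching 0 T u t}.ncard : ℤ) ≤ NS α := by
    intro T γ u h h0 hz
    rcases h.1.hab.eq_or_lt with hT | hT
    · subst hT
      rw [no_switch_zero]
      refine ⟨Set.finite_empty, ?_⟩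
      rw [Set.ncard_empty]; push_cast; omega
    · obtain ⟨b1, b2⟩ := part_a hα hT h h0 hz
      exact ⟨b1, count_le hα b2⟩
  refine ⟨partA, ?_⟩
  set r := (2 * α * ((NS α : ℝ) - 1) + π / 2) / 2 with hr
  obtain ⟨N, hN⟩ := Int.eq_ofNat_of_zero_le (show 0 ≤ NS α by omega)
  have hNr : (NS α : ℝ) = N := by rw [hN]; simp
  have n3r : (2 : ℝ) ≤ NS α := by exact_mod_cast n3
  have r1 : 2 * α * ((NS α : ℝ) - 1) < r := by rw [hr]; linarith
  have r2 : r < π / 2 := by rw [hr]; linarith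
  have r3 : 2 * α < r := by nlinarith
  obtain ⟨T, γ, u, hO, h0, hq⟩ := opt_to (r := r) hα N (by linarith) (by rw [← hNr]; linarith)
  have hz : 0 ≤ γ T 2 := by
    rw [hq]; simp only [PP]
    simpa using (cos_pos_of_mem_Ioo ⟨by linarith, r2⟩).le
  obtain ⟨fin, hle⟩ := partA T γ u hO h0 hz
  refine ⟨T, γ, u, hO, h0, hz, fin, le_antisymm hle ?_⟩
  have hT : 0 < T := by
    rcases hO.1.hab.eq_or_lt with hT | hT
    · exfalso
      rw [← hT, h0] at hq
      have := congrFun hq 0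
      simp [PP] at this
      exact (sin_pos_of_pos_of_lt_pi (by linarith) (by linarith)).ne this
    · exact hT
  have hs : 0 < sin α := sin_pos_of_pos_of_lt_pi hα.1 (by linarith [hα.2, pi_pos])
  have hsc : sin α < cos α := by
    rw [← cos_pi_div_two_sub]
    exact cos_lt_cos_of_nonneg_of_le_pi (by linarith [hα.1]) (by linarith [hα.1, pi_pos]) (by linarith [hα.2])
  obtain ⟨M, hE⟩ := hO.ext hs hsc hT h0
  rw [hE.switching_eq]
  by_contra hlt
  push Not at hlt
  have k1 : (hE.Zs.ncard : ℝ) ≤ (NS α : ℝ) - 1 := by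
    have : (hE.Zs.ncard : ℤ) ≤ NS α - 1 := by omega
    exact_mod_cast this
  refine hE.low_contra hα hq ?_ r2 r3 ?_
  · nlinarith
  · intro he
    rcases (show (hE.Zs.ncard : ℤ) + 1 ≤ NS α by omega).eq_or_lt with k2 | k2
    · have k3 : (hE.Zs.ncard : ℝ) + 1 = NS α := by exact_mod_cast k2
      rw [k3] at he; linarith
    · have k3 : (hE.Zs.ncard : ℝ) + 1 ≤ (NS α : ℝ) - 1 := by
        have : (hE.Zs.ncard : ℤ) + 1 ≤ NS α - 1 := by omega
        exact_mod_cast this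
      nlinarith
end

section
/- Let α ∈ (0, π/4), s ∈ [0, π] and t ∈ [π, 2π). Then −sin²α · cos(s − t/2) = cos²α · cos(t/2) if and only if t = π + 2·arctan( sin s / (cos s + cot²α) ). (Note that cot²α > 1 > −cos s, so the denominator cos s + cot²α is positive.) -/
open Real

/-- For `α ∈ (0,π/4)`, `s ∈ [0,π]` and `t ∈ [π,2π)`, the switching relation
`−sin²α·cos(s − t/2) = cos²α·cos(t/2)` holds iff
`t = π + 2·arctan(sin s/(cos s + cot²α))`. -/
theorem switching_relation (α s t : ℝ) (hα : α ∈ Set.Ioo 0 (π / 4))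
    (hs : s ∈ Set.Icc 0 π) (ht : t ∈ Set.Ico π (2 * π)) :
    -Real.sin α ^ 2 * Real.cos (s - t / 2) = Real.cos α ^ 2 * Real.cos (t / 2) ↔
    t = π + 2 * Real.arctan (Real.sin s /
      (Real.cos s + (Real.cos α / Real.sin α) ^ 2)) := by
  obtain ⟨hα0, hα1⟩ := hα
  obtain ⟨ht0, ht1⟩ := ht
  have hpi := Real.pi_pos
  have hsin : 0 < Real.sin α := Real.sin_pos_of_pos_of_lt_pi hα0 (by linarith)
  have hlt : Real.sin α < Real.cos α := by
    rw [← Real.cos_pi_div_two_sub]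
    exact Real.cos_lt_cos_of_nonneg_of_le_pi_div_two hα0.le (by linarith) (by linarith)
  have hcot : 1 < (Real.cos α / Real.sin α) ^ 2 := by
    have h1 : 1 < Real.cos α / Real.sin α := by rwa [one_lt_div hsin]
    nlinarith
  have hden : 0 < Real.cos s + (Real.cos α / Real.sin α) ^ 2 := by
    linarith [Real.neg_one_le_cos s]
  obtain ⟨u, rfl⟩ : ∃ u, t = π + 2 * u := ⟨(t - π) / 2, by ring⟩
  have hu0 : 0 ≤ u := by linarith
  have hu1 : u < π / 2 := by linarith
  have hcu : 0 < Real.cos u := Real.cos_pos_of_mem_Ioo ⟨by linarith, hu1⟩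
  have e : (π + 2 * u) / 2 = u + π / 2 := by ring
  have hc : (Real.cos α / Real.sin α) ^ 2 * Real.sin α ^ 2 = Real.cos α ^ 2 := by
    field_simp
  rw [e, Real.cos_sub, Real.cos_add_pi_div_two, Real.sin_add_pi_div_two, ← hc]
  have key : π + 2 * u = π + 2 * Real.arctan (Real.sin s /
      (Real.cos s + (Real.cos α / Real.sin α) ^ 2)) ↔
      Real.sin u * (Real.cos s + (Real.cos α / Real.sin α) ^ 2)
        = Real.sin s * Real.cos u := by
    rw [← div_eq_div_iff hcu.ne' hden.ne', ← Real.tan_eq_sin_div_cos]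
    constructor
    · intro h
      have h2 : u = Real.arctan (Real.sin s /
          (Real.cos s + (Real.cos α / Real.sin α) ^ 2)) := by linarith
      rw [h2, Real.tan_arctan]
    · intro h
      rw [← h, Real.arctan_tan (by linarith) hu1]
  rw [key]
  have hs2 : Real.sin α ^ 2 ≠ 0 := by positivity
  constructor
  · intro h
    apply mul_left_cancel₀ hs2
    linear_combination h
  · intro h
    linear_combination Real.sin α ^ 2 * h
end
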